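/- (Kubilyus' theorem.) There exist constants b > 0 and C > 0 such that for all u ≥ 2 and all 0 ≤ α ≤ β ≤ 2π, the number of Gaussian primes ω ∈ ℤ[i] with |ω|² ≤ u and α ≤ arg(ω) ≤ β equals (2/π)·(β − α)·∫₂^u dv/log v + E, where |E| ≤ C · u · exp(−b·√(log u)). -/

import Mathlib

/-- The argument of a complex number, normalized to lie in `[0, 2π)`. -/
noncomputable def arg2pi (z : ℂ) : ℝ :=
  if 0 ≤ z.arg then z.arg else z.arg + 2 * Real.pi

/-!
For each integer `m`, the Hecke character `z ↦ (z / |z|) ^ m` of `ℤ[i]` gives a Dirichlet series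
which, except for a simple pole at `1` when `m = 0`, extends to the left of the line `Re s = 1`: its
Riesz means are sums over lattice points in discs, and comparing these sums with integrals leaves a
remainder that is small and of polynomial size in `m`. Landau's lemma and the 3-4-1 inequality then
give a zero-free region of de la Vallée Poussin type, uniform in `m` up to `exp (√(log x))`, and
shifting the contour in the Mellin integral bounds the Riesz means of the von Mangoldt function
twisted by these characters. An inequality of Erdős–Turán type turns the twisted bounds into an
equidistribution statement for the sums over a sector; differencing removes the Riesz weight, prime
powers are negligible, and partial summation passes from `∑ log |π|²` to the number of primes.
-/

namespace Kubilyus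

/-! ### Landau's lemma on logarithmic derivatives -/

section Landau

open Complex Metric

variable {f : ℂ → ℂ} {c ρ z : ℂ} {R M B : ℝ}

lemma exists_eq_mul_exp_of_ne_zero (hR : 0 < R) (hf : DifferentiableOn ℂ f (ball c R))
    (hne : ∀ z ∈ ball c R, f z ≠ 0) :
    ∃ g : ℂ → ℂ, g c = 0 ∧
      ∀ z ∈ ball c R, HasDerivAt g (logDeriv f z) z ∧ f z = f c * exp (g z) := by
  obtain ⟨g, hgc, hg⟩ :=
    ((hf.deriv isOpen_ball).div hf hne).isExactOn_ball.with_val_at c 0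
  have hexp : DifferentiableOn ℂ (fun z => exp (g z)) (ball c R) := fun z hz =>
    (hg z hz).cexp.differentiableAt.differentiableWithinAt
  have hlog : Set.EqOn (logDeriv f) (logDeriv fun z => exp (g z)) (ball c R) := fun z hz => by
    rw [logDeriv_apply (fun z => exp (g z)), (hg z hz).cexp.deriv,
      mul_div_cancel_left₀ _ (exp_ne_zero _)]
    rfl
  obtain ⟨a, -, ha⟩ := (logDeriv_eqOn_iff hf hexp isOpen_ball (convex_ball c R).isPreconnected
    (fun _ _ => exp_ne_zero _) hne).mp hlog
  have hac : f c = a := by simpa [hgc] using ha (mem_ball_self hR)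
  exact ⟨g, hgc, fun z hz => ⟨hg z hz, by rw [ha hz, hac]; rfl⟩⟩

lemma norm_le_of_re_le (hM : 0 < M) (hf : DifferentiableOn ℂ f (ball c R)) (hc : f c = 0)
    (hre : ∀ z ∈ ball c R, (f z).re ≤ M) (hz : z ∈ ball c R) :
    ‖f z‖ ≤ 2 * M * ‖z - c‖ / (R - ‖z - c‖) := by
  have hmaps : Set.MapsTo (c + ·) (ball 0 R) (ball c R) := fun w hw => by
    simpa [mem_ball_iff_norm] using hw
  have hz' : z - c ∈ ball 0 R := by simpa using mem_ball_iff_norm.mp hz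
  simpa using borelCaratheodory_zero (f := fun w => f (c + w)) hM
    (hf.comp (by fun_prop) hmaps) (fun w hw => hre _ (hmaps hw)) (pos_of_mem_ball hz) hz'
    (by simpa using hc)

lemma norm_logDeriv_le_of_ne_zero (hM : 0 < M) (hf : DifferentiableOn ℂ f (ball c R))
    (hb : ∀ z ∈ ball c R, ‖f z‖ ≤ Real.exp M * ‖f c‖) (hne : ∀ z ∈ ball c R, f z ≠ 0)
    (hR : 0 < R) (hz : z ∈ closedBall c (R / 2)) : ‖logDeriv f z‖ ≤ 24 * M / R := by
  obtain ⟨g, hgc, hg⟩ := exists_eq_mul_exp_of_ne_zero hR hf hne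
  have hgd : DifferentiableOn ℂ g (ball c R) := fun w hw =>
    (hg w hw).1.differentiableAt.differentiableWithinAt
  have hre : ∀ w ∈ ball c R, (g w).re ≤ M := fun w hw => by
    have h := hb w hw
    rw [(hg w hw).2, norm_mul, norm_exp, mul_comm] at h
    exact Real.exp_le_exp.mp
      (le_of_mul_le_mul_right h (norm_pos_iff.mpr (hne c (mem_ball_self hR))))
  have hgM : ∀ w ∈ closedBall c (3 * R / 4), ‖g w‖ ≤ 6 * M := fun w hw => by
    rw [mem_closedBall_iff_norm] at hw
    have hw' : w ∈ ball c R := by rw [mem_ball_iff_norm]; linarith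
    refine (norm_le_of_re_le hM hgd hgc hre hw').trans ?_
    rw [div_le_iff₀ (by linarith)]
    nlinarith
  have hsub : closedBall z (R / 4) ⊆ closedBall c (3 * R / 4) :=
    closedBall_subset_closedBall' (by linarith [mem_closedBall.mp hz])
  have hsubR : closedBall c (3 * R / 4) ⊆ ball c R := closedBall_subset_ball (by linarith)
  have hcauchy := norm_deriv_le_of_forall_mem_sphere_norm_le (f := g) (c := z) (R := R / 4)
    (C := 6 * M) (by linarith)
    (hgd.mono (by rw [closure_ball _ (by linarith)]; exact hsub.trans hsubR)).diffContOnCl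
    (fun w hw => hgM w (hsub (sphere_subset_closedBall hw)))
  rw [(hg z (hsubR (closedBall_subset_closedBall (by linarith) hz))).1.deriv] at hcauchy
  exact hcauchy.trans (le_of_eq (by field_simp; norm_num))

/-- The quotient of `f` by the linear factor `(z - ρ) / (c - ρ)`, for a zero `ρ` of `f`; the factor
is normalized so that the value at `c` does not change. -/
noncomputable def divLinear (f : ℂ → ℂ) (c ρ z : ℂ) : ℂ := (c - ρ) * dslope f ρ z

lemma divLinear_mul (hρ : f ρ = 0) (hcρ : c ≠ ρ) (z : ℂ) :
    divLinear f c ρ z * ((z - ρ) / (c - ρ)) = f z := by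
  have h : (z - ρ) * dslope f ρ z = f z := by simpa [hρ] using sub_smul_dslope f ρ z
  have := sub_ne_zero.mpr hcρ
  rw [← h, divLinear]
  field_simp

lemma divLinear_self (hρ : f ρ = 0) (hcρ : c ≠ ρ) : divLinear f c ρ c = f c := by
  simpa [div_self (sub_ne_zero.mpr hcρ)] using divLinear_mul hρ hcρ c

lemma diffContOnCl_divLinear (hf : DiffContOnCl ℂ f (ball c R)) (hρ : ρ ∈ ball c R) :
    DiffContOnCl ℂ (divLinear f c ρ) (ball c R) := by
  have hR := pos_of_mem_ball hρ
  have hnhds := isOpen_ball.mem_nhds hρ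
  refine DiffContOnCl.mk_ball ?_ ?_
  · exact ((differentiableOn_dslope hnhds).mpr hf.differentiableOn).const_mul _
  · exact ((continuousOn_dslope (Filter.mem_of_superset hnhds ball_subset_closedBall)).mpr
      ⟨by simpa [closure_ball _ hR.ne'] using hf.continuousOn,
        hf.differentiableAt isOpen_ball hρ⟩).const_smul (c - ρ)

/-- On the boundary circle the removed factor has norm at least `2`. -/
lemma norm_divLinear_le (hR : 0 < R) (hf : DiffContOnCl ℂ f (ball c R))
    (hρR : ρ ∈ closedBall c (R / 3)) (hρ : f ρ = 0) (hcρ : c ≠ ρ)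
    (hb : ∀ z ∈ closedBall c R, ‖f z‖ ≤ B) :
    ∀ z ∈ closedBall c R, ‖divLinear f c ρ z‖ ≤ B / 2 := by
  intro z hz
  refine norm_le_of_forall_mem_frontier_norm_le isBounded_ball
    (diffContOnCl_divLinear hf (closedBall_subset_ball (by linarith) hρR)) (fun w hw => ?_)
    (by rwa [closure_ball _ hR.ne'])
  rw [frontier_ball _ hR.ne'] at hw
  have hw_bound := hb w (sphere_subset_closedBall hw)
  rw [mem_sphere_iff_norm] at hw
  rw [mem_closedBall_iff_norm'] at hρR
  have hfactor : 2 ≤ ‖(w - ρ) / (c - ρ)‖ := by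
    rw [norm_div, le_div_iff₀ (norm_pos_iff.mpr (sub_ne_zero.mpr hcρ))]
    have := norm_sub_norm_le (w - c) (ρ - c)
    rw [sub_sub_sub_cancel_right, norm_sub_rev ρ c] at this
    linarith
  rw [← divLinear_mul hρ hcρ w, norm_mul] at hw_bound
  nlinarith [norm_nonneg (divLinear f c ρ w)]

lemma logDeriv_eq_logDeriv_divLinear_add (hf : DiffContOnCl ℂ f (ball c R))
    (hρR : ρ ∈ ball c R) (hρ : f ρ = 0) (hc : f c ≠ 0) :
    logDeriv f c = logDeriv (divLinear f c ρ) c + 1 / (c - ρ) := by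
  have hcρ : c ≠ ρ := fun h => hc (h ▸ hρ)
  have hsub := sub_ne_zero.mpr hcρ
  have hlin : HasDerivAt (fun z => (z - ρ) / (c - ρ)) (1 / (c - ρ)) c :=
    ((hasDerivAt_id c).sub_const ρ).div_const (c - ρ)
  conv_lhs => rw [← funext (divLinear_mul hρ hcρ)]
  rw [logDeriv_mul (g := fun z => (z - ρ) / (c - ρ)) c (by rwa [divLinear_self hρ hcρ])
    (div_ne_zero hsub hsub) ((diffContOnCl_divLinear hf hρR).differentiableAt isOpen_ball
      (mem_ball_self (pos_of_mem_ball hρR))) hlin.differentiableAt,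
    logDeriv_apply (fun z => (z - ρ) / (c - ρ)), hlin.deriv, div_self hsub, div_one]

lemma re_one_div_sub_nonneg (h : ρ.re ≤ c.re) : 0 ≤ (1 / (c - ρ)).re := by
  rw [one_div, inv_re, sub_re]
  exact div_nonneg (sub_nonneg.mpr h) (normSq_nonneg _)

lemma neg_le_re_logDeriv_of_ne_zero (hR : 0 < R) (hM : 0 < M) (hf : DiffContOnCl ℂ f (ball c R))
    (hb : ∀ z ∈ closedBall c R, ‖f z‖ ≤ Real.exp M * ‖f c‖)
    (hne : ∀ z ∈ closedBall c (R / 3), f z ≠ 0) : -(72 * M / R) ≤ (logDeriv f c).re := by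
  have hsub : ball c (R / 3) ⊆ ball c R := ball_subset_ball (by linarith)
  have h := norm_logDeriv_le_of_ne_zero hM (hf.differentiableOn.mono hsub)
    (fun z hz => hb z (ball_subset_closedBall (hsub hz)))
    (fun z hz => hne z (ball_subset_closedBall hz)) (by positivity)
    (mem_closedBall_self (by positivity))
  calc -(72 * M / R) = -(24 * M / (R / 3)) := by field_simp; norm_num
    _ ≤ (logDeriv f c).re := (abs_le.mp ((abs_re_le_norm _).trans h)).1

/-- Dividing out a zero halves the maximum of `f` and only decreases the real part of `f' / f`;
as `f c ≠ 0` is preserved, this happens finitely often. -/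
theorem neg_le_re_logDeriv (hR : 0 < R) (hM : 0 < M) (hf : DiffContOnCl ℂ f (ball c R))
    (hc : f c ≠ 0) (hb : ∀ z ∈ closedBall c R, ‖f z‖ ≤ Real.exp M * ‖f c‖)
    (hre : ∀ z ∈ closedBall c (R / 3), f z = 0 → z.re < c.re) :
    -(72 * M / R) ≤ (logDeriv f c).re := by
  obtain ⟨n, hn⟩ : ∃ n : ℕ, ∀ z ∈ closedBall c R, ‖f z‖ ≤ 2 ^ n * ‖f c‖ := by
    obtain ⟨n, hn⟩ := pow_unbounded_of_one_lt (Real.exp M) one_lt_two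
    exact ⟨n, fun z hz => (hb z hz).trans (by gcongr)⟩
  have hc_pos := norm_pos_iff.mpr hc
  have hc_mem : c ∈ closedBall c R := mem_closedBall_self hR.le
  induction n generalizing f with
  | zero =>
    refine neg_le_re_logDeriv_of_ne_zero hR hM hf hb fun ρ hρR hρ => ?_
    have hcρ : c ≠ ρ := fun h => hc (h ▸ hρ)
    have := norm_divLinear_le hR hf hρR hρ hcρ hn c hc_mem
    rw [divLinear_self hρ hcρ] at this
    linarith
  | succ n ih =>
    by_cases! h : ∃ ρ ∈ closedBall c (R / 3), f ρ = 0
    swap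
    · exact neg_le_re_logDeriv_of_ne_zero hR hM hf hb h
    obtain ⟨ρ, hρR, hρ⟩ := h
    have hρR' : ρ ∈ ball c R := closedBall_subset_ball (by linarith) hρR
    have hcρ : c ≠ ρ := fun h => hc (h ▸ hρ)
    have hself := divLinear_self hρ hcρ
    have hstep := ih (diffContOnCl_divLinear hf hρR') (by rwa [hself])
      (fun z hz => by
        rw [hself]
        exact (norm_divLinear_le hR hf hρR hρ hcρ hb z hz).trans (half_le_self (by positivity)))
      (fun z hz hz0 => hre z hz (by rw [← divLinear_mul hρ hcρ z, hz0, zero_mul]))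
      (fun z hz => by
        rw [hself]
        exact (norm_divLinear_le hR hf hρR hρ hcρ hn z hz).trans (le_of_eq (by ring)))
      (by rwa [hself])
    rw [logDeriv_eq_logDeriv_divLinear_add hf hρR' hρ hc, add_re]
    linarith [re_one_div_sub_nonneg (hre ρ hρR hρ).le]

theorem re_one_div_sub_le_re_logDeriv (hR : 0 < R) (hM : 0 < M)
    (hf : DiffContOnCl ℂ f (ball c R)) (hc : f c ≠ 0)
    (hb : ∀ z ∈ closedBall c R, ‖f z‖ ≤ Real.exp M * ‖f c‖)
    (hre : ∀ z ∈ closedBall c (R / 3), f z = 0 → z.re < c.re)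
    (hρR : ρ ∈ closedBall c (R / 3)) (hρ : f ρ = 0) :
    (1 / (c - ρ)).re - 72 * M / R ≤ (logDeriv f c).re := by
  have hcρ : c ≠ ρ := fun h => hc (h ▸ hρ)
  have hρR' : ρ ∈ ball c R := closedBall_subset_ball (by linarith) hρR
  have hself := divLinear_self hρ hcρ
  have h := neg_le_re_logDeriv hR hM (diffContOnCl_divLinear hf hρR') (by rwa [hself])
    (fun z hz => by
      rw [hself]
      exact (norm_divLinear_le hR hf hρR hρ hcρ hb z hz).trans (half_le_self (by positivity)))
    (fun z hz hz0 => hre z hz (by rw [← divLinear_mul hρ hcρ z, hz0, zero_mul]))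
  rw [logDeriv_eq_logDeriv_divLinear_add hf hρR' hρ hc, add_re]
  linarith

end Landau

/-! ### Arithmetic of Gaussian integers -/

section Arithmetic

variable {z w p q d : GaussianInt} {n : ℕ}

/-- The norm `|z|²` of a Gaussian integer, as a natural number. -/
def absNorm : GaussianInt →* ℕ := (Int.natAbsHom : ℤ →* ℕ).comp Zsqrtd.normMonoidHom

lemma intCast_absNorm (z : GaussianInt) : (absNorm z : ℤ) = z.norm :=
  Int.natAbs_of_nonneg (GaussianInt.norm_nonneg z)

lemma intCast_absNorm_eq_sq_add_sq (z : GaussianInt) :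
    (absNorm z : ℤ) = z.re ^ 2 + z.im ^ 2 := by
  rw [intCast_absNorm, Zsqrtd.norm_def]
  ring

lemma absNorm_eq_sq_norm (z : GaussianInt) : (absNorm z : ℝ) = ‖(z : ℂ)‖ ^ 2 := by
  rw [Complex.sq_norm, ← GaussianInt.intCast_real_norm, ← intCast_absNorm, Int.cast_natCast]

lemma absNorm_pos (hz : z ≠ 0) : 0 < absNorm z := by
  rw [← Int.natCast_pos, intCast_absNorm]
  exact GaussianInt.norm_pos.mpr hz

lemma absNorm_eq_one_iff : absNorm z = 1 ↔ IsUnit z := Zsqrtd.norm_eq_one_iff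

lemma absNorm_eq_of_associated (h : Associated z w) : absNorm z = absNorm w :=
  associated_iff_eq.mp (h.map absNorm)

lemma two_le_absNorm_of_prime (hp : Prime p) : 2 ≤ absNorm p := by
  have hpos := absNorm_pos hp.ne_zero
  have hne : absNorm p ≠ 1 := fun h => hp.not_isUnit (absNorm_eq_one_iff.mp h)
  lia

lemma finite_setOf_absNorm_le (n : ℕ) : {z : GaussianInt | absNorm z ≤ n}.Finite := by
  refine ((Set.finite_Icc (-(n : ℤ)) n).prod (Set.finite_Icc (-(n : ℤ)) n)).image
    (fun x => (⟨x.1, x.2⟩ : GaussianInt)) |>.subset fun z (hz : absNorm z ≤ n) => ?_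
  have := intCast_absNorm_eq_sq_add_sq z
  exact ⟨(z.re, z.im), ⟨⟨by nlinarith, by nlinarith⟩, ⟨by nlinarith, by nlinarith⟩⟩, rfl⟩

open scoped Classical in
/-- The nonzero Gaussian integers of norm at most `n`. -/
noncomputable def normBall (n : ℕ) : Finset GaussianInt :=
  (finite_setOf_absNorm_le n).toFinset.erase 0

/-- The nonzero Gaussian integers of norm `n`. -/
noncomputable def normSphere (n : ℕ) : Finset GaussianInt :=
  (normBall n).filter (absNorm · = n)

lemma mem_normBall : z ∈ normBall n ↔ z ≠ 0 ∧ absNorm z ≤ n := by simp [normBall]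

lemma mem_normSphere : z ∈ normSphere n ↔ z ≠ 0 ∧ absNorm z = n := by
  rw [normSphere, Finset.mem_filter, mem_normBall, and_assoc]
  exact and_congr_right fun _ => ⟨And.right, fun h => ⟨h.le, h⟩⟩

lemma normSphere_zero : normSphere 0 = ∅ := by
  ext z
  simpa [mem_normSphere] using fun hz => (absNorm_pos hz).ne'

lemma sum_Icc_sum_normSphere {M : Type*} [AddCommMonoid M] (g : GaussianInt → M) (N : ℕ) :
    ∑ n ∈ Finset.Icc 0 N, ∑ z ∈ normSphere n, g z = ∑ z ∈ normBall N, g z := by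
  rw [← Finset.sum_fiberwise_of_maps_to (s := normBall N) (t := Finset.Icc 0 N) (g := absNorm)
    fun z hz => Finset.mem_Icc.mpr ⟨zero_le, (mem_normBall.mp hz).2⟩]
  refine Finset.sum_congr rfl fun n hn => Finset.sum_congr ?_ fun _ _ => rfl
  ext z
  rw [mem_normSphere, Finset.mem_filter, mem_normBall, and_assoc]
  exact and_congr_right fun _ =>
    ⟨fun h => ⟨h.trans_le (Finset.mem_Icc.mp hn).2, h⟩, And.right⟩

open scoped Classical in
/-- The divisors of a nonzero Gaussian integer (all of them, not only up to units). -/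
noncomputable def divisors (z : GaussianInt) : Finset GaussianInt :=
  (normBall (absNorm z)).filter (· ∣ z)

lemma mem_divisors (hz : z ≠ 0) : d ∈ divisors z ↔ d ∣ z := by
  simp only [divisors, Finset.mem_filter, mem_normBall, and_iff_right_iff_imp]
  rintro ⟨e, rfl⟩
  rw [map_mul]
  exact ⟨left_ne_zero_of_mul hz,
    Nat.le_mul_of_pos_right _ (absNorm_pos (right_ne_zero_of_mul hz))⟩

lemma sum_divisorsAntidiagonal_sum_normSphere {M : Type*} [AddCommMonoid M]
    (g : GaussianInt → GaussianInt → M) (n : ℕ) :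
    ∑ x ∈ n.divisorsAntidiagonal, ∑ y ∈ normSphere x.1 ×ˢ normSphere x.2, g y.1 (y.1 * y.2) =
      ∑ z ∈ normSphere n, ∑ d ∈ divisors z, g d z := by
  rw [Finset.sum_sigma', Finset.sum_sigma']
  refine Finset.sum_bij (fun x _ => ⟨x.2.1 * x.2.2, x.2.1⟩) ?_ ?_ ?_ fun _ _ => rfl
  · rintro ⟨⟨a, b⟩, ⟨d, e⟩⟩ h
    simp only [Finset.mem_sigma, Nat.mem_divisorsAntidiagonal, Finset.mem_product,
      mem_normSphere] at h ⊢
    obtain ⟨⟨rfl, -⟩, ⟨hd, rfl⟩, ⟨he, rfl⟩⟩ := h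
    have hde := mul_ne_zero hd he
    exact ⟨⟨hde, map_mul _ _ _⟩, (mem_divisors hde).mpr (dvd_mul_right _ _)⟩
  · rintro ⟨⟨a, b⟩, ⟨d, e⟩⟩ h ⟨⟨a', b'⟩, ⟨d', e'⟩⟩ h' heq
    simp only [Finset.mem_sigma, Nat.mem_divisorsAntidiagonal, Finset.mem_product,
      mem_normSphere] at h h'
    obtain ⟨-, ⟨hd, rfl⟩, ⟨-, rfl⟩⟩ := h
    obtain ⟨-, ⟨-, rfl⟩, ⟨-, rfl⟩⟩ := h'
    simp only [Sigma.mk.injEq, heq_eq_eq] at heq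
    obtain ⟨hmul, rfl⟩ := heq
    obtain rfl := mul_left_cancel₀ hd hmul
    rfl
  · rintro ⟨z, d⟩ h
    simp only [Finset.mem_sigma, mem_normSphere] at h
    obtain ⟨⟨hz, rfl⟩, hd⟩ := h
    rw [mem_divisors hz] at hd
    obtain ⟨e, rfl⟩ := hd
    refine ⟨⟨(absNorm d, absNorm e), (d, e)⟩, ?_, rfl⟩
    simp only [Finset.mem_sigma, Nat.mem_divisorsAntidiagonal, Finset.mem_product, mem_normSphere]
    exact ⟨⟨(map_mul _ _ _).symm, (absNorm_pos hz).ne'⟩,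
      ⟨left_ne_zero_of_mul hz, trivial⟩, right_ne_zero_of_mul hz, trivial⟩

lemma isUnit_sqrtd : IsUnit (Zsqrtd.sqrtd : GaussianInt) :=
  Zsqrtd.norm_eq_one_iff.mp (by simp [Zsqrtd.norm_def])

/-- The four associates `±z`, `±iz`; here `Zsqrtd.sqrtd` is the Gaussian integer `i`. -/
def associates (z : GaussianInt) : Finset GaussianInt :=
  {z, -z, Zsqrtd.sqrtd * z, -Zsqrtd.sqrtd * z}

lemma mem_associates : w ∈ associates z ↔ Associated z w := by
  simp only [associates, Finset.mem_insert, Finset.mem_singleton]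
  constructor
  · rintro (rfl | rfl | rfl | rfl)
    · rfl
    · exact (Associated.refl z).neg_right
    · exact (associated_unit_mul_left z _ isUnit_sqrtd).symm
    · exact (associated_unit_mul_left z _ isUnit_sqrtd.neg).symm
  · rintro ⟨u, rfl⟩
    have hsq := intCast_absNorm_eq_sq_add_sq (u : GaussianInt)
    rw [absNorm_eq_one_iff.mpr u.isUnit, Nat.cast_one] at hsq
    obtain ⟨⟨a, b⟩, hu⟩ : ∃ v : GaussianInt, v = u := ⟨_, rfl⟩
    rw [← hu] at hsq ⊢
    dsimp only at hsq
    obtain ⟨ha₁, ha₂⟩ : -1 ≤ a ∧ a ≤ 1 := ⟨by nlinarith, by nlinarith⟩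
    obtain ⟨hb₁, hb₂⟩ : -1 ≤ b ∧ b ≤ 1 := ⟨by nlinarith, by nlinarith⟩
    simp only [Zsqrtd.ext_iff, Zsqrtd.re_mul, Zsqrtd.im_mul, Zsqrtd.re_sqrtd, Zsqrtd.im_sqrtd,
      Zsqrtd.re_neg, Zsqrtd.im_neg]
    interval_cases a <;> interval_cases b <;> simp at hsq <;> simp

lemma card_associates (hz : z ≠ 0) : (associates z).card = 4 := by
  have h : z.re ≠ 0 ∨ z.im ≠ 0 := by
    contrapose! hz
    exact Zsqrtd.ext_iff.mpr hz
  rw [associates, Finset.card_insert_of_notMem, Finset.card_insert_of_notMem,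
    Finset.card_insert_of_notMem, Finset.card_singleton] <;>
  simp only [Finset.mem_insert, Finset.mem_singleton, Zsqrtd.ext_iff, Zsqrtd.re_mul,
    Zsqrtd.im_mul, Zsqrtd.re_sqrtd, Zsqrtd.im_sqrtd, Zsqrtd.re_neg, Zsqrtd.im_neg] <;> lia

end Arithmetic

/-! ### The von Mangoldt function of `ℤ[i]` -/

section VonMangoldt

lemma prime_pow_dvd_mul_and_not_dvd_iff {α : Type*} [CommMonoidWithZero α] [IsCancelMulZero α]
    {p q c : α} {v j : ℕ} (hp : Prime p) (hq : Prime q) (hpc : ¬p ∣ c) :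
    q ^ j ∣ p * (p ^ v * c) ∧ ¬q ^ j ∣ p ^ v * c ↔ Associated (p ^ (v + 1)) (q ^ j) := by
  have hp0 : ∀ k, p ^ k ≠ 0 := fun k => pow_ne_zero k hp.ne_zero
  constructor
  · rintro ⟨hdvd, hnot⟩
    by_cases hqp : q ∣ p
    · have hpq : Associated (p ^ j) (q ^ j) := (hq.associated_of_dvd hp hqp).symm.pow_pow
      rw [← hpq.dvd_iff_dvd_left] at hdvd hnot
      have hvj : v < j := by
        by_contra! hle
        exact hnot ((pow_dvd_pow p hle).mul_right c)
      have hjv : j ≤ v + 1 := by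
        by_contra! hlt
        have hdvd' := (pow_dvd_pow p hlt).trans hdvd
        rw [← mul_assoc, ← pow_succ', pow_succ p (v + 1),
          mul_dvd_mul_iff_left (hp0 _)] at hdvd'
        exact hpc hdvd'
      rwa [le_antisymm hjv hvj] at hpq ⊢
    · exact absurd (hq.pow_dvd_of_dvd_mul_left j hqp hdvd) hnot
  · intro h
    rw [← h.dvd_iff_dvd_left, ← h.dvd_iff_dvd_left, ← mul_assoc, ← pow_succ']
    refine ⟨dvd_mul_right _ _, ?_⟩
    rwa [pow_succ, mul_dvd_mul_iff_left (hp0 _)]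

variable {z d p : GaussianInt} {j : ℕ}

open scoped Classical in
/-- The von Mangoldt function of `ℤ[i]`: `log |p|²` at the associates of the powers of a prime `p`,
and `0` elsewhere. -/
noncomputable def vonMangoldt (z : GaussianInt) : ℝ :=
  if h : ∃ p : GaussianInt, ∃ j : ℕ, Prime p ∧ 0 < j ∧ Associated (p ^ j) z
  then Real.log (absNorm h.choose) else 0

lemma vonMangoldt_eq_log (hp : Prime p) (hj : 0 < j) (h : Associated (p ^ j) d) :
    vonMangoldt d = Real.log (absNorm p) := by
  have hex : ∃ p : GaussianInt, ∃ j : ℕ, Prime p ∧ 0 < j ∧ Associated (p ^ j) d :=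
    ⟨p, j, hp, hj, h⟩
  rw [vonMangoldt, dif_pos hex]
  obtain ⟨i, hq, -, hqd⟩ := hex.choose_spec
  have hpq : p ∣ hex.choose ^ i := (dvd_pow_self p hj.ne').trans (h.trans hqd.symm).dvd
  rw [absNorm_eq_of_associated (hp.associated_of_dvd hq (hp.dvd_of_dvd_pow hpq))]

lemma vonMangoldt_eq_zero_or_exists (d : GaussianInt) :
    vonMangoldt d = 0 ∨
      ∃ p : GaussianInt, ∃ j : ℕ, Prime p ∧ 0 < j ∧ Associated (p ^ j) d := by
  rw [or_iff_not_imp_right]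
  exact fun h => dif_neg h

lemma vonMangoldt_nonneg (d : GaussianInt) : 0 ≤ vonMangoldt d := by
  rw [vonMangoldt]
  split_ifs
  exacts [Real.log_natCast_nonneg _, le_rfl]

lemma vonMangoldt_le_log (d : GaussianInt) : vonMangoldt d ≤ Real.log (absNorm d) := by
  rcases vonMangoldt_eq_zero_or_exists d with h | ⟨p, j, hp, hj, h⟩
  · rw [h]
    exact Real.log_natCast_nonneg _
  · rw [vonMangoldt_eq_log hp hj h, ← absNorm_eq_of_associated h, map_pow]
    have := absNorm_pos hp.ne_zero
    exact Real.log_le_log (by positivity) (mod_cast Nat.le_self_pow hj.ne' _)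

lemma vonMangoldt_eq_of_associated (h : Associated z d) : vonMangoldt z = vonMangoldt d := by
  rcases vonMangoldt_eq_zero_or_exists z with hz | ⟨p, j, hp, hj, hpz⟩
  · rcases vonMangoldt_eq_zero_or_exists d with hd | ⟨p, j, hp, hj, hpd⟩
    · rw [hz, hd]
    · rw [vonMangoldt_eq_log hp hj hpd, vonMangoldt_eq_log hp hj (hpd.trans h.symm)]
  · rw [vonMangoldt_eq_log hp hj hpz, vonMangoldt_eq_log hp hj (hpz.trans h)]

lemma vonMangoldt_eq_zero_of_isUnit (hd : IsUnit d) : vonMangoldt d = 0 := by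
  refine (vonMangoldt_eq_zero_or_exists d).resolve_right ?_
  rintro ⟨p, j, hp, hj, h⟩
  exact hp.not_isUnit (isUnit_of_dvd_unit ((dvd_pow_self p hj.ne').trans h.dvd) hd)

/-- Passing from `z` to `p * z`, the only new prime-power divisors are the four associates of the
highest power of `p` dividing `p * z`. -/
lemma sum_vonMangoldt_divisors_prime_mul (hp : Prime p) (hz : z ≠ 0) :
    ∑ d ∈ divisors (p * z), vonMangoldt d =
      4 * Real.log (absNorm p) + ∑ d ∈ divisors z, vonMangoldt d := by
  classical
  have hpz := mul_ne_zero hp.ne_zero hz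
  have hsub : divisors z ⊆ divisors (p * z) := fun d hd =>
    (mem_divisors hpz).mpr (((mem_divisors hz).mp hd).mul_left p)
  obtain ⟨c, hzc, hpc⟩ := (FiniteMultiplicity.of_prime_left hp hz).exists_eq_pow_mul_and_not_dvd
  generalize multiplicity p z = v at hzc
  have hnew : ∀ q : GaussianInt, ∀ j : ℕ, Prime q → ∀ d, Associated (q ^ j) d →
      (d ∈ divisors (p * z) \ divisors z ↔ d ∈ associates (p ^ (v + 1))) := by
    intro q j hq d hd
    rw [Finset.mem_sdiff, mem_divisors hpz, mem_divisors hz, mem_associates,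
      ← hd.dvd_iff_dvd_left, ← hd.dvd_iff_dvd_left, hzc,
      prime_pow_dvd_mul_and_not_dvd_iff hp hq hpc]
    exact ⟨fun h => h.trans hd, fun h => h.trans hd.symm⟩
  rw [← Finset.sum_sdiff hsub]
  congr 1
  rw [← Finset.sum_subset (s₁ := associates (p ^ (v + 1)))]
  · rw [Finset.sum_congr rfl fun d hd =>
        vonMangoldt_eq_log hp v.succ_pos (mem_associates.mp hd), Finset.sum_const,
      card_associates (pow_ne_zero _ hp.ne_zero), nsmul_eq_mul, Nat.cast_ofNat]
  · exact fun d hd => (hnew p _ hp d (mem_associates.mp hd)).mpr hd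
  · intro d hd hd'
    refine (vonMangoldt_eq_zero_or_exists d).resolve_right ?_
    rintro ⟨q, j, hq, -, h⟩
    exact hd' ((hnew q j hq d h).mp hd)

theorem sum_vonMangoldt_divisors (hz : z ≠ 0) :
    ∑ d ∈ divisors z, vonMangoldt d = 4 * Real.log (absNorm z) := by
  induction z using UniqueFactorizationMonoid.induction_on_prime with
  | h₁ => exact absurd rfl hz
  | h₂ u hu =>
    rw [absNorm_eq_one_iff.mpr hu, Nat.cast_one, Real.log_one, mul_zero]
    exact Finset.sum_eq_zero fun d hd =>
      vonMangoldt_eq_zero_of_isUnit (isUnit_of_dvd_unit ((mem_divisors hz).mp hd) hu)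
  | h₃ z p hz₀ hp ih =>
    have := absNorm_pos hp.ne_zero
    have := absNorm_pos hz₀
    rw [sum_vonMangoldt_divisors_prime_mul hp hz₀, ih hz₀, map_mul, Nat.cast_mul,
      Real.log_mul (by positivity) (by positivity), mul_add]

end VonMangoldt

/-! ### Hecke characters -/

section AngularChar

variable {m : ℤ} {w z : ℂ}

/-- The character `w ↦ (w / |w|)ᵐ = exp(i m arg w)` of `ℂ ∖ {0}`; the Hecke characters of `ℚ(i)`
of trivial conductor are those with `4 ∣ m`. -/
noncomputable def angularChar (m : ℤ) (w : ℂ) : ℂ := (w / ‖w‖) ^ m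

lemma angularChar_mul (m : ℤ) (w z : ℂ) :
    angularChar m (w * z) = angularChar m w * angularChar m z := by
  simp only [angularChar, norm_mul, Complex.ofReal_mul, mul_div_mul_comm, mul_zpow]

lemma angularChar_zero (w : ℂ) : angularChar 0 w = 1 := zpow_zero _

lemma norm_div_norm_self (hw : w ≠ 0) : ‖w / ‖w‖‖ = 1 := by
  rw [norm_div, Complex.norm_real, norm_norm, div_self (norm_ne_zero_iff.mpr hw)]

lemma norm_angularChar (m : ℤ) (hw : w ≠ 0) : ‖angularChar m w‖ = 1 := by
  rw [angularChar, norm_zpow, norm_div_norm_self hw, one_zpow]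

lemma norm_angularChar_le_one (m : ℤ) (w : ℂ) : ‖angularChar m w‖ ≤ 1 := by
  rcases eq_or_ne w 0 with rfl | hw
  · rcases eq_or_ne m 0 with rfl | hm <;> simp [angularChar, zero_zpow, *]
  · exact (norm_angularChar m hw).le

lemma measurable_angularChar (m : ℤ) : Measurable (angularChar m) :=
  (by fun_prop : Measurable fun w : ℂ => w / ‖w‖).pow_const m

lemma norm_pow_sub_pow_le_of_norm_eq_one (hw : ‖w‖ = 1) (hz : ‖z‖ = 1) (n : ℕ) :
    ‖w ^ n - z ^ n‖ ≤ n * ‖w - z‖ := by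
  induction n with
  | zero => simp
  | succ n ih =>
    have hsplit : w ^ (n + 1) - z ^ (n + 1) = w ^ n * (w - z) + (w ^ n - z ^ n) * z := by ring
    rw [hsplit]
    refine (norm_add_le _ _).trans ?_
    rw [norm_mul, norm_mul, norm_pow, hw, hz, one_pow, Nat.cast_succ]
    linarith

lemma norm_zpow_sub_zpow_le_of_norm_eq_one (hw : ‖w‖ = 1) (hz : ‖z‖ = 1) (m : ℤ) :
    ‖w ^ m - z ^ m‖ ≤ |(m : ℝ)| * ‖w - z‖ := by
  obtain ⟨n, rfl | rfl⟩ := m.eq_nat_or_neg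
  · simpa using norm_pow_sub_pow_le_of_norm_eq_one hw hz n
  · have hw₀ : w ≠ 0 := norm_ne_zero_iff.mp (hw.trans_ne one_ne_zero)
    have hz₀ : z ≠ 0 := norm_ne_zero_iff.mp (hz.trans_ne one_ne_zero)
    rw [zpow_neg, zpow_neg, zpow_natCast, zpow_natCast,
      inv_sub_inv (pow_ne_zero _ hw₀) (pow_ne_zero _ hz₀), norm_div, norm_mul, norm_pow, norm_pow,
      hw, hz, norm_sub_rev]
    simpa using norm_pow_sub_pow_le_of_norm_eq_one hw hz n

lemma norm_div_norm_sub_div_norm_le (hw : w ≠ 0) (hz : z ≠ 0) :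
    ‖w / ‖w‖ - z / ‖z‖‖ ≤ 2 * ‖w - z‖ / ‖z‖ := by
  have hw' : (‖w‖ : ℂ) ≠ 0 := Complex.ofReal_ne_zero.mpr (norm_ne_zero_iff.mpr hw)
  have hz' : (‖z‖ : ℂ) ≠ 0 := Complex.ofReal_ne_zero.mpr (norm_ne_zero_iff.mpr hz)
  have hsplit : w / ‖w‖ - z / ‖z‖ = (w - z) / ‖z‖ + w / ‖w‖ * (((‖z‖ - ‖w‖ : ℝ) : ℂ) / ‖z‖) := by
    push_cast
    field_simp
    ring
  rw [hsplit]
  refine (norm_add_le _ _).trans ?_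
  rw [norm_mul, norm_div_norm_self hw, norm_div, norm_div, Complex.norm_real, Complex.norm_real,
    norm_norm, one_mul, ← add_div, two_mul, norm_sub_rev w z]
  gcongr
  exact abs_norm_sub_norm_le z w

lemma norm_angularChar_sub_le (m : ℤ) (hw : w ≠ 0) (hz : z ≠ 0) :
    ‖angularChar m w - angularChar m z‖ ≤ |(m : ℝ)| * (2 * ‖w - z‖ / ‖z‖) :=
  (norm_zpow_sub_zpow_le_of_norm_eq_one (norm_div_norm_self hw) (norm_div_norm_self hz) m).trans
    (by gcongr; exact norm_div_norm_sub_div_norm_le hw hz)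

end AngularChar

section IdealCoeff

variable {𝕜 : Type*}

/-- The sum of `w` over the ideals of norm `n`, for `w` invariant under units: each nonzero ideal
has four generators. -/
noncomputable def idealCoeff [DivisionRing 𝕜] (w : GaussianInt → 𝕜) (n : ℕ) : 𝕜 :=
  (1 / 4) * ∑ z ∈ normSphere n, w z

lemma idealCoeff_zero [DivisionRing 𝕜] (w : GaussianInt → 𝕜) : idealCoeff w 0 = 0 := by
  rw [idealCoeff, normSphere_zero, Finset.sum_empty, mul_zero]

lemma sum_idealCoeff_mul [DivisionRing 𝕜] (w : GaussianInt → 𝕜) (g : ℕ → 𝕜) (N : ℕ) :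
    ∑ n ∈ Finset.Icc 0 N, idealCoeff w n * g n =
      (1 / 4) * ∑ z ∈ normBall N, w z * g (absNorm z) := by
  rw [← sum_Icc_sum_normSphere, Finset.mul_sum]
  refine Finset.sum_congr rfl fun n _ => ?_
  rw [idealCoeff, mul_assoc, Finset.sum_mul]
  refine congrArg _ (Finset.sum_congr rfl fun z hz => ?_)
  rw [(mem_normSphere.mp hz).2]

lemma ofReal_idealCoeff (w : GaussianInt → ℝ) (n : ℕ) :
    ((idealCoeff w n : ℝ) : ℂ) = idealCoeff (fun z => (w z : ℂ)) n := by
  simp [idealCoeff]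

lemma idealCoeff_le_idealCoeff {v w : GaussianInt → ℝ} {n : ℕ}
    (h : ∀ z ∈ normSphere n, v z ≤ w z) : idealCoeff v n ≤ idealCoeff w n := by
  unfold idealCoeff
  gcongr with z hz
  exact h z hz

lemma idealCoeff_nonneg {w : GaussianInt → ℝ} (h : ∀ z, 0 ≤ w z) (n : ℕ) :
    0 ≤ idealCoeff w n :=
  mul_nonneg (by norm_num) (Finset.sum_nonneg fun z _ => h z)

lemma norm_idealCoeff_le (w : GaussianInt → ℂ) (n : ℕ) :
    ‖idealCoeff w n‖ ≤ idealCoeff (fun z => ‖w z‖) n := by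
  rw [idealCoeff, norm_mul, show ‖(1 / 4 : ℂ)‖ = 1 / 4 by norm_num, idealCoeff]
  gcongr
  exact norm_sum_le _ _

/-- The Dirichlet coefficients of the Hecke `L`-function of `angularChar m`. -/
noncomputable def heckeCoeff (m : ℤ) : ℕ → ℂ := idealCoeff fun z => angularChar m z

/-- The Dirichlet coefficients of `-L'/L` for the Hecke `L`-function of `angularChar m`. -/
noncomputable def vonMangoldtCoeff (m : ℤ) : ℕ → ℂ :=
  idealCoeff fun z => vonMangoldt z * angularChar m z

lemma toComplex_ne_zero {z : GaussianInt} (hz : z ≠ 0) : (z : ℂ) ≠ 0 :=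
  GaussianInt.toComplex_eq_zero.not.mpr hz

lemma norm_heckeCoeff_le (m : ℤ) (n : ℕ) : ‖heckeCoeff m n‖ ≤ idealCoeff (fun _ => 1) n :=
  (norm_idealCoeff_le _ n).trans <| idealCoeff_le_idealCoeff fun _ _ => norm_angularChar_le_one m _

lemma norm_vonMangoldtCoeff_le (m : ℤ) (n : ℕ) :
    ‖vonMangoldtCoeff m n‖ ≤ idealCoeff vonMangoldt n := by
  refine (norm_idealCoeff_le _ n).trans <| idealCoeff_le_idealCoeff fun z hz => ?_
  rw [norm_mul, norm_angularChar m (toComplex_ne_zero (mem_normSphere.mp hz).1), Complex.norm_real,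
    Real.norm_of_nonneg (vonMangoldt_nonneg z), mul_one]

lemma heckeCoeff_zero_right (m : ℤ) : heckeCoeff m 0 = 0 := idealCoeff_zero _

lemma vonMangoldtCoeff_zero_right (m : ℤ) : vonMangoldtCoeff m 0 = 0 := idealCoeff_zero _

lemma heckeCoeff_zero_left (n : ℕ) : heckeCoeff 0 n = (idealCoeff (fun _ => 1) n : ℝ) := by
  simp only [ofReal_idealCoeff, heckeCoeff, angularChar_zero, Complex.ofReal_one]

lemma vonMangoldtCoeff_zero_left (n : ℕ) :
    vonMangoldtCoeff 0 n = (idealCoeff vonMangoldt n : ℝ) := by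
  simp only [ofReal_idealCoeff, vonMangoldtCoeff, angularChar_zero, mul_one]

lemma sum_divisorsAntidiagonal_vonMangoldtCoeff_mul_heckeCoeff (m : ℤ) (n : ℕ) :
    ∑ p ∈ n.divisorsAntidiagonal, vonMangoldtCoeff m p.1 * heckeCoeff m p.2 =
      Real.log n * heckeCoeff m n := by
  have hleft : ∀ p ∈ n.divisorsAntidiagonal, vonMangoldtCoeff m p.1 * heckeCoeff m p.2 =
      (1 / 16) * ∑ x ∈ normSphere p.1 ×ˢ normSphere p.2,
        (vonMangoldt x.1 : ℂ) * angularChar m (x.1 * x.2 : GaussianInt) := by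
    intro p _
    simp only [vonMangoldtCoeff, heckeCoeff, idealCoeff, Finset.sum_product, map_mul,
      angularChar_mul, ← mul_assoc]
    rw [mul_right_comm (1 / 4 : ℂ), mul_assoc _ (∑ _ ∈ _, _), Finset.sum_mul_sum]
    norm_num
  rw [Finset.sum_congr rfl hleft, ← Finset.mul_sum, sum_divisorsAntidiagonal_sum_normSphere
    fun d z => (vonMangoldt d : ℂ) * angularChar m z, heckeCoeff, idealCoeff, Finset.mul_sum,
    Finset.mul_sum, Finset.mul_sum]
  refine Finset.sum_congr rfl fun z hz => ?_
  obtain ⟨hz₀, rfl⟩ := mem_normSphere.mp hz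
  rw [← Finset.sum_mul, ← Complex.ofReal_sum, sum_vonMangoldt_divisors hz₀]
  push_cast
  ring

end IdealCoeff

/-! ### Lattice point sums -/

section LatticeSums

variable {z : GaussianInt} {w : ℂ} {y : ℝ} {m : ℤ}

open MeasureTheory

lemma sq_max_natAbs_le_absNorm (z : GaussianInt) :
    max z.re.natAbs z.im.natAbs ^ 2 ≤ absNorm z := by
  have hsq := intCast_absNorm_eq_sq_add_sq z
  rcases max_cases z.re.natAbs z.im.natAbs with h | h
  · rw [h.1]
    zify
    nlinarith [sq_abs z.re, sq_nonneg z.im]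
  · rw [h.1]
    zify
    nlinarith [sq_abs z.im, sq_nonneg z.re]

lemma max_natAbs_pos (hz : z ≠ 0) : 0 < max z.re.natAbs z.im.natAbs := by
  contrapose! hz
  exact Zsqrtd.ext_iff.mpr ⟨by simpa using by lia, by simpa using by lia⟩

lemma card_filter_max_natAbs_eq_le (s : Finset GaussianInt) {j : ℕ} (hj : j ≠ 0) :
    (s.filter fun z => max z.re.natAbs z.im.natAbs = j).card ≤ 8 * j := by
  rw [← Int.card_box hj]
  refine Finset.card_le_card_of_injOn (fun z => (z.re, z.im)) (fun z hz => ?_) fun z _ w _ h => ?_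
  · simp [Int.mem_box, (Finset.mem_filter.mp hz).2]
  · simpa only [Zsqrtd.ext_iff, Prod.mk.injEq] using h

lemma sum_normBall_one_div_norm_le (N : ℕ) :
    ∑ z ∈ normBall N, 1 / ‖(z : ℂ)‖ ≤ 8 * √N := by
  have hmaps : ∀ z ∈ normBall N, max z.re.natAbs z.im.natAbs ∈ Finset.Icc 1 N.sqrt := fun z hz =>
    Finset.mem_Icc.mpr ⟨max_natAbs_pos (mem_normBall.mp hz).1,
      Nat.le_sqrt'.mpr ((sq_max_natAbs_le_absNorm z).trans (mem_normBall.mp hz).2)⟩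
  have hterm : ∀ z : GaussianInt, z ≠ 0 →
      1 / ‖(z : ℂ)‖ ≤ 1 / (max z.re.natAbs z.im.natAbs : ℕ) := by
    intro z hz
    refine one_div_le_one_div_of_le (Nat.cast_pos.mpr (max_natAbs_pos hz)) ?_
    refine le_of_sq_le_sq ?_ (norm_nonneg _)
    rw [← absNorm_eq_sq_norm]
    exact_mod_cast sq_max_natAbs_le_absNorm z
  rw [← Finset.sum_fiberwise_of_maps_to hmaps]
  calc _ ≤ ∑ _ ∈ Finset.Icc 1 N.sqrt, (8 : ℝ) := by
        refine Finset.sum_le_sum fun j hj => ?_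
        have hj₁ := (Finset.mem_Icc.mp hj).1
        have hj₀ : (0 : ℝ) < j := Nat.cast_pos.mpr hj₁
        refine (Finset.sum_le_card_nsmul _ _ (1 / (j : ℝ)) fun z hz => ?_).trans ?_
        · rw [← (Finset.mem_filter.mp hz).2]
          exact hterm z (mem_normBall.mp (Finset.mem_filter.mp hz).1).1
        · rw [nsmul_eq_mul, mul_one_div, div_le_iff₀ hj₀]
          exact_mod_cast card_filter_max_natAbs_eq_le _ (Nat.one_le_iff_ne_zero.mp hj₁)
    _ = 8 * N.sqrt := by simp [mul_comm]
    _ ≤ 8 * √N := by gcongr; exact Real.nat_sqrt_le_real_sqrt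

lemma card_normBall_le (N : ℕ) : ((normBall N).card : ℝ) ≤ 8 * N := by
  rcases Nat.eq_zero_or_pos N with rfl | hN
  · have hempty : normBall 0 = ∅ := by
      ext z
      simpa [mem_normBall] using fun hz => (absNorm_pos hz).ne'
    simp [hempty]
  have hN' : (0 : ℝ) < √N := Real.sqrt_pos.mpr (Nat.cast_pos.mpr hN)
  have hcard : (normBall N).card * (1 / √N) ≤ 8 * √N := by
    refine le_trans ?_ (sum_normBall_one_div_norm_le N)
    rw [← nsmul_eq_mul]
    refine Finset.card_nsmul_le_sum _ _ _ fun z hz => ?_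
    obtain ⟨hz₀, hzN⟩ := mem_normBall.mp hz
    refine one_div_le_one_div_of_le (norm_pos_iff.mpr (toComplex_ne_zero hz₀)) ?_
    refine Real.le_sqrt_of_sq_le ?_
    rw [← absNorm_eq_sq_norm]
    exact_mod_cast hzN
  rwa [mul_one_div, div_le_iff₀ hN', mul_assoc, Real.mul_self_sqrt N.cast_nonneg] at hcard

/-- The unit square with lower left corner `z`. -/
def cell (z : GaussianInt) : Set ℂ := {w | ⌊w.re⌋ = z.re ∧ ⌊w.im⌋ = z.im}

lemma cell_eq_reProdIm (z : GaussianInt) :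
    cell z = Set.Ico (z.re : ℝ) (z.re + 1) ×ℂ Set.Ico (z.im : ℝ) (z.im + 1) := by
  ext w
  simp [cell, Complex.mem_reProdIm, Int.floor_eq_iff]

lemma measurableSet_cell (z : GaussianInt) : MeasurableSet (cell z) := by
  rw [cell_eq_reProdIm]
  exact (Complex.measurable_re measurableSet_Ico).inter (Complex.measurable_im measurableSet_Ico)

lemma volume_cell (z : GaussianInt) : volume (cell z) = 1 := by
  have h := Complex.volume_preserving_equiv_real_prod.measure_preimage
    (s := Set.Ico (z.re : ℝ) (z.re + 1) ×ˢ Set.Ico (z.im : ℝ) (z.im + 1))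
    (measurableSet_Ico.prod measurableSet_Ico).nullMeasurableSet
  rw [Measure.volume_eq_prod, Measure.prod_prod] at h
  rw [cell_eq_reProdIm]
  exact h.trans (by simp)

lemma norm_sub_le_of_mem_cell (hw : w ∈ cell z) : ‖w - z‖ ≤ 3 / 2 := by
  rw [cell_eq_reProdIm, Complex.mem_reProdIm] at hw
  obtain ⟨⟨hre, hre'⟩, him, him'⟩ := hw
  refine le_of_sq_le_sq ?_ (by norm_num)
  rw [Complex.sq_norm, Complex.normSq_apply, Complex.sub_re, Complex.sub_im,
    ← GaussianInt.intCast_re, ← GaussianInt.intCast_im]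
  nlinarith

lemma iUnion_cell : ⋃ z, cell z = Set.univ :=
  Set.eq_univ_of_forall fun w => Set.mem_iUnion.mpr ⟨⟨⌊w.re⌋, ⌊w.im⌋⟩, rfl, rfl⟩

lemma pairwise_disjoint_cell : Pairwise (Function.onFun Disjoint cell) := fun _ _ hne =>
  Set.disjoint_left.mpr fun _ h h' =>
    hne (Zsqrtd.ext_iff.mpr ⟨h.1.symm.trans h'.1, h.2.symm.trans h'.2⟩)

lemma countable_gaussianInt : Countable GaussianInt :=
  Function.Injective.countable (f := fun z : GaussianInt => (z.re, z.im))
    fun z w h => by simpa only [Zsqrtd.ext_iff, Prod.mk.injEq] using h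

lemma norm_sum_sub_integral_le {E : Type*} [NormedAddCommGroup E] [NormedSpace ℝ E]
    [CompleteSpace E] {f : ℂ → E} (hf : Integrable f) (T : Finset GaussianInt)
    (C : GaussianInt → ℝ) (hzero : ∀ z ∉ T, ∀ w ∈ cell z, f w = 0)
    (hC : ∀ z ∈ T, ∀ w ∈ cell z, ‖f w - f z‖ ≤ C z) :
    ‖∑ z ∈ T, f z - ∫ w, f w‖ ≤ ∑ z ∈ T, C z := by
  have := countable_gaussianInt
  have hcells : ∫ w, f w = ∑ z ∈ T, ∫ w in cell z, f w := by
    have h := hasSum_integral_iUnion (μ := volume) measurableSet_cell pairwise_disjoint_cell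
      hf.integrableOn
    rw [iUnion_cell, setIntegral_univ] at h
    exact h.unique (hasSum_sum_of_ne_finset_zero fun z hz =>
      setIntegral_eq_zero_of_forall_eq_zero (hzero z hz))
  rw [hcells, ← Finset.sum_sub_distrib]
  refine norm_sum_le_of_le _ fun z hz => ?_
  have hvol : volume.real (cell z) = 1 := by rw [Measure.real, volume_cell, ENNReal.toReal_one]
  have hlt : volume (cell z) < ⊤ := by simp [volume_cell]
  have hconst : IntegrableOn (fun _ => f z) (cell z) := integrableOn_const hlt.ne
  have hdiff : f z - ∫ w in cell z, f w = ∫ w in cell z, (f z - f w) := by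
    rw [integral_sub hconst hf.integrableOn, setIntegral_const, hvol,
      one_smul]
  rw [hdiff]
  simpa only [hvol, mul_one] using norm_setIntegral_le_of_norm_le_const hlt
    fun w hw => (norm_sub_rev (f z) (f w)).trans_le (hC z hz w hw)

/-- The smoothed indicator of the disc `|w|² y ≤ 1`, twisted by `angularChar m`. -/
noncomputable def rieszWeight (m : ℤ) (y : ℝ) (w : ℂ) : ℂ :=
  angularChar m w * (max 0 (1 - ‖w‖ ^ 2 * y) : ℝ)

lemma max_zero_one_sub_le_one {t : ℝ} (ht : 0 ≤ t) : max 0 (1 - t) ≤ 1 :=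
  max_le zero_le_one (sub_le_self 1 ht)

lemma norm_rieszWeight_le_one (m : ℤ) (hy : 0 ≤ y) (w : ℂ) : ‖rieszWeight m y w‖ ≤ 1 := by
  rw [rieszWeight, norm_mul, Complex.norm_real, Real.norm_of_nonneg (le_max_left _ _)]
  exact mul_le_one₀ (norm_angularChar_le_one m w) (le_max_left _ _)
    (max_zero_one_sub_le_one (by positivity))

lemma rieszWeight_eq_zero (m : ℤ) (h : 1 ≤ ‖w‖ ^ 2 * y) : rieszWeight m y w = 0 := by
  rw [rieszWeight, max_eq_left (by linarith), Complex.ofReal_zero, mul_zero]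

lemma hasCompactSupport_max_one_sub_norm_sq_mul (hy : 0 < y) :
    HasCompactSupport fun w : ℂ => max 0 (1 - ‖w‖ ^ 2 * y) := by
  refine HasCompactSupport.intro (isCompact_closedBall (0 : ℂ) (1 / √y)) fun w hw => ?_
  rw [mem_closedBall_zero_iff, not_le, div_lt_iff₀ (Real.sqrt_pos.mpr hy)] at hw
  have hsq : 1 < ‖w‖ ^ 2 * y := by
    rw [← Real.sq_sqrt hy.le, ← mul_pow]
    exact one_lt_pow₀ hw two_ne_zero
  exact max_eq_left (by linarith)

lemma integrable_rieszWeight (m : ℤ) (hy : 0 < y) : Integrable (rieszWeight m y) := by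
  have hmax : Integrable fun w : ℂ => max 0 (1 - ‖w‖ ^ 2 * y) :=
    (by fun_prop : Continuous _).integrable_of_hasCompactSupport
      (hasCompactSupport_max_one_sub_norm_sq_mul hy)
  exact hmax.ofReal.bdd_mul (measurable_angularChar m).aestronglyMeasurable
    (.of_forall (norm_angularChar_le_one m))

/-- Rotation by `exp(iπ/m)` changes the sign of `angularChar m`. -/
lemma integral_rieszWeight_eq_zero (hm : m ≠ 0) (y : ℝ) : ∫ w, rieszWeight m y w = 0 := by
  set a : Circle := Circle.exp (Real.pi / m)
  have ha : (a : ℂ) ^ m = -1 := by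
    rw [Circle.coe_exp, ← Complex.exp_int_mul, ← Complex.exp_pi_mul_I]
    congr 1
    push_cast
    field_simp
  have hrot : ∀ w, rieszWeight m y (rotation a w) = -rieszWeight m y w := fun w => by
    simp only [rieszWeight, angularChar, rotation_apply, norm_mul, Circle.norm_coe, one_mul,
      mul_div_assoc, mul_zpow, ha]
    ring
  have hinv : ∫ w, rieszWeight m y (rotation a w) = ∫ w, rieszWeight m y w :=
    (rotation a).measurePreserving.integral_comp (rotation a).toHomeomorph.measurableEmbedding _
  simp only [hrot, integral_neg] at hinv
  exact neg_eq_self.mp hinv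

/-- A quarter of the volume of the cone over the unit disc, which is the residue of the Dedekind
zeta function of `ℚ(i)` up to the factor `1/2` coming from the Riesz kernel. -/
noncomputable def coneConst : ℝ := (1 / 4) * ∫ w : ℂ, max 0 (1 - ‖w‖ ^ 2)

lemma coneConst_pos : 0 < coneConst := by
  refine mul_pos (by norm_num) ?_
  refine (by fun_prop : Continuous _).integral_pos_of_hasCompactSupport_nonneg_nonzero ?_
    (fun w : ℂ => le_max_left 0 (1 - ‖w‖ ^ 2)) (x := 0) (by simp)
  simpa using hasCompactSupport_max_one_sub_norm_sq_mul one_pos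

lemma integral_rieszWeight_zero (hy : 0 < y) :
    ∫ w, rieszWeight 0 y w = (4 * coneConst / y : ℝ) := by
  have hscale := Measure.integral_comp_smul (volume : Measure ℂ)
    (fun w : ℂ => max 0 (1 - ‖w‖ ^ 2)) √y
  simp only [norm_smul, mul_pow, Real.norm_eq_abs, sq_abs, Real.sq_sqrt hy.le, mul_comm y,
    Complex.finrank_real_complex, abs_of_pos (inv_pos.mpr hy), smul_eq_mul] at hscale
  simp only [rieszWeight, angularChar_zero, one_mul]
  rw [integral_complex_ofReal, hscale, coneConst]
  congr 1
  ring

lemma norm_rieszWeight_sub_le (m : ℤ) (hy : 0 < y) (hz : z ≠ 0) (hw : w ∈ cell z) :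
    ‖rieszWeight m y w - rieszWeight m y z‖ ≤
      3 * |(m : ℝ)| * (1 / ‖(z : ℂ)‖) + 6 * y * ‖(z : ℂ)‖ := by
  have hdist := norm_sub_le_of_mem_cell hw
  have hz₁ : 1 ≤ ‖(z : ℂ)‖ := by
    rw [← one_le_sq_iff₀ (norm_nonneg _), ← absNorm_eq_sq_norm]
    exact_mod_cast absNorm_pos hz
  have hw₀ : w ≠ 0 := by
    rintro rfl
    exact hz (Zsqrtd.ext_iff.mpr ⟨by simpa using hw.1.symm, by simpa using hw.2.symm⟩)
  have hchar : ‖angularChar m w - angularChar m z‖ ≤ 3 * |(m : ℝ)| * (1 / ‖(z : ℂ)‖) := by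
    refine (norm_angularChar_sub_le m hw₀ (toComplex_ne_zero hz)).trans ?_
    calc |(m : ℝ)| * (2 * ‖w - z‖ / ‖(z : ℂ)‖) ≤ |(m : ℝ)| * (2 * (3 / 2) / ‖(z : ℂ)‖) := by gcongr
      _ = _ := by ring
  have hcone : |max 0 (1 - ‖w‖ ^ 2 * y) - max 0 (1 - ‖(z : ℂ)‖ ^ 2 * y)| ≤ 6 * y * ‖(z : ℂ)‖ := by
    rw [max_comm 0, max_comm 0]
    refine (abs_max_sub_max_le_abs _ _ 0).trans ?_
    have hnorm := abs_le.mp ((abs_norm_sub_norm_le w z).trans hdist)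
    have hsq : |‖(z : ℂ)‖ ^ 2 - ‖w‖ ^ 2| ≤ 6 * ‖(z : ℂ)‖ := by
      rw [abs_le]
      constructor <;> nlinarith [norm_nonneg w]
    rw [sub_sub_sub_cancel_left, ← sub_mul, abs_mul, abs_of_pos hy]
    linarith [mul_le_mul_of_nonneg_right hsq hy.le]
  have hsplit : rieszWeight m y w - rieszWeight m y z =
      (angularChar m w - angularChar m z) * (max 0 (1 - ‖w‖ ^ 2 * y) : ℝ) + angularChar m z *
        ((max 0 (1 - ‖w‖ ^ 2 * y) - max 0 (1 - ‖(z : ℂ)‖ ^ 2 * y) : ℝ) : ℂ) := by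
    simp only [rieszWeight]
    push_cast
    ring
  rw [hsplit]
  refine (norm_add_le _ _).trans (add_le_add ?_ ?_)
  · rw [norm_mul, Complex.norm_real, Real.norm_of_nonneg (le_max_left _ _)]
    exact (mul_le_of_le_one_right (norm_nonneg _)
      (max_zero_one_sub_le_one (by positivity))).trans hchar
  · rwa [norm_mul, norm_angularChar m (toComplex_ne_zero hz), one_mul, Complex.norm_real]

lemma rieszWeight_eq_zero_of_mem_cell (m : ℤ) (hy : 0 < y) (hy₁ : y ≤ 1)
    (hz : 9 / y ≤ absNorm z) (hw : w ∈ cell z) : rieszWeight m y w = 0 := by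
  refine rieszWeight_eq_zero m ?_
  have hnorm := (abs_le.mp ((abs_norm_sub_norm_le w z).trans (norm_sub_le_of_mem_cell hw))).1
  rw [div_le_iff₀ hy, absNorm_eq_sq_norm] at hz
  have hz₃ : 3 ≤ ‖(z : ℂ)‖ := by nlinarith [norm_nonneg (z : ℂ)]
  have hw₂ : ‖(z : ℂ)‖ / 2 ≤ ‖w‖ := by linarith
  nlinarith [mul_le_mul_of_nonneg_right (pow_le_pow_left₀ (by positivity) hw₂ 2) hy.le]

lemma natCeil_nine_div_le (hy : 0 < y) (hy₁ : y ≤ 1) : (⌈9 / y⌉₊ : ℝ) ≤ 10 / y := by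
  have h := Nat.ceil_lt_add_one (show 0 ≤ 9 / y by positivity)
  have h₁ : 1 ≤ 1 / y := (one_le_div hy).mpr hy₁
  rw [show 10 / y = 9 / y + 1 / y by ring]
  linarith

lemma norm_rieszWeight_sub_le_of_mem_normBall (m : ℤ) (hy : 0 < y) (hy₁ : y ≤ 1)
    (hz : z ∈ normBall ⌈9 / y⌉₊) (hw : w ∈ cell z) :
    ‖rieszWeight m y w - rieszWeight m y z‖ ≤ (3 * |(m : ℝ)| + 60) * (1 / ‖(z : ℂ)‖) := by
  obtain ⟨hz₀, hzN⟩ := mem_normBall.mp hz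
  have hz₁ : 0 < ‖(z : ℂ)‖ := norm_pos_iff.mpr (toComplex_ne_zero hz₀)
  have hsq : ‖(z : ℂ)‖ ^ 2 * y ≤ 10 := by
    rw [← absNorm_eq_sq_norm, ← le_div_iff₀ hy]
    exact le_trans (by exact_mod_cast hzN) (natCeil_nine_div_le hy hy₁)
  refine (norm_rieszWeight_sub_le m hy hz₀ hw).trans ?_
  rw [add_mul]
  refine add_le_add_right ?_ _
  rw [mul_one_div, le_div_iff₀ hz₁]
  linarith

lemma sum_normBall_natCeil_one_div_norm_le (hy : 0 < y) (hy₁ : y ≤ 1) :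
    ∑ z ∈ normBall ⌈9 / y⌉₊, 1 / ‖(z : ℂ)‖ ≤ 32 / √y := by
  have hsqrt : √(⌈9 / y⌉₊ : ℝ) ≤ 4 / √y := by
    rw [← Real.sqrt_sq (zero_le_four : (0 : ℝ) ≤ 4), ← Real.sqrt_div (by positivity)]
    exact Real.sqrt_le_sqrt ((natCeil_nine_div_le hy hy₁).trans (by gcongr; norm_num))
  calc _ ≤ 8 * √(⌈9 / y⌉₊ : ℝ) := sum_normBall_one_div_norm_le _
    _ ≤ 8 * (4 / √y) := by gcongr
    _ = _ := by ring

theorem norm_sum_rieszWeight_sub_integral_le (m : ℤ) (hy : 0 < y) (hy₁ : y ≤ 1) :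
    ‖∑ z ∈ normBall ⌈9 / y⌉₊, rieszWeight m y z - ∫ w, rieszWeight m y w‖ ≤
      3000 * (1 + |(m : ℝ)|) / √y := by
  set N := ⌈9 / y⌉₊
  have hzero : (0 : GaussianInt) ∉ normBall N := by simp [mem_normBall]
  let C : GaussianInt → ℝ := fun z =>
    if z = 0 then 2 else (3 * |(m : ℝ)| + 60) * (1 / ‖(z : ℂ)‖)
  have hsum := norm_sum_sub_integral_le (integrable_rieszWeight m hy)
    (insert 0 (normBall N)) C (fun z hz w hw => ?_) fun z hz w hw => ?_
  · rw [Finset.sum_insert hzero, Finset.sum_insert hzero, add_sub_assoc] at hsum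
    have hC : ∑ z ∈ normBall N, C z ≤ (3 * |(m : ℝ)| + 60) * (32 / √y) := by
      rw [Finset.sum_congr rfl fun z hz => if_neg (mem_normBall.mp hz).1, ← Finset.mul_sum]
      gcongr
      exact sum_normBall_natCeil_one_div_norm_le hy hy₁
    have hw₀ := norm_rieszWeight_le_one m hy.le ((0 : GaussianInt) : ℂ)
    have hy' : 1 ≤ 1 / √y := (one_le_div (Real.sqrt_pos.mpr hy)).mpr (Real.sqrt_le_one.mpr hy₁)
    have htri := norm_sub_le (rieszWeight m y ((0 : GaussianInt) : ℂ) +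
      (∑ z ∈ normBall N, rieszWeight m y z - ∫ w, rieszWeight m y w))
      (rieszWeight m y ((0 : GaussianInt) : ℂ))
    rw [add_sub_cancel_left] at htri
    have hC₀ : C 0 = 2 := if_pos rfl
    have hm := mul_nonneg (abs_nonneg (m : ℝ)) (zero_le_one.trans hy')
    calc _ ≤ 3 + (3 * |(m : ℝ)| + 60) * (32 / √y) := by linarith
      _ = 3 + 96 * (|(m : ℝ)| * (1 / √y)) + 1920 * (1 / √y) := by ring
      _ ≤ 3000 * (|(m : ℝ)| * (1 / √y)) + 3000 * (1 / √y) := by linarith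
      _ = _ := by ring
  · rw [Finset.mem_insert, mem_normBall] at hz
    push Not at hz
    refine rieszWeight_eq_zero_of_mem_cell m hy hy₁ ?_ hw
    exact (Nat.le_ceil _).trans (by exact_mod_cast (hz.2 hz.1).le)
  · rcases Finset.mem_insert.mp hz with rfl | hz
    · simp only [C, if_pos]
      linarith [norm_sub_le (rieszWeight m y w) (rieszWeight m y ((0 : GaussianInt) : ℂ)),
        norm_rieszWeight_le_one m hy.le w, norm_rieszWeight_le_one m hy.le ((0 : GaussianInt) : ℂ)]
    · simp only [C, if_neg (mem_normBall.mp hz).1]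
      exact norm_rieszWeight_sub_le_of_mem_normBall m hy hy₁ hz hw

end LatticeSums

/-! ### Riesz means and Mellin transforms -/

section RieszMean

open Filter MeasureTheory Set Topology

variable {a : ℕ → ℂ} {s : ℂ} {y : ℝ} {N : ℕ}

lemma hasMellin_congr {E : Type*} [NormedAddCommGroup E] [NormedSpace ℂ E] {f g : ℝ → E} {m : E}
    (hfg : EqOn f g (Ioi 0)) (hf : HasMellin f s m) : HasMellin g s m := by
  have hint : EqOn (fun t : ℝ => (t : ℂ) ^ (s - 1) • f t) (fun t : ℝ => (t : ℂ) ^ (s - 1) • g t)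
      (Ioi 0) := fun t ht => by simp only [hfg ht]
  exact ⟨(integrableOn_congr_fun hint measurableSet_Ioi).mp hf.1,
    (setIntegral_congr_fun measurableSet_Ioi hint).symm.trans hf.2⟩

lemma hasMellin_max_zero_one_sub (hs : 0 < s.re) :
    HasMellin (fun t : ℝ => ((max 0 (1 - t) : ℝ) : ℂ)) s (1 / (s * (s + 1))) := by
  have hs₀ : s ≠ 0 := by rintro rfl; simp at hs
  have hs₁ : s + 1 ≠ 0 := fun h => by have := congrArg Complex.re h; simp at this; linarith
  have hone := hasMellin_one_Ioc hs
  have hid := hasMellin_cpow_Ioc 1 (s := s) (by simp; linarith)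
  have hsub := hasMellin_sub hone.1 hid.1
  rw [hone.2, hid.2] at hsub
  have hval : 1 / s - 1 / (s + 1) = 1 / (s * (s + 1)) := by
    field_simp
    ring
  refine hval ▸ hasMellin_congr (fun t ht => ?_) hsub
  by_cases ht₁ : t ≤ 1
  · have hmem : t ∈ Ioc (0 : ℝ) 1 := ⟨ht, ht₁⟩
    simp [hmem, max_eq_right (sub_nonneg.mpr ht₁)]
  · have hmem : t ∉ Ioc (0 : ℝ) 1 := fun h => ht₁ h.2
    simp [hmem, max_eq_left (sub_nonpos.mpr (not_le.mp ht₁).le)]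

lemma integrable_tsum_of_summable_integral_norm {α ι : Type*} [MeasurableSpace α] {μ : Measure α}
    [Countable ι] {F : ι → α → ℂ} (hF : ∀ i, Integrable (F i) μ)
    (hsum : Summable fun i => ∫ x, ‖F i x‖ ∂μ) : Integrable (fun x => ∑' i, F i x) μ := by
  refine ⟨(AEMeasurable.tsum fun i => (hF i).aemeasurable).aestronglyMeasurable, ?_⟩
  calc ∫⁻ x, ‖∑' i, F i x‖ₑ ∂μ ≤ ∫⁻ x, ∑' i, ‖F i x‖ₑ ∂μ :=
        lintegral_mono fun x => enorm_tsum_le_tsum_enorm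
    _ = ∑' i, ENNReal.ofReal (∫ x, ‖F i x‖ ∂μ) := by
        rw [lintegral_tsum fun i => (hF i).aestronglyMeasurable.enorm]
        exact tsum_congr fun i => (ofReal_integral_norm_eq_lintegral_enorm (hF i)).symm
    _ < ⊤ := hsum.tsum_ofReal_lt_top

lemma integral_norm_cpow_smul_comp_mul {E : Type*} [NormedAddCommGroup E] [NormedSpace ℂ E]
    (k : ℝ → E) (s : ℂ) {c : ℝ} (hc : 0 < c) :
    ∫ t in Ioi (0 : ℝ), ‖(t : ℂ) ^ (s - 1) • k (c * t)‖
      = c ^ (-s.re) * ∫ t in Ioi (0 : ℝ), ‖(t : ℂ) ^ (s - 1) • k t‖ := by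
  have hscale := integral_comp_mul_left_Ioi (fun t : ℝ => ‖(t : ℂ) ^ (s - 1) • k t‖) 0 hc
  have heq : EqOn (fun t : ℝ => ‖(t : ℂ) ^ (s - 1) • k (c * t)‖)
      (fun t => c ^ (1 - s.re) * ‖((c * t : ℝ) : ℂ) ^ (s - 1) • k (c * t)‖) (Ioi 0) := by
    intro t ht
    have hpow : c ^ (1 - s.re) * c ^ (s.re - 1) = 1 := by
      rw [← Real.rpow_add hc]
      simp
    simp only [norm_smul, Complex.norm_cpow_eq_rpow_re_of_pos ht,
      Complex.norm_cpow_eq_rpow_re_of_pos (mul_pos hc ht), Complex.sub_re, Complex.one_re,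
      Real.mul_rpow hc.le (le_of_lt ht)]
    linear_combination (-t ^ (s.re - 1) * ‖k (c * t)‖) * hpow
  rw [setIntegral_congr_fun measurableSet_Ioi heq, integral_const_mul, hscale, mul_zero,
    smul_eq_mul, ← mul_assoc, ← Real.rpow_neg_one, ← Real.rpow_add hc]
  congr 2
  ring

theorem hasMellin_tsum_mul_comp_mul {k : ℝ → ℂ} {M : ℂ} (ha : a 0 = 0) (has : LSeriesSummable a s)
    (hk : HasMellin k s M) :
    HasMellin (fun t => ∑' n, a n * k (n * t)) s (LSeries a s * M) := by
  set F : ℕ → ℝ → ℂ := fun n t => a n * ((t : ℂ) ^ (s - 1) • k (n * t)) with hF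
  have F_zero : F 0 = fun _ => 0 := by ext t; simp [hF, ha]
  have integrable_F (n : ℕ) : IntegrableOn (F n) (Ioi 0) := by
    rcases eq_or_ne n 0 with rfl | hn
    · simp [F_zero]
    · exact ((MellinConvergent.comp_mul_left (a := n) (by positivity)).mpr hk.1).const_mul (a n)
  have integral_F (n : ℕ) : ∫ t in Ioi 0, F n t = LSeries.term a s n * M := by
    rcases eq_or_ne n 0 with rfl | hn
    · simp [F_zero]
    · have hscale := mellin_comp_mul_left k s (a := n) (by positivity)
      rw [hk.2, mellin, Complex.ofReal_natCast] at hscale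
      rw [integral_const_mul, hscale, LSeries.term_of_ne_zero hn, smul_eq_mul, Complex.cpow_neg]
      ring
  have integral_norm_F (n : ℕ) : ∫ t in Ioi 0, ‖F n t‖
      = ‖LSeries.term a s n‖ * ∫ t in Ioi (0 : ℝ), ‖(t : ℂ) ^ (s - 1) • k t‖ := by
    rcases eq_or_ne n 0 with rfl | hn
    · simp [F_zero]
    · simp only [hF, norm_mul]
      rw [integral_const_mul, integral_norm_cpow_smul_comp_mul k s (by positivity),
        LSeries.norm_term_eq, if_neg hn, Real.rpow_neg n.cast_nonneg]
      ring
  have hsum : Summable fun n => ∫ t in Ioi 0, ‖F n t‖ := by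
    simpa only [integral_norm_F] using has.norm.mul_right _
  have tsum_F (t : ℝ) : ∑' n, F n t = (t : ℂ) ^ (s - 1) • ∑' n, a n * k (n * t) := by
    simp only [hF, smul_eq_mul, ← tsum_mul_left]
    exact tsum_congr fun n => by ring
  have hint := integrable_tsum_of_summable_integral_norm integrable_F hsum
  have hval := integral_tsum_of_summable_integral_norm integrable_F hsum
  simp_rw [tsum_F, integral_F, tsum_mul_right] at hint hval
  exact ⟨hint, hval.symm⟩

/-- The Riesz mean `∑ a n (1 - n y)₊` of a sequence, scaled so that the terms `n < 1 / y`
contribute. -/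
noncomputable def rieszMean (a : ℕ → ℂ) (y : ℝ) : ℂ := ∑' n, a n * (max 0 (1 - n * y) : ℝ)

lemma rieszMean_eq_sum (a : ℕ → ℂ) (hy : 0 < y) (h : 1 ≤ N * y) :
    rieszMean a y = ∑ n ∈ Finset.Icc 0 N, a n * (max 0 (1 - n * y) : ℝ) := by
  refine tsum_eq_sum fun n hn => ?_
  have hNn : (N : ℝ) ≤ n := by
    simp only [Finset.mem_Icc, zero_le, true_and, not_le] at hn
    exact_mod_cast hn.le
  simp [max_eq_left (show 1 - n * y ≤ 0 by nlinarith)]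

lemma continuousAt_rieszMean (a : ℕ → ℂ) (hy : 0 < y) : ContinuousAt (rieszMean a) y := by
  obtain ⟨N, hN⟩ := exists_nat_ge (2 / y)
  have heq : rieszMean a =ᶠ[𝓝 y]
      fun y => ∑ n ∈ Finset.Icc 0 N, a n * (max 0 (1 - n * y) : ℝ) := by
    filter_upwards [lt_mem_nhds (show y / 2 < y by linarith)] with z hz
    refine rieszMean_eq_sum a (by linarith) ?_
    rw [div_le_iff₀ hy] at hN
    nlinarith [Nat.cast_nonneg (α := ℝ) N]
  rw [continuousAt_congr heq]
  fun_prop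

lemma rieszMean_eq_zero (ha : a 0 = 0) (hy : 1 ≤ y) : rieszMean a y = 0 := by
  rw [rieszMean_eq_sum a (N := 1) (by linarith) (by simpa using hy)]
  exact Finset.sum_eq_zero fun n hn => by
    rcases Nat.le_one_iff_eq_zero_or_eq_one.mp (Finset.mem_Icc.mp hn).2 with rfl | rfl <;>
      simp [ha, hy]

lemma hasMellin_rieszMean (ha : a 0 = 0) (hs : 0 < s.re) (has : LSeriesSummable a s) :
    HasMellin (rieszMean a) s (LSeries a s * (1 / (s * (s + 1)))) :=
  hasMellin_tsum_mul_comp_mul (k := fun t => ((max 0 (1 - t) : ℝ) : ℂ)) ha has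
    (hasMellin_max_zero_one_sub hs)

end RieszMean

section Summability

variable {a : ℕ → ℂ} {m : ℤ} {s : ℂ}

lemma sum_Icc_one_idealCoeff_one_le (N : ℕ) :
    ∑ n ∈ Finset.Icc 1 N, (idealCoeff (fun _ => 1) n : ℝ) ≤ 2 * N := by
  have hsum := sum_idealCoeff_mul (𝕜 := ℝ) (fun _ => 1) (fun _ => 1) N
  have hcard := card_normBall_le N
  simp only [mul_one, Finset.sum_const, nsmul_eq_mul] at hsum
  refine (Finset.sum_le_sum_of_subset_of_nonneg (Finset.Icc_subset_Icc_left zero_le_one)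
    fun n _ _ => idealCoeff_nonneg (fun _ => zero_le_one) n).trans ?_
  linarith

lemma lseriesSummable_heckeCoeff (m : ℤ) (hs : 1 < s.re) : LSeriesSummable (heckeCoeff m) s := by
  refine LSeriesSummable_of_sum_norm_bigO (r := 1)
    (Asymptotics.IsBigO.of_bound 2 (.of_forall fun N => ?_)) zero_le_one hs
  rw [Real.norm_of_nonneg (Finset.sum_nonneg fun _ _ => norm_nonneg _), Real.rpow_one,
    Real.norm_natCast]
  exact (Finset.sum_le_sum fun n _ => norm_heckeCoeff_le m n).trans
    (sum_Icc_one_idealCoeff_one_le N)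

lemma abscissaOfAbsConv_lt_of_forall_lseriesSummable {x : ℝ}
    (ha : ∀ z : ℂ, x < z.re → LSeriesSummable a z) (hs : x < s.re) :
    LSeries.abscissaOfAbsConv a < s.re :=
  (LSeries.abscissaOfAbsConv_le_of_forall_lt_LSeriesSummable fun _ hy =>
    ha _ (by simpa using hy)).trans_lt (by exact_mod_cast hs)

lemma idealCoeff_vonMangoldt_le (n : ℕ) :
    idealCoeff vonMangoldt n ≤ Real.log n * idealCoeff (fun _ => 1) n := by
  refine (idealCoeff_le_idealCoeff (w := fun _ => Real.log n) fun z hz => ?_).trans_eq ?_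
  · simpa [(mem_normSphere.mp hz).2] using vonMangoldt_le_log z
  · simp [idealCoeff]
    ring

lemma lseriesSummable_vonMangoldtCoeff (m : ℤ) (hs : 1 < s.re) :
    LSeriesSummable (vonMangoldtCoeff m) s := by
  refine (LSeriesSummable_logMul_of_lt_re
    (abscissaOfAbsConv_lt_of_forall_lseriesSummable (fun _ => lseriesSummable_heckeCoeff 0)
      hs)).norm.of_norm_bounded fun n => LSeries.norm_term_le _ ?_
  calc ‖vonMangoldtCoeff m n‖ ≤ Real.log n * idealCoeff (fun _ => 1) n :=
        (norm_vonMangoldtCoeff_le m n).trans (idealCoeff_vonMangoldt_le n)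
    _ = ‖LSeries.logMul (heckeCoeff 0) n‖ := by
        rw [LSeries.logMul, heckeCoeff_zero_left, norm_mul, ← Complex.natCast_log,
          Complex.norm_real, Complex.norm_real, Real.norm_of_nonneg (Real.log_natCast_nonneg n),
          Real.norm_of_nonneg (idealCoeff_nonneg (fun _ => zero_le_one) n)]

end Summability

/-! ### Analytic continuation of the Hecke `L`-functions -/

section MellinBounds

open Filter MeasureTheory Set

variable {f : ℝ → ℂ} {s : ℂ} {b C : ℝ}

lemma differentiableAt_mellin_of_eq_zero (hf : ContinuousOn f (Ioi 0))
    (hf₁ : ∀ y, 1 ≤ y → f y = 0) (hb : ∀ y, 0 < y → ‖f y‖ ≤ C * y ^ (-b)) (hs : b < s.re) :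
    DifferentiableAt ℂ (mellin f) s := by
  refine mellin_differentiableAt_of_isBigO_rpow (a := s.re + 1) (b := b)
    (hf.locallyIntegrableOn measurableSet_Ioi) (.of_bound 1 ?_) (by linarith)
    (.of_bound C ?_) hs
  · filter_upwards [eventually_ge_atTop 1] with y hy
    simp [hf₁ y hy]
  · filter_upwards [self_mem_nhdsWithin] with y (hy : 0 < y)
    rw [Real.norm_of_nonneg (by positivity)]
    exact hb y hy

lemma norm_mellin_le_of_eq_zero (hf₁ : ∀ y, 1 ≤ y → f y = 0)
    (hb : ∀ y, 0 < y → ‖f y‖ ≤ C * y ^ (-b)) (hs : b < s.re) :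
    ‖mellin f s‖ ≤ C / (s.re - b) := by
  have hint : IntegrableOn (fun t : ℝ => t ^ (s.re - b - 1)) (Ioc 0 1) :=
    (intervalIntegrable_iff_integrableOn_Ioc_of_le zero_le_one).mp
      (intervalIntegral.intervalIntegrable_rpow' (by linarith))
  have hval : ∫ t in Ioc (0 : ℝ) 1, t ^ (s.re - b - 1) = 1 / (s.re - b) := by
    rw [← intervalIntegral.integral_of_le zero_le_one, integral_rpow (.inl (by linarith)),
      sub_add_cancel, Real.one_rpow, Real.zero_rpow (by linarith), sub_zero]
  have hmellin : mellin f s = ∫ t in Ioc (0 : ℝ) 1, (t : ℂ) ^ (s - 1) • f t :=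
    setIntegral_eq_of_subset_of_forall_sdiff_eq_zero measurableSet_Ioi Ioc_subset_Ioi_self
      (fun t ht => by rw [hf₁ t (not_le.mp fun h => ht.2 ⟨ht.1, h⟩).le, smul_zero])
  calc ‖mellin f s‖ ≤ ∫ t in Ioc (0 : ℝ) 1, C * t ^ (s.re - b - 1) := by
        rw [hmellin]
        refine norm_integral_le_of_norm_le (hint.const_mul C)
          ((ae_restrict_iff' measurableSet_Ioc).mpr (.of_forall fun t ht => ?_))
        rw [norm_smul, Complex.norm_cpow_eq_rpow_re_of_pos ht.1,
          show s.re - b - 1 = (s - 1).re + -b by simp; ring, Real.rpow_add ht.1, mul_left_comm]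
        have := ht.1
        gcongr
        exact hb t ht.1
    _ = C / (s.re - b) := by rw [integral_const_mul, hval, mul_one_div]

/-- The function `(1 - y)₊² / (2 y)`, whose Mellin transform `1 / ((s - 1) s (s + 1))` carries the
pole at `s = 1` of the Mellin transform of a Riesz mean. -/
noncomputable def poleKernel (y : ℝ) : ℝ := max 0 (1 - y) ^ 2 / (2 * y)

lemma continuousAt_poleKernel {y : ℝ} (hy : 0 < y) : ContinuousAt poleKernel y :=
  ContinuousAt.div (by fun_prop) (by fun_prop) (by positivity)

lemma poleKernel_eq_zero {y : ℝ} (hy : 1 ≤ y) : poleKernel y = 0 := by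
  simp [poleKernel, max_eq_left (sub_nonpos.mpr hy)]

lemma ne_zero_of_one_lt_re (hs : 1 < s.re) : s ≠ 0 ∧ s + 1 ≠ 0 ∧ s - 1 ≠ 0 := by
  refine ⟨?_, ?_, ?_⟩ <;>
    (intro h; have := congrArg Complex.re h; simp at this; linarith)

lemma hasMellin_poleKernel (hs : 1 < s.re) :
    HasMellin (fun t => (poleKernel t : ℂ)) s (1 / ((s - 1) * (s * (s + 1)))) := by
  obtain ⟨hs₀, hs₁, hs₂⟩ := ne_zero_of_one_lt_re hs
  have hinv := hasMellin_cpow_Ioc (-1) (s := s) (by simp; linarith)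
  have hone := hasMellin_one_Ioc (s := s) (by linarith)
  have hid := hasMellin_cpow_Ioc 1 (s := s) (by simp; linarith)
  have htwo := hasMellin_const_smul hone.1 (2 : ℂ)
  have hsub := hasMellin_sub hinv.1 htwo.1
  have hadd := hasMellin_add hsub.1 hid.1
  have hhalf := hasMellin_const_smul hadd.1 (1 / 2 : ℂ)
  rw [hadd.2, hsub.2, htwo.2, hinv.2, hid.2, hone.2] at hhalf
  have hval : (1 / 2 : ℂ) • (1 / (s + -1) - (2 : ℂ) • (1 / s) + 1 / (s + 1))
      = 1 / ((s - 1) * (s * (s + 1))) := by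
    simp only [smul_eq_mul, ← sub_eq_add_neg]
    field_simp
    ring
  refine hval ▸ hasMellin_congr (fun t ht => ?_) hhalf
  have ht₀ : (t : ℂ) ≠ 0 := by exact_mod_cast ne_of_gt ht
  by_cases ht₁ : t ≤ 1
  · have hmem : t ∈ Ioc (0 : ℝ) 1 := ⟨ht, ht₁⟩
    simp only [indicator_of_mem hmem, poleKernel, max_eq_right (sub_nonneg.mpr ht₁),
      Complex.cpow_neg_one, Complex.cpow_one, smul_eq_mul]
    push_cast
    field_simp
    ring
  · have hmem : t ∉ Ioc (0 : ℝ) 1 := fun h => ht₁ h.2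
    simp [hmem, poleKernel_eq_zero (not_le.mp ht₁).le]

end MellinBounds

section RegularizedL

open MeasureTheory Set

variable {m : ℤ} {s : ℂ} {y : ℝ}

/-- The order of the pole at `s = 1` of the `L`-function of the character `angularChar m`. -/
def poleOrder (m : ℤ) : ℕ := if m = 0 then 1 else 0

lemma poleOrder_zero : poleOrder 0 = 1 := rfl

lemma poleOrder_of_ne_zero (hm : m ≠ 0) : poleOrder m = 0 := if_neg hm

lemma poleOrder_le_one (m : ℤ) : poleOrder m ≤ 1 := by
  unfold poleOrder
  split_ifs <;> norm_num

lemma integral_rieszWeight (m : ℤ) (hy : 0 < y) :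
    ∫ w, rieszWeight m y w = (4 * (coneConst * poleOrder m) / y : ℝ) := by
  rcases eq_or_ne m 0 with rfl | hm
  · simp [integral_rieszWeight_zero hy, poleOrder_zero]
  · simp [integral_rieszWeight_eq_zero hm, poleOrder_of_ne_zero hm]

/-- The Riesz mean of the Hecke coefficients after removal of the pole of its Mellin transform. -/
noncomputable def rieszRemainder (m : ℤ) (y : ℝ) : ℂ :=
  rieszMean (heckeCoeff m) y - (2 * coneConst * poleOrder m : ℝ) • (poleKernel y : ℂ)

lemma rieszRemainder_eq_zero (m : ℤ) (hy : 1 ≤ y) : rieszRemainder m y = 0 := by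
  simp [rieszRemainder, rieszMean_eq_zero (heckeCoeff_zero_right m) hy, poleKernel_eq_zero hy]

lemma continuousAt_rieszRemainder (m : ℤ) (hy : 0 < y) : ContinuousAt (rieszRemainder m) y := by
  have hmean := continuousAt_rieszMean (heckeCoeff m) hy
  have hpole := continuousAt_poleKernel hy
  unfold rieszRemainder
  fun_prop

lemma norm_rieszMean_heckeCoeff_sub_le (m : ℤ) (hy : 0 < y) (hy₁ : y ≤ 1) :
    ‖rieszMean (heckeCoeff m) y - (coneConst * poleOrder m / y : ℝ)‖
      ≤ 750 * (1 + |(m : ℝ)|) / √y := by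
  have hN : 1 ≤ (⌈9 / y⌉₊ : ℝ) * y := by
    have := Nat.le_ceil (9 / y)
    rw [div_le_iff₀ hy] at this
    linarith
  have hlattice := norm_sum_rieszWeight_sub_integral_le m hy hy₁
  have heq : rieszMean (heckeCoeff m) y - (coneConst * poleOrder m / y : ℝ)
      = (1 / 4) * (∑ z ∈ normBall ⌈9 / y⌉₊, rieszWeight m y z - ∫ w, rieszWeight m y w) := by
    rw [rieszMean_eq_sum _ hy hN, heckeCoeff,
      sum_idealCoeff_mul _ fun n : ℕ => ((max 0 (1 - n * y) : ℝ) : ℂ), integral_rieszWeight m hy]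
    simp only [rieszWeight, absNorm_eq_sq_norm]
    push_cast
    ring
  rw [heq, norm_mul, show ‖(1 / 4 : ℂ)‖ = 1 / 4 by norm_num]
  calc 1 / 4 * _ ≤ 1 / 4 * (3000 * (1 + |(m : ℝ)|) / √y) := by gcongr
    _ = 750 * (1 + |(m : ℝ)|) / √y := by ring

lemma abs_two_mul_poleKernel_sub_le (hy : 0 < y) (hy₁ : y ≤ 1) :
    |2 * poleKernel y - 1 / y| ≤ 2 := by
  have heq : 2 * poleKernel y - 1 / y = y - 2 := by
    rw [poleKernel, max_eq_right (by linarith)]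
    field_simp
    ring
  rw [heq, abs_le]
  constructor <;> linarith

lemma norm_rieszRemainder_le (m : ℤ) (hy : 0 < y) :
    ‖rieszRemainder m y‖ ≤ (750 + 2 * coneConst) * (1 + |(m : ℝ)|) * y ^ (-(1 / 2) : ℝ) := by
  have hκ := coneConst_pos
  rcases le_total 1 y with hy₁ | hy₁
  · rw [rieszRemainder_eq_zero m hy₁, norm_zero]
    positivity
  have hpow : y ^ (-(1 / 2) : ℝ) = 1 / √y := by
    rw [Real.rpow_neg hy.le, ← Real.sqrt_eq_rpow, one_div]
  have hone : 1 ≤ 1 / √y := by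
    rw [le_div_iff₀ (by positivity), one_mul]
    exact Real.sqrt_le_one.mpr hy₁
  have heq : rieszRemainder m y = (rieszMean (heckeCoeff m) y - (coneConst * poleOrder m / y : ℝ))
      - (coneConst * poleOrder m * (2 * poleKernel y - 1 / y) : ℝ) := by
    simp only [rieszRemainder, Complex.real_smul]
    push_cast
    ring
  have hord : (poleOrder m : ℝ) ≤ 1 := by exact_mod_cast poleOrder_le_one m
  have hpole : ‖((coneConst * poleOrder m * (2 * poleKernel y - 1 / y) : ℝ) : ℂ)‖
      ≤ 2 * coneConst * (1 + |(m : ℝ)|) * (1 / √y) := by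
    rw [Complex.norm_real, Real.norm_eq_abs, abs_mul, abs_of_nonneg (by positivity)]
    calc coneConst * poleOrder m * |2 * poleKernel y - 1 / y| ≤ coneConst * 1 * 2 := by
          gcongr
          exact abs_two_mul_poleKernel_sub_le hy hy₁
      _ = 2 * coneConst * 1 * 1 := by ring
      _ ≤ _ := by
          gcongr
          linarith [abs_nonneg (m : ℝ)]
  rw [heq, hpow]
  calc _ ≤ 750 * (1 + |(m : ℝ)|) / √y + 2 * coneConst * (1 + |(m : ℝ)|) * (1 / √y) :=
        norm_sub_le_of_le (norm_rieszMean_heckeCoeff_sub_le m hy hy₁) hpole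
    _ = _ := by ring

lemma differentiableAt_mellin_rieszRemainder (m : ℤ) (hs : 1 / 2 < s.re) :
    DifferentiableAt ℂ (mellin (rieszRemainder m)) s :=
  differentiableAt_mellin_of_eq_zero
    (fun _ hy => (continuousAt_rieszRemainder m hy).continuousWithinAt)
    (fun _ => rieszRemainder_eq_zero m) (fun _ => norm_rieszRemainder_le m) hs

lemma mellin_rieszRemainder (m : ℤ) (hs : 1 < s.re) :
    mellin (rieszRemainder m) s
      = (LSeries (heckeCoeff m) s - 2 * coneConst * poleOrder m / (s - 1)) / (s * (s + 1)) := by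
  have hmean := hasMellin_rieszMean (heckeCoeff_zero_right m) (by linarith : 0 < s.re)
    (lseriesSummable_heckeCoeff m hs)
  have hpole := hasMellin_poleKernel hs
  have hsmul := hasMellin_const_smul hpole.1 (2 * coneConst * poleOrder m : ℝ)
  obtain ⟨hs₀, hs₁, hs₂⟩ := ne_zero_of_one_lt_re hs
  refine (hasMellin_sub hmean.1 hsmul.1).2.trans ?_
  rw [hmean.2, hsmul.2, hpole.2, Complex.real_smul]
  push_cast
  field_simp

/-- The analytic continuation to `Re s > 1 / 2` of `(s - 1) ^ poleOrder m * L(s)`, where `L` is the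
Dirichlet series of `heckeCoeff m`. -/
noncomputable def regularizedL (m : ℤ) (s : ℂ) : ℂ :=
  2 * coneConst * poleOrder m
    + (s - 1) ^ poleOrder m * (s * (s + 1) * mellin (rieszRemainder m) s)

lemma regularizedL_eq (m : ℤ) (hs : 1 < s.re) :
    regularizedL m s = (s - 1) ^ poleOrder m * LSeries (heckeCoeff m) s := by
  obtain ⟨hs₀, hs₁, hs₂⟩ := ne_zero_of_one_lt_re hs
  rw [regularizedL, mellin_rieszRemainder m hs, mul_div_cancel₀ _ (mul_ne_zero hs₀ hs₁)]
  rcases eq_or_ne m 0 with rfl | hm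
  · simp only [poleOrder_zero, pow_one, Nat.cast_one]
    field_simp
    ring
  · simp [poleOrder_of_ne_zero hm]

lemma regularizedL_zero_one : regularizedL 0 1 = 2 * coneConst := by
  simp [regularizedL, poleOrder_zero]

lemma differentiableAt_regularizedL (m : ℤ) (hs : 1 / 2 < s.re) :
    DifferentiableAt ℂ (regularizedL m) s := by
  have hmellin := differentiableAt_mellin_rieszRemainder m hs
  unfold regularizedL
  fun_prop

theorem exists_norm_regularizedL_le : ∃ C > 0, ∀ (m : ℤ) (s : ℂ), 3 / 4 ≤ s.re →
    ‖regularizedL m s‖ ≤ C * (1 + |(m : ℝ)|) * (1 + ‖s‖) ^ 3 := by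
  have hκ := coneConst_pos
  refine ⟨2 * coneConst + 4 * (750 + 2 * coneConst), by positivity, fun m s hs => ?_⟩
  set A : ℝ := 1 + |(m : ℝ)|
  have hA₁ : 1 ≤ A := by linarith [abs_nonneg (m : ℝ)]
  have hs₁ : 1 ≤ 1 + ‖s‖ := by linarith [norm_nonneg s]
  have hmellin : ‖mellin (rieszRemainder m) s‖ ≤ 4 * (750 + 2 * coneConst) * A := by
    refine (norm_mellin_le_of_eq_zero (fun _ => rieszRemainder_eq_zero m)
      (fun _ => norm_rieszRemainder_le m) (by linarith : 1 / 2 < s.re)).trans ?_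
    rw [div_le_iff₀ (by linarith)]
    have : 0 ≤ (750 + 2 * coneConst) * A := by positivity
    nlinarith
  have hadd : ‖s + 1‖ ≤ 1 + ‖s‖ := by simpa [add_comm] using norm_add_le s 1
  have hsub : ‖s - 1‖ ^ poleOrder m ≤ 1 + ‖s‖ := by
    calc ‖s - 1‖ ^ poleOrder m ≤ (1 + ‖s‖) ^ poleOrder m := by
          gcongr
          simpa [add_comm] using norm_sub_le s 1
      _ ≤ (1 + ‖s‖) ^ 1 := pow_le_pow_right₀ hs₁ (poleOrder_le_one m)
      _ = 1 + ‖s‖ := pow_one _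
  have hres : ‖(2 * coneConst * poleOrder m : ℂ)‖ ≤ 2 * coneConst * A * (1 + ‖s‖) ^ 3 := by
    have hord : (poleOrder m : ℝ) ≤ A := hA₁.trans' (by exact_mod_cast poleOrder_le_one m)
    rw [norm_mul, norm_mul, Complex.norm_real, Real.norm_of_nonneg hκ.le, Complex.norm_natCast,
      Complex.norm_ofNat]
    calc 2 * coneConst * poleOrder m = 2 * coneConst * poleOrder m * 1 := (mul_one _).symm
      _ ≤ _ := by
          gcongr
          exact one_le_pow₀ hs₁
  calc ‖regularizedL m s‖ ≤ 2 * coneConst * A * (1 + ‖s‖) ^ 3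
        + (1 + ‖s‖) * ((1 + ‖s‖) * (1 + ‖s‖) * (4 * (750 + 2 * coneConst) * A)) := by
        refine norm_add_le_of_le hres ?_
        rw [norm_mul, norm_mul, norm_mul, norm_pow]
        gcongr
        linarith
    _ = _ := by ring

end RegularizedL

/-! ### Logarithms of the Hecke `L`-functions -/

section EulerProduct

open Filter Topology

variable {f g : ℕ → ℂ} {s : ℂ} {m : ℤ} {x : ℝ}

lemma angularChar_eq_one_of_isUnit (hm : 4 ∣ m) {z : GaussianInt} (hz : IsUnit z) :
    angularChar m z = 1 := by
  obtain ⟨k, rfl⟩ := hm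
  have hpow : z ^ 4 = 1 := by
    have hmem := mem_associates.mpr (associated_one_iff_isUnit.mpr hz).symm
    simp only [associates, Finset.mem_insert, Finset.mem_singleton] at hmem
    rcases hmem with rfl | rfl | rfl | rfl <;> decide
  have hpow' : (z : ℂ) ^ 4 = 1 := by
    rw [← map_pow, hpow, map_one]
  have hnorm : ‖(z : ℂ)‖ = 1 := Complex.norm_eq_one_of_pow_eq_one hpow' four_ne_zero
  rw [angularChar, hnorm, Complex.ofReal_one, div_one, zpow_mul]
  exact (congrArg (· ^ k) (mod_cast hpow')).trans (one_zpow k)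

lemma heckeCoeff_one (hm : 4 ∣ m) : heckeCoeff m 1 = 1 := by
  have hsphere : normSphere 1 = associates 1 := by
    ext z
    rw [mem_normSphere, mem_associates, absNorm_eq_one_iff, Associated.comm,
      associated_one_iff_isUnit]
    exact and_iff_right_of_imp IsUnit.ne_zero
  have hone : ∀ z ∈ normSphere 1, angularChar m z = 1 := fun z hz =>
    angularChar_eq_one_of_isUnit hm (absNorm_eq_one_iff.mp (mem_normSphere.mp hz).2)
  rw [heckeCoeff, idealCoeff, Finset.sum_congr rfl hone, hsphere, Finset.sum_const,
    card_associates one_ne_zero]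
  norm_num

lemma vonMangoldtCoeff_convolution_heckeCoeff (m : ℤ) :
    LSeries.convolution (vonMangoldtCoeff m) (heckeCoeff m) = LSeries.logMul (heckeCoeff m) := by
  ext n
  rw [LSeries.convolution_def, LSeries.logMul, ← Complex.natCast_log]
  exact sum_divisorsAntidiagonal_vonMangoldtCoeff_mul_heckeCoeff m n

lemma hasDerivAt_LSeries_heckeCoeff (m : ℤ) (hs : 1 < s.re) :
    HasDerivAt (LSeries (heckeCoeff m))
      (-(LSeries (vonMangoldtCoeff m) s * LSeries (heckeCoeff m) s)) s := by
  rw [← LSeries_convolution' (lseriesSummable_vonMangoldtCoeff m hs)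
    (lseriesSummable_heckeCoeff m hs), vonMangoldtCoeff_convolution_heckeCoeff]
  exact LSeries_hasDerivAt (abscissaOfAbsConv_lt_of_forall_lseriesSummable
    (fun _ => lseriesSummable_heckeCoeff m) hs)

lemma LSeries_eq_exp_LSeries (hf : ∀ z : ℂ, x < z.re → LSeriesSummable f z)
    (hg : ∀ z : ℂ, x < z.re → LSeriesSummable g z) (hf₁ : f 1 = 1) (hg₁ : g 1 = 0)
    (hfg : ∀ z : ℂ, x < z.re → HasDerivAt (LSeries f) (deriv (LSeries g) z * LSeries f z) z)
    (hs : x < s.re) : LSeries f s = Complex.exp (LSeries g s) := by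
  have habs (z : ℂ) (hz : x < z.re) := abscissaOfAbsConv_lt_of_forall_lseriesSummable hg hz
  let q : ℂ → ℂ := fun z => LSeries f z * Complex.exp (-LSeries g z)
  have hderiv : ∀ z : ℂ, x < z.re → HasDerivAt q 0 z := by
    intro z hz
    have hgz := (LSeries_hasDerivAt (habs z hz)).differentiableAt.hasDerivAt
    convert! (hfg z hz).mul hgz.neg.cexp using 1
    simp only [Pi.neg_apply]
    ring
  have hconst : ∀ y : ℝ, x < y → q y = q s := fun y hy =>
    (isOpen_lt continuous_const Complex.continuous_re).is_const_of_deriv_eq_zero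
      (convex_halfSpace_re_gt x).isPreconnected
      (fun z hz => (hderiv z hz).differentiableAt.differentiableWithinAt)
      (fun z hz => (hderiv z hz).deriv) (by simpa using hy) hs
  have hlim : Tendsto (fun y : ℝ => q y) atTop (𝓝 (1 * Complex.exp (-0))) := by
    rw [← hf₁, ← hg₁]
    refine (LSeries.tendsto_atTop ?_).mul
      ((Complex.continuous_exp.tendsto _).comp (LSeries.tendsto_atTop ?_).neg)
    · exact (abscissaOfAbsConv_lt_of_forall_lseriesSummable hf hs).trans (EReal.coe_lt_top _)
    · exact (habs s hs).trans (EReal.coe_lt_top _)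
  have hqs : q s = 1 * Complex.exp (-0) := tendsto_nhds_unique
    (tendsto_const_nhds.congr' ((eventually_gt_atTop x).mono fun y hy => (hconst y hy).symm)) hlim
  rw [neg_zero, Complex.exp_zero, mul_one] at hqs
  rw [← mul_one (Complex.exp _), ← hqs, mul_left_comm, ← Complex.exp_add, add_neg_cancel,
    Complex.exp_zero, mul_one]

/-- The Dirichlet coefficients `Λ(n) / log n` of the logarithm of the Hecke `L`-function of
`angularChar m`; they vanish at `n = 0` and `n = 1` because division by zero gives zero. -/
noncomputable def logCoeff (m : ℤ) (n : ℕ) : ℂ := vonMangoldtCoeff m n / Real.log n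

lemma norm_logCoeff_le (m : ℤ) (n : ℕ) :
    ‖logCoeff m n‖ ≤ idealCoeff vonMangoldt n / Real.log n := by
  rw [logCoeff, norm_div, Complex.norm_real, Real.norm_of_nonneg (Real.log_natCast_nonneg n)]
  exact div_le_div_of_nonneg_right (norm_vonMangoldtCoeff_le m n) (Real.log_natCast_nonneg n)

lemma logCoeff_zero_left (n : ℕ) :
    logCoeff 0 n = ((idealCoeff vonMangoldt n / Real.log n : ℝ) : ℂ) := by
  rw [logCoeff, vonMangoldtCoeff_zero_left, Complex.ofReal_div]

lemma lseriesSummable_logCoeff (m : ℤ) (hs : 1 < s.re) : LSeriesSummable (logCoeff m) s := by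
  refine (lseriesSummable_heckeCoeff 0 hs).norm.of_norm_bounded fun n =>
    LSeries.norm_term_le _ ((norm_logCoeff_le m n).trans ?_)
  have hnonneg : 0 ≤ idealCoeff (fun _ => (1 : ℝ)) n := idealCoeff_nonneg (fun _ => zero_le_one) n
  rw [heckeCoeff_zero_left, Complex.norm_real, Real.norm_of_nonneg hnonneg]
  exact div_le_of_le_mul₀ (Real.log_natCast_nonneg n) hnonneg
    ((idealCoeff_vonMangoldt_le n).trans_eq (mul_comm _ _))

lemma logMul_logCoeff (m : ℤ) : LSeries.logMul (logCoeff m) = vonMangoldtCoeff m := by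
  ext n
  rw [LSeries.logMul, logCoeff, ← Complex.natCast_log]
  refine mul_div_cancel_of_imp' fun hlog => norm_le_zero_iff.mp ?_
  refine (norm_vonMangoldtCoeff_le m n).trans ((idealCoeff_vonMangoldt_le n).trans_eq ?_)
  rw [Complex.ofReal_eq_zero.mp hlog, zero_mul]

lemma deriv_LSeries_logCoeff (m : ℤ) (hs : 1 < s.re) :
    deriv (LSeries (logCoeff m)) s = -LSeries (vonMangoldtCoeff m) s := by
  rw [LSeries_deriv (abscissaOfAbsConv_lt_of_forall_lseriesSummable
    (fun _ => lseriesSummable_logCoeff m) hs), logMul_logCoeff]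

lemma LSeries_heckeCoeff_eq_exp (hm : 4 ∣ m) (hs : 1 < s.re) :
    LSeries (heckeCoeff m) s = Complex.exp (LSeries (logCoeff m) s) := by
  refine LSeries_eq_exp_LSeries (fun _ => lseriesSummable_heckeCoeff m)
    (fun _ => lseriesSummable_logCoeff m) (heckeCoeff_one hm) (by simp [logCoeff])
    (fun z hz => ?_) hs
  rw [deriv_LSeries_logCoeff m hz, neg_mul]
  exact hasDerivAt_LSeries_heckeCoeff m hz

lemma LSeries_heckeCoeff_ne_zero (hm : 4 ∣ m) (hs : 1 < s.re) : LSeries (heckeCoeff m) s ≠ 0 := by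
  rw [LSeries_heckeCoeff_eq_exp hm hs]
  exact Complex.exp_ne_zero _

lemma norm_LSeries_le_of_norm_le {b : ℕ → ℝ} (hfb : ∀ n, ‖f n‖ ≤ b n)
    (hb : LSeriesSummable (fun n => (b n : ℂ)) s) :
    ‖LSeries f s‖ ≤ (LSeries (fun n => (b n : ℂ)) s.re).re := by
  have hb' : LSeriesSummable (fun n => (b n : ℂ)) s.re :=
    (LSeriesSummable_iff_of_re_eq_re (Complex.ofReal_re _).symm).mp hb
  refine tsum_of_norm_bounded (Complex.reCLM.hasSum hb'.hasSum) fun n => ?_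
  rcases eq_or_ne n 0 with rfl | hn
  · simp
  · have hcpow : (n : ℂ) ^ (s.re : ℂ) = ((n : ℝ) ^ s.re : ℝ) := by
      rw [Complex.ofReal_cpow n.cast_nonneg, Complex.ofReal_natCast]
    rw [Complex.reCLM_apply, LSeries.norm_term_eq, if_neg hn, LSeries.term_of_ne_zero hn, hcpow,
      ← Complex.ofReal_div, Complex.ofReal_re]
    gcongr
    exact hfb n

lemma one_le_norm_LSeries_mul_norm_LSeries (hm : 4 ∣ m) (hs : 1 < s.re) :
    1 ≤ ‖LSeries (heckeCoeff m) s‖ * ‖LSeries (heckeCoeff 0) s.re‖ := by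
  have hzero : logCoeff 0 = fun n => ((idealCoeff vonMangoldt n / Real.log n : ℝ) : ℂ) :=
    funext logCoeff_zero_left
  have hle := norm_LSeries_le_of_norm_le (norm_logCoeff_le m)
    (hzero ▸ lseriesSummable_logCoeff 0 hs)
  rw [← hzero] at hle
  rw [LSeries_heckeCoeff_eq_exp hm hs, LSeries_heckeCoeff_eq_exp (dvd_zero 4) (by simpa using hs),
    Complex.norm_exp, Complex.norm_exp, ← Real.exp_add]
  have habs := (abs_le.mp (Complex.abs_re_le_norm (LSeries (logCoeff m) s))).1
  exact Real.one_le_exp (by linarith)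

lemma norm_LSeries_vonMangoldtCoeff_le (m : ℤ) (hs : 1 < s.re) :
    ‖LSeries (vonMangoldtCoeff m) s‖ ≤ (LSeries (vonMangoldtCoeff 0) s.re).re := by
  have hzero : vonMangoldtCoeff 0 = fun n => ((idealCoeff vonMangoldt n : ℝ) : ℂ) :=
    funext vonMangoldtCoeff_zero_left
  rw [hzero]
  exact norm_LSeries_le_of_norm_le (norm_vonMangoldtCoeff_le m)
    (hzero ▸ lseriesSummable_vonMangoldtCoeff 0 hs)

end EulerProduct

section ThreeFourOne

variable {n : ℕ}

lemma angularChar_two_mul (m : ℤ) (w : ℂ) : angularChar (2 * m) w = angularChar m w ^ 2 := by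
  rw [angularChar, angularChar, mul_comm, zpow_mul]
  norm_cast

lemma three_add_four_mul_re_add_re_sq_nonneg {w : ℂ} (hw : ‖w‖ = 1) :
    0 ≤ 3 + 4 * w.re + (w ^ 2).re := by
  have hsq : w.re * w.re + w.im * w.im = 1 := by
    rw [← Complex.normSq_apply, Complex.normSq_eq_norm_sq, hw, one_pow]
  rw [sq, Complex.mul_re]
  linarith [sq_nonneg (w.re + 1)]

lemma term_vonMangoldtCoeff_re (m : ℤ) (σ t : ℝ) (hn : n ≠ 0) :
    (LSeries.term (vonMangoldtCoeff m) (σ + t * Complex.I) n).re =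
      1 / 4 * ∑ z ∈ normSphere n, vonMangoldt z * (n : ℝ) ^ (-σ) *
        (angularChar m z * (n : ℂ) ^ (-(t * Complex.I))).re := by
  have hterm : LSeries.term (vonMangoldtCoeff m) (σ + t * Complex.I) n =
      ((1 / 4 : ℝ) : ℂ) * ∑ z ∈ normSphere n, ((vonMangoldt z * (n : ℝ) ^ (-σ) : ℝ) : ℂ) *
        (angularChar m z * (n : ℂ) ^ (-(t * Complex.I))) := by
    rw [LSeries.term_of_ne_zero hn, vonMangoldtCoeff, idealCoeff, div_eq_mul_inv,
      ← Complex.cpow_neg, neg_add, Complex.cpow_add _ _ (Nat.cast_ne_zero.mpr hn), mul_assoc,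
      Finset.sum_mul]
    push_cast [Complex.ofReal_cpow n.cast_nonneg]
    refine congrArg _ (Finset.sum_congr rfl fun z _ => by ring)
  rw [hterm, Complex.re_ofReal_mul, Complex.re_sum]
  simp only [Complex.re_ofReal_mul]

lemma three_mul_re_add_four_mul_re_add_re_nonneg (m : ℤ) {σ : ℝ} (hσ : 1 < σ) (t : ℝ) :
    0 ≤ 3 * (LSeries (vonMangoldtCoeff 0) σ).re +
      4 * (LSeries (vonMangoldtCoeff m) (σ + t * Complex.I)).re +
      (LSeries (vonMangoldtCoeff (2 * m)) (σ + (2 * t : ℝ) * Complex.I)).re := by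
  have hsum (k : ℤ) (τ : ℝ) : HasSum
      (fun n => (LSeries.term (vonMangoldtCoeff k) (σ + τ * Complex.I) n).re)
      (LSeries (vonMangoldtCoeff k) (σ + τ * Complex.I)).re :=
    Complex.reCLM.hasSum (lseriesSummable_vonMangoldtCoeff k (by simpa using hσ)).hasSum
  have hzero := hsum 0 0
  rw [Complex.ofReal_zero, zero_mul, add_zero] at hzero
  refine (((hzero.mul_left 3).add ((hsum m t).mul_left 4)).add
    (hsum (2 * m) (2 * t))).nonneg fun n => ?_
  rcases eq_or_ne n 0 with rfl | hn
  · simp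
  have hterm := term_vonMangoldtCoeff_re 0 σ 0 hn
  have hdouble (z : GaussianInt) : angularChar (2 * m) z * (n : ℂ) ^ (-((2 * t : ℝ) * Complex.I)) =
      (angularChar m z * (n : ℂ) ^ (-(t * Complex.I))) ^ 2 := by
    rw [mul_pow, angularChar_two_mul, ← Complex.cpow_nat_mul]
    push_cast
    ring_nf
  simp only [Complex.ofReal_zero, zero_mul, add_zero, neg_zero, Complex.cpow_zero, mul_one,
    angularChar_zero, Complex.one_re] at hterm
  simp only [hterm, term_vonMangoldtCoeff_re _ σ _ hn, hdouble, Finset.mul_sum,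
    ← Finset.sum_add_distrib]
  refine Finset.sum_nonneg fun z hz => ?_
  have hnorm : ‖angularChar m z * (n : ℂ) ^ (-(t * Complex.I))‖ = 1 := by
    rw [norm_mul, norm_angularChar m (toComplex_ne_zero (mem_normSphere.mp hz).1), one_mul,
      Complex.norm_natCast_cpow_of_pos (Nat.pos_of_ne_zero hn)]
    simp
  have hweight : 0 ≤ vonMangoldt z * (n : ℝ) ^ (-σ) :=
    mul_nonneg (vonMangoldt_nonneg z) (by positivity)
  nlinarith [mul_nonneg hweight (three_add_four_mul_re_add_re_sq_nonneg hnorm)]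

end ThreeFourOne

/-! ### The zero-free region -/

section ZeroFree

open Filter Metric Topology

variable {m : ℤ} {s c ρ z : ℂ} {K M X q r δ σ : ℝ}

lemma regularizedL_ne_zero_of_one_lt_re (hm : 4 ∣ m) (hs : 1 < s.re) : regularizedL m s ≠ 0 := by
  rw [regularizedL_eq m hs]
  exact mul_ne_zero (pow_ne_zero _ (ne_zero_of_one_lt_re hs).2.2) (LSeries_heckeCoeff_ne_zero hm hs)

lemma logDeriv_regularizedL (hm : 4 ∣ m) (hs : 1 < s.re) :
    logDeriv (regularizedL m) s = poleOrder m / (s - 1) - LSeries (vonMangoldtCoeff m) s := by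
  have hL := hasDerivAt_LSeries_heckeCoeff m hs
  have hL₀ := LSeries_heckeCoeff_ne_zero hm hs
  have heq : regularizedL m =ᶠ[𝓝 s] fun z => (z - 1) ^ poleOrder m * LSeries (heckeCoeff m) z :=
    ((isOpen_lt continuous_const Complex.continuous_re).eventually_mem hs).mono fun _ hz =>
      regularizedL_eq m hz
  have hlog : logDeriv (LSeries (heckeCoeff m)) s = -LSeries (vonMangoldtCoeff m) s := by
    rw [logDeriv_apply, hL.deriv, neg_div, mul_div_cancel_right₀ _ hL₀]
  have hpow : logDeriv (fun z => (z - 1) ^ poleOrder m) s = poleOrder m / (s - 1) := by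
    rw [logDeriv_fun_pow (by fun_prop), logDeriv_apply, deriv_sub_const, deriv_id'']
    ring
  rw [(logDeriv_congr_nhds heq).self_of_nhds, logDeriv_mul s
    (f := fun z => (z - 1) ^ poleOrder m) (pow_ne_zero _ (ne_zero_of_one_lt_re hs).2.2) hL₀
    (by fun_prop) hL.differentiableAt, hlog, hpow, ← sub_eq_add_neg]

lemma differentiableOn_regularizedL (m : ℤ) :
    DifferentiableOn ℂ (regularizedL m) {s | 1 / 2 < s.re} := fun _ hs =>
  (differentiableAt_regularizedL m hs).differentiableWithinAt

lemma differentiableAt_logDeriv_regularizedL (hs : 1 / 2 < s.re) (h : regularizedL m s ≠ 0) :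
    DifferentiableAt ℂ (logDeriv (regularizedL m)) s := by
  have hopen : IsOpen {s : ℂ | 1 / 2 < s.re} := isOpen_lt continuous_const Complex.continuous_re
  exact (((differentiableOn_regularizedL m).deriv hopen).differentiableAt
    (hopen.mem_nhds hs)).div (differentiableAt_regularizedL m hs) h

lemma regularizedL_zero_one_ne_zero : regularizedL 0 1 ≠ 0 := by
  rw [regularizedL_zero_one]
  exact_mod_cast mul_ne_zero two_ne_zero coneConst_pos.ne'

lemma exists_re_LSeries_vonMangoldtCoeff_zero_le : ∃ C > 0, ∀ σ : ℝ, 1 < σ → σ ≤ 2 →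
    (LSeries (vonMangoldtCoeff 0) σ).re ≤ 1 / (σ - 1) + C := by
  have hcont : ContinuousOn (fun σ : ℝ => logDeriv (regularizedL 0) σ) (Set.Icc 1 2) := by
    intro σ hσ
    have hne : regularizedL 0 σ ≠ 0 := by
      rcases hσ.1.eq_or_lt with rfl | h
      · exact_mod_cast regularizedL_zero_one_ne_zero
      · exact regularizedL_ne_zero_of_one_lt_re (dvd_zero 4) (by simpa using h)
    have hlog := (differentiableAt_logDeriv_regularizedL
      (by rw [Complex.ofReal_re]; linarith [hσ.1]) hne).continuousAt
    exact (hlog.comp Complex.continuous_ofReal.continuousAt).continuousWithinAt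
  obtain ⟨C, hC⟩ := isCompact_Icc.exists_bound_of_continuousOn hcont
  refine ⟨|C| + 1, by positivity, fun σ hσ hσ₂ => ?_⟩
  have hlog := logDeriv_regularizedL (dvd_zero 4) (s := σ) (by simpa using hσ)
  have hL : LSeries (vonMangoldtCoeff 0) σ =
      ((1 / (σ - 1) : ℝ) : ℂ) - logDeriv (regularizedL 0) σ := by
    rw [hlog, poleOrder_zero]
    push_cast
    ring
  rw [hL, Complex.sub_re, Complex.ofReal_re]
  linarith [(abs_le.mp (Complex.abs_re_le_norm (logDeriv (regularizedL 0) σ))).1,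
    hC σ ⟨hσ.le, hσ₂⟩, le_abs_self C]

lemma le_norm_sub_one_pow_poleOrder (m : ℤ) (hs₂ : s.re ≤ 2) :
    s.re - 1 ≤ ‖(s - 1) ^ poleOrder m‖ := by
  rcases eq_or_ne m 0 with rfl | hm
  · rw [poleOrder_zero, pow_one]
    simpa using Complex.re_le_norm (s - 1)
  · rw [poleOrder_of_ne_zero hm, pow_zero, norm_one]
    linarith

lemma exists_mul_sq_le_norm_regularizedL : ∃ c > 0, ∀ m : ℤ, 4 ∣ m → ∀ s : ℂ, 1 < s.re →
    s.re ≤ 2 → c * (s.re - 1) ^ 2 ≤ ‖regularizedL m s‖ := by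
  obtain ⟨C, hC, hbound⟩ := exists_norm_regularizedL_le
  refine ⟨1 / (27 * C), by positivity, fun m hm s hs hs₂ => ?_⟩
  have hpos : 0 < s.re - 1 := sub_pos.mpr hs
  have hzeta : (s.re - 1) * ‖LSeries (heckeCoeff 0) s.re‖ ≤ 27 * C := by
    have hle := hbound 0 s.re (by rw [Complex.ofReal_re]; linarith)
    rw [regularizedL_eq 0 (by simpa using hs), poleOrder_zero, pow_one, norm_mul,
      ← Complex.ofReal_one, ← Complex.ofReal_sub, Complex.norm_real, Complex.norm_real,
      Real.norm_of_nonneg hpos.le, Real.norm_of_nonneg (by linarith)] at hle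
    calc _ ≤ C * (1 + |((0 : ℤ) : ℝ)|) * (1 + s.re) ^ 3 := hle
      _ ≤ C * (1 + |((0 : ℤ) : ℝ)|) * 3 ^ 3 := by gcongr; linarith
      _ = 27 * C := by norm_num [mul_comm]
  have hL : s.re - 1 ≤ ‖LSeries (heckeCoeff m) s‖ * (27 * C) := calc
    s.re - 1 ≤ (s.re - 1) * (‖LSeries (heckeCoeff m) s‖ * ‖LSeries (heckeCoeff 0) s.re‖) :=
      le_mul_of_one_le_right hpos.le (one_le_norm_LSeries_mul_norm_LSeries hm hs)
    _ = ‖LSeries (heckeCoeff m) s‖ * ((s.re - 1) * ‖LSeries (heckeCoeff 0) s.re‖) := by ring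
    _ ≤ _ := by gcongr
  rw [regularizedL_eq m hs, norm_mul, div_mul_eq_mul_div, one_mul, div_le_iff₀ (by positivity),
    sq, mul_assoc]
  exact mul_le_mul (le_norm_sub_one_pow_poleOrder m hs₂) hL hpos.le (norm_nonneg _)

lemma exists_norm_regularizedL_le_mul : ∃ A > 0, ∀ X : ℝ, 1 ≤ X → ∀ m : ℤ, 4 ∣ m →
    |(m : ℝ)| ≤ X → ∀ s : ℂ, |s.im| ≤ X → 1 < s.re → s.re ≤ 2 → ∀ z ∈ closedBall s (1 / 4),
    ‖regularizedL m z‖ ≤ A * X ^ 4 / (s.re - 1) ^ 2 * ‖regularizedL m s‖ := by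
  obtain ⟨C, hC, hupper⟩ := exists_norm_regularizedL_le
  obtain ⟨c, hc, hlower⟩ := exists_mul_sq_le_norm_regularizedL
  refine ⟨250 * C / c, by positivity, fun X hX m hm hmX s ht hs hs₂ z hz => ?_⟩
  have hpos : 0 < s.re - 1 := sub_pos.mpr hs
  rw [mem_closedBall, dist_eq_norm] at hz
  have hre : 3 / 4 ≤ z.re := by
    have := (abs_le.mp ((Complex.abs_re_le_norm (z - s)).trans hz)).1
    rw [Complex.sub_re] at this
    linarith
  have hnorm : ‖z‖ ≤ 4 * X := by
    have hs_norm := Complex.norm_le_abs_re_add_abs_im s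
    rw [abs_of_nonneg (by linarith : 0 ≤ s.re)] at hs_norm
    linarith [norm_le_norm_sub_add z s]
  calc ‖regularizedL m z‖ ≤ C * (1 + |(m : ℝ)|) * (1 + ‖z‖) ^ 3 := hupper m z hre
    _ ≤ C * (X + X) * (X + 4 * X) ^ 3 := by gcongr
    _ = 250 * C / c * X ^ 4 / (s.re - 1) ^ 2 * (c * (s.re - 1) ^ 2) := by field_simp; ring
    _ ≤ _ := by gcongr; exact hlower m hm s hs hs₂

lemma one_le_log (hX : 3 ≤ X) : 1 ≤ Real.log X := by
  rw [Real.le_log_iff_exp_le (by linarith)]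
  exact Real.exp_one_lt_three.le.trans hX

lemma mul_pow_div_pow_le_exp (hK : 0 < K) (hq : 0 < q) (hq₁ : q ≤ 1) (hX : 3 ≤ X) :
    K * X ^ 6 / q ^ 4 ≤ Real.exp ((|Real.log K| + 10) * Real.log X / q) := by
  have : 0 < X := by linarith
  have hlog := one_le_log hX
  have hlog_le : Real.log X ≤ Real.log X / q := le_div_self (by linarith) hq hq₁
  have hq_log : -Real.log q ≤ Real.log X / q := by
    rw [← Real.log_inv]
    calc Real.log q⁻¹ ≤ q⁻¹ := Real.log_le_self (by positivity)
      _ = 1 / q := (one_div q).symm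
      _ ≤ _ := by gcongr
  rw [← Real.log_le_iff_le_exp (by positivity), Real.log_div (by positivity) (by positivity),
    Real.log_mul hK.ne' (by positivity), Real.log_pow, Real.log_pow, mul_div_assoc, add_mul]
  push_cast
  linarith [le_abs_self (Real.log K),
    le_mul_of_one_le_right (abs_nonneg (Real.log K)) (hlog.trans hlog_le)]

lemma exists_norm_regularizedL_le_exp_mul : ∃ A > 0, ∀ q X : ℝ, 0 < q → q ≤ 1 → 3 ≤ X →
    ∀ m : ℤ, 4 ∣ m → |(m : ℝ)| ≤ 2 * X → ∀ s : ℂ, |s.im| ≤ 2 * X →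
    q ^ 2 / Real.log X ≤ s.re - 1 → s.re ≤ 2 → ∀ z ∈ closedBall s (1 / 4),
    ‖regularizedL m z‖ ≤ Real.exp (A * Real.log X / q) * ‖regularizedL m s‖ := by
  obtain ⟨A, hA, hbound⟩ := exists_norm_regularizedL_le_mul
  refine ⟨|Real.log (16 * A)| + 10, by positivity, fun q X hq hq₁ hX m hm hmX s ht hs hs₂ z hz =>
    (hbound (2 * X) (by linarith) m hm hmX s ht ?_ hs₂ z hz).trans ?_⟩
  all_goals
    have hX₀ : 0 < X := by linarith
    have hlog := one_le_log hX
    have hpos : 0 < q ^ 2 / Real.log X := by positivity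
  · linarith
  · gcongr
    calc A * (2 * X) ^ 4 / (s.re - 1) ^ 2 ≤ A * (2 * X) ^ 4 / (q ^ 2 / X) ^ 2 := by
          gcongr
          exact (div_le_div_of_nonneg_left (sq_nonneg q) (by linarith)
            (Real.log_le_self hX₀.le)).trans hs
      _ = 16 * A * X ^ 6 / q ^ 4 := by field_simp; norm_num
      _ ≤ _ := mul_pow_div_pow_le_exp (by positivity) hq hq₁ hX

lemma diffContOnCl_regularizedL (m : ℤ) (hc : 1 < c.re) :
    DiffContOnCl ℂ (regularizedL m) (ball c (1 / 4)) := by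
  refine ((differentiableOn_regularizedL m).mono fun z hz => ?_).diffContOnCl
  rw [closure_ball c (by norm_num), mem_closedBall, dist_eq_norm] at hz
  have := (abs_le.mp ((Complex.abs_re_le_norm (z - c)).trans hz)).1
  rw [Complex.sub_re] at this
  exact (by linarith : 1 / 2 < z.re)

lemma re_lt_re_of_regularizedL_eq_zero (hm : 4 ∣ m) (hc : 1 < c.re) (hz : regularizedL m z = 0) :
    z.re < c.re :=
  lt_of_not_ge fun h => regularizedL_ne_zero_of_one_lt_re hm (hc.trans_le h) hz

lemma re_poleOrder_div_le (hr : 0 < r) (h : m = 0 → r ≤ |s.im|) :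
    (poleOrder m / (s - 1) : ℂ).re ≤ 1 / r := by
  rcases eq_or_ne m 0 with rfl | hm
  · have hle : r ≤ ‖s - 1‖ := (h rfl).trans (by simpa using Complex.abs_im_le_norm (s - 1))
    refine (Complex.re_le_norm _).trans ?_
    rw [poleOrder_zero, Nat.cast_one, norm_div, norm_one]
    gcongr
  · rw [poleOrder_of_ne_zero hm, Nat.cast_zero, zero_div, Complex.zero_re]
    positivity

lemma re_LSeries_vonMangoldtCoeff_le (hm : 4 ∣ m) (hc : 1 < c.re) (hr : 0 < r)
    (hcr : m = 0 → r ≤ |c.im|) (hM : 0 < M)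
    (hb : ∀ z ∈ closedBall c (1 / 4), ‖regularizedL m z‖ ≤ Real.exp M * ‖regularizedL m c‖) :
    (LSeries (vonMangoldtCoeff m) c).re ≤ 1 / r + 288 * M := by
  have hlandau := neg_le_re_logDeriv (by norm_num) hM (diffContOnCl_regularizedL m hc)
    (regularizedL_ne_zero_of_one_lt_re hm hc) hb
    fun z _ hz => re_lt_re_of_regularizedL_eq_zero hm hc hz
  rw [logDeriv_regularizedL hm hc, Complex.sub_re] at hlandau
  linarith [re_poleOrder_div_le hr hcr]

lemma re_one_div_sub_add_re_LSeries_vonMangoldtCoeff_le (hm : 4 ∣ m) (hc : 1 < c.re) (hr : 0 < r)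
    (hcr : m = 0 → r ≤ |c.im|) (hM : 0 < M)
    (hb : ∀ z ∈ closedBall c (1 / 4), ‖regularizedL m z‖ ≤ Real.exp M * ‖regularizedL m c‖)
    (hρc : ρ ∈ closedBall c (1 / 12)) (hρ : regularizedL m ρ = 0) :
    (1 / (c - ρ)).re + (LSeries (vonMangoldtCoeff m) c).re ≤ 1 / r + 288 * M := by
  have hlandau := re_one_div_sub_le_re_logDeriv (by norm_num) hM (diffContOnCl_regularizedL m hc)
    (regularizedL_ne_zero_of_one_lt_re hm hc) hb
    (fun z _ hz => re_lt_re_of_regularizedL_eq_zero hm hc hz)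
    (by convert hρc using 1; norm_num) hρ
  rw [logDeriv_regularizedL hm hc, Complex.sub_re] at hlandau
  linarith [re_poleOrder_div_le hr hcr]

lemma four_div_sub_re_le (hm : 4 ∣ m) (hσ : 1 < σ) (hσρ : σ - ρ.re ≤ 1 / 12) (hr : 0 < r)
    (hρr : m = 0 → r ≤ |ρ.im|) (hM : 0 < M)
    (hb : ∀ k : ℤ, 4 ∣ k → |(k : ℝ)| ≤ 2 * |(m : ℝ)| → ∀ t : ℝ, |t| ≤ 2 * |ρ.im| →
      ∀ z ∈ closedBall (σ + t * Complex.I) (1 / 4),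
      ‖regularizedL k z‖ ≤ Real.exp M * ‖regularizedL k (σ + t * Complex.I)‖)
    (hρ : regularizedL m ρ = 0) :
    4 / (σ - ρ.re) ≤ 3 * (LSeries (vonMangoldtCoeff 0) σ).re + (5 / r + 1440 * M) := by
  have hlt : ρ.re < σ := re_lt_re_of_regularizedL_eq_zero (c := σ) hm (by simpa using hσ) hρ
  have hsub : (σ + ρ.im * Complex.I : ℂ) - ρ = ((σ - ρ.re : ℝ) : ℂ) := by
    apply Complex.ext <;> simp
  have hm₂ : |((2 * m : ℤ) : ℝ)| = 2 * |(m : ℝ)| := by simp [abs_mul]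
  have ht₂ : |2 * ρ.im| = 2 * |ρ.im| := by simp [abs_mul]
  have hzero := re_one_div_sub_add_re_LSeries_vonMangoldtCoeff_le (c := σ + ρ.im * Complex.I)
    hm (by simpa using hσ) hr (by simpa using hρr) hM
    (hb m hm (by linarith [abs_nonneg (m : ℝ)]) ρ.im (by linarith [abs_nonneg ρ.im]))
    (by
      rw [mem_closedBall, dist_comm, dist_eq_norm, hsub, Complex.norm_real,
        Real.norm_of_nonneg (sub_pos.mpr hlt).le]
      exact hσρ) hρ
  have hdouble := re_LSeries_vonMangoldtCoeff_le (c := σ + (2 * ρ.im : ℝ) * Complex.I)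
    (hm.mul_left 2) (by simpa using hσ) hr
    (fun h => by
      have := hρr (by simpa using h)
      simpa [abs_mul] using this.trans (by linarith [abs_nonneg ρ.im] : |ρ.im| ≤ 2 * |ρ.im|)) hM
    (hb (2 * m) (hm.mul_left 2) hm₂.le (2 * ρ.im) ht₂.le)
  have hnonneg := three_mul_re_add_four_mul_re_add_re_nonneg m hσ ρ.im
  rw [hsub, ← Complex.ofReal_one, ← Complex.ofReal_div, Complex.ofReal_re] at hzero
  linarith [show 4 / (σ - ρ.re) = 4 * (1 / (σ - ρ.re)) by ring, show 5 / r = 5 * (1 / r) by ring]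

lemma div_eight_lt_of_four_div_le {g : ℝ} (hδ : 0 < δ) (hg : 0 < δ + g) (hK : δ * K ≤ 1 / 2)
    (h : 4 / (δ + g) ≤ 3 / δ + K) : δ / 8 < g := by
  have hle : 4 / (δ + g) ≤ (7 / 2) / δ := by
    refine h.trans ?_
    rw [div_add' _ _ _ hδ.ne']
    gcongr
    linarith
  rw [div_le_div_iff₀ hg hδ] at hle
  linarith

lemma div_eight_lt_one_sub_re (hm : 4 ∣ m) (hδ : 0 < δ) (hδρ : δ + (1 - ρ.re) ≤ 1 / 12)
    (hr : 0 < r) (hρr : m = 0 → r ≤ |ρ.im|) (hM : 0 < M)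
    (hb : ∀ k : ℤ, 4 ∣ k → |(k : ℝ)| ≤ 2 * |(m : ℝ)| → ∀ t : ℝ, |t| ≤ 2 * |ρ.im| →
      ∀ z ∈ closedBall ((1 + δ : ℝ) + t * Complex.I) (1 / 4),
      ‖regularizedL k z‖ ≤ Real.exp M * ‖regularizedL k ((1 + δ : ℝ) + t * Complex.I)‖)
    (hL : (LSeries (vonMangoldtCoeff 0) (1 + δ : ℝ)).re ≤ 1 / δ + K)
    (hK : δ * (5 / r + 1440 * M + 3 * K) ≤ 1 / 2) (hρ : regularizedL m ρ = 0) :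
    δ / 8 < 1 - ρ.re := by
  have hlt : ρ.re < 1 + δ := re_lt_re_of_regularizedL_eq_zero (c := (1 + δ : ℝ)) hm
    (by rw [Complex.ofReal_re]; linarith) hρ
  have hfour := four_div_sub_re_le hm (by linarith) (by linarith) hr hρr hM hb hρ
  rw [add_comm 1 δ, add_sub_assoc] at hfour
  rw [add_comm 1 δ] at hL
  refine div_eight_lt_of_four_div_le hδ (by linarith) hK (hfour.trans ?_)
  linarith [show 3 / δ = 3 * (1 / δ) by ring]

lemma exists_regularizedL_zero_ne_zero_near_one : ∃ r > 0, ∀ ρ : ℂ, |ρ.re - 1| ≤ r → |ρ.im| < r →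
    regularizedL 0 ρ ≠ 0 := by
  have hcont : ContinuousAt (regularizedL 0) 1 :=
    (differentiableAt_regularizedL 0 (by norm_num)).continuousAt
  obtain ⟨ε, hε, hball⟩ :=
    Metric.eventually_nhds_iff.mp (hcont.eventually_ne regularizedL_zero_one_ne_zero)
  refine ⟨ε / 2, by positivity, fun ρ hre him => hball ?_⟩
  have hle := Complex.norm_le_abs_re_add_abs_im (ρ - 1)
  rw [Complex.sub_re, Complex.sub_im, Complex.one_re, Complex.one_im, sub_zero] at hle
  rw [dist_eq_norm]
  linarith

/-- As in de la Vallée Poussin's argument, the 3-4-1 inequality is tested at `σ = 1 + q² / log X`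
for a small constant `q`; the truncation by `r` keeps real zeros away from the pole at `1`. -/
lemma exists_pos_le_and_mul_le_half {B : ℝ} (hB : 0 < B) :
    ∃ q > 0, q ≤ 1 / 10 ∧ q * B ≤ 1 / 2 := by
  refine ⟨min (1 / 10) (1 / (2 * B)), by positivity, min_le_left _ _, ?_⟩
  exact (mul_le_mul_of_nonneg_right (min_le_right _ _) hB.le).trans_eq (by field_simp)

theorem exists_forall_regularizedL_ne_zero : ∃ c > 0, c ≤ 1 / 30 ∧ ∀ X : ℝ, 3 ≤ X →
    ∀ m : ℤ, 4 ∣ m → |(m : ℝ)| ≤ X → ∀ ρ : ℂ, |ρ.im| ≤ X → 1 - c / Real.log X ≤ ρ.re →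
    regularizedL m ρ ≠ 0 := by
  obtain ⟨r, hr, hnear⟩ := exists_regularizedL_zero_ne_zero_near_one
  obtain ⟨A, hA, hgrowth⟩ := exists_norm_regularizedL_le_exp_mul
  obtain ⟨C, hC, hpole⟩ := exists_re_LSeries_vonMangoldtCoeff_zero_le
  let B := 1440 * A + 5 / r + 3 * C
  obtain ⟨q, hq, hq₁, hqB⟩ := exists_pos_le_and_mul_le_half (by positivity : 0 < B)
  refine ⟨min (q ^ 2 / 8) r, by positivity, (min_le_left _ _).trans (by nlinarith), ?_⟩
  intro X hX m hm hmX ρ hρX hρ h_zero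
  have hlog := one_le_log hX
  let δ := q ^ 2 / Real.log X
  have hδ : 0 < δ := by positivity
  have hδ_le : δ ≤ q ^ 2 := div_le_self (sq_nonneg q) hlog
  have hgap : 1 - ρ.re ≤ δ / 8 := by
    have : min (q ^ 2 / 8) r / Real.log X ≤ q ^ 2 / 8 / Real.log X := by
      gcongr
      exact min_le_left _ _
    linarith [show δ / 8 = q ^ 2 / 8 / Real.log X by simp only [δ]; ring]
  have hgap_r : 1 - ρ.re ≤ r := by
    linarith [(div_le_self (by positivity) hlog).trans (min_le_right (q ^ 2 / 8) r)]
  have hρ₁ : ρ.re ≤ 1 :=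
    le_of_not_gt fun h => regularizedL_ne_zero_of_one_lt_re hm h h_zero
  have him : m = 0 → r ≤ |ρ.im| := by
    rintro rfl
    refine le_of_not_gt fun h => hnear ρ ?_ h h_zero
    rw [abs_le]
    constructor <;> linarith
  have hpole_δ := hpole (1 + δ) (by linarith) (by nlinarith)
  rw [add_sub_cancel_left] at hpole_δ
  refine (div_eight_lt_one_sub_re hm hδ (by nlinarith) hr him (M := A * Real.log X / q)
    (by positivity) (fun k hk hkm t ht z hz => ?_) hpole_δ ?_ h_zero).not_ge hgap
  · refine hgrowth q X hq (by linarith) hX k hk (by linarith) _ ?_ ?_ ?_ z hz <;>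
      simp only [Complex.add_im, Complex.add_re, Complex.ofReal_im, Complex.ofReal_re,
        Complex.im_ofReal_mul, Complex.re_ofReal_mul, Complex.I_im, Complex.I_re,
        mul_one, mul_zero, zero_add, add_zero, add_sub_cancel_left, le_refl, δ] <;>
      nlinarith
  · calc δ * (5 / r + 1440 * (A * Real.log X / q) + 3 * C)
        = 1440 * A * q + δ * (5 / r + 3 * C) := by simp only [δ]; field_simp; ring
      _ ≤ 1440 * A * q + q * (5 / r + 3 * C) := by gcongr; nlinarith
      _ = q * B := by simp only [B]; ring
      _ ≤ 1 / 2 := hqB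

lemma log_add_one_le_two_mul_log (hX : 3 ≤ X) : Real.log (X + 1) ≤ 2 * Real.log X := by
  have h := Real.log_le_log (by linarith) (by nlinarith : X + 1 ≤ X ^ 2)
  rwa [Real.log_pow] at h

lemma re_im_bounds_of_mem_ball {w : ℂ} {η : ℝ} (hη : 4 * η ≤ 1) (hw : w.re = 1 + η)
    (hz : z ∈ ball w (4 * η)) :
    1 - 3 * η ≤ z.re ∧ |z.im| ≤ |w.im| + 1 := by
  rw [mem_ball, dist_eq_norm] at hz
  have hre := (abs_lt.mp ((Complex.abs_re_le_norm (z - w)).trans_lt hz)).1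
  have him := (Complex.abs_im_le_norm (z - w)).trans_lt hz
  rw [Complex.sub_re] at hre
  rw [Complex.sub_im] at him
  exact ⟨by linarith, by linarith [abs_sub_abs_le_abs_sub z.im w.im]⟩

theorem exists_norm_logDeriv_regularizedL_le : ∃ c > 0, c ≤ 1 / 120 ∧ ∃ C > 0, ∀ X : ℝ, 3 ≤ X →
    ∀ m : ℤ, 4 ∣ m → |(m : ℝ)| ≤ X → ∀ s : ℂ, |s.im| ≤ X → |s.re - 1| ≤ c / Real.log X →
    regularizedL m s ≠ 0 ∧ ‖logDeriv (regularizedL m) s‖ ≤ C * Real.log X ^ 2 := by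
  obtain ⟨c, hc, hc_le, hne⟩ := exists_forall_regularizedL_ne_zero
  obtain ⟨A, hA, hgrowth⟩ := exists_norm_regularizedL_le_exp_mul
  refine ⟨c / 6, by positivity, by linarith, 6 * A / (√(c / 6) * (c / 6)), by positivity,
    fun X hX m hm hmX s hsX hs => ?_⟩
  have hlog := one_le_log hX
  set η := c / 6 / Real.log X with hη
  have hη₀ : 0 < η := by positivity
  have hη₁ : η ≤ 1 / 120 := (div_le_self (by positivity) hlog).trans (by linarith)
  have hfree (z : ℂ) (hre : 1 - 3 * η ≤ z.re) (him : |z.im| ≤ X + 1) : regularizedL m z ≠ 0 := by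
    refine hne (X + 1) (by linarith) m hm (by linarith) z him ?_
    have : 3 * η ≤ c / Real.log (X + 1) := calc
      3 * η = c / (2 * Real.log X) := by rw [hη]; field_simp; norm_num
      _ ≤ _ := by
        gcongr
        · exact Real.log_pos (by linarith)
        · exact log_add_one_le_two_mul_log hX
    linarith
  rw [abs_le] at hs
  refine ⟨hfree s (by linarith) (by linarith), ?_⟩
  set w : ℂ := ⟨1 + η, s.im⟩
  have hball (z : ℂ) (hz : z ∈ ball w (4 * η)) : 1 - 3 * η ≤ z.re ∧ |z.im| ≤ X + 1 :=
    (re_im_bounds_of_mem_ball (by linarith) rfl hz).imp_right fun h => h.trans (by linarith)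
  have hsw : s ∈ closedBall w (4 * η / 2) := by
    have hsub : s - w = ((s.re - (1 + η) : ℝ) : ℂ) := by apply Complex.ext <;> simp [w]
    rw [mem_closedBall, dist_eq_norm, hsub, Complex.norm_real, Real.norm_eq_abs, abs_le]
    constructor <;> linarith
  have hsqrt : √(c / 6) ^ 2 = c / 6 := Real.sq_sqrt (by positivity)
  refine (norm_logDeriv_le_of_ne_zero (M := A * Real.log X / √(c / 6)) (by positivity)
    ((differentiableOn_regularizedL m).mono fun z hz => ?_) (fun z hz => ?_)
    (fun z hz => hfree z (hball z hz).1 (hball z hz).2) (by positivity) hsw).trans_eq ?_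
  · exact (by linarith [(hball z hz).1] : 1 / 2 < z.re)
  · refine hgrowth _ X (by positivity) (Real.sqrt_le_one.mpr (by linarith)) hX m hm (by linarith) w
      (by linarith) ?_ (by linarith) z (closedBall_subset_closedBall (by linarith)
        (ball_subset_closedBall hz))
    rw [hsqrt, add_sub_cancel_left]
  · rw [hη]
    field_simp
    norm_num

end ZeroFree

/-! ### Mellin inversion with a shifted contour -/

section ContourShift

open Filter MeasureTheory

variable {E : Type*} [NormedAddCommGroup E] [NormedSpace ℝ E] {a b y A B T : ℝ}

lemma arctan_inv_le_inv (hT : 0 < T) : Real.arctan T⁻¹ ≤ T⁻¹ := by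
  have h := Real.le_tan (Real.arctan_nonneg.2 (inv_pos.2 hT).le) (Real.arctan_lt_pi_div_two T⁻¹)
  rwa [Real.tan_arctan] at h

lemma setIntegral_compl_Ioc_inv_one_add_sq_le (hT : 0 < T) :
    ∫ t in (Set.Ioc (-T) T)ᶜ, (1 + t ^ 2)⁻¹ ≤ 2 / T := by
  have h := integral_add_compl (measurableSet_Ioc (a := -T) (b := T)) integrable_inv_one_add_sq
  rw [integral_univ_inv_one_add_sq, ← intervalIntegral.integral_of_le (by linarith),
    integral_inv_one_add_sq, Real.arctan_neg] at h
  have harctan := arctan_inv_le_inv hT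
  rw [Real.arctan_inv_of_pos hT] at harctan
  rw [div_eq_mul_inv]
  linarith

lemma norm_integral_le_norm_intervalIntegral_add {f : ℝ → E} (hT : 0 < T) (hf : Integrable f)
    (hB : ∀ t, ‖f t‖ ≤ B * (1 + t ^ 2)⁻¹) :
    ‖∫ t, f t‖ ≤ ‖∫ t in (-T)..T, f t‖ + 2 * B / T := by
  have hB₀ : 0 ≤ B := by simpa using (norm_nonneg _).trans (hB 0)
  rw [← integral_add_compl (measurableSet_Ioc (a := -T) (b := T)) hf,
    ← intervalIntegral.integral_of_le (by linarith)]
  have htail : ‖∫ t in (Set.Ioc (-T) T)ᶜ, f t‖ ≤ 2 * B / T := calc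
    _ ≤ ∫ t in (Set.Ioc (-T) T)ᶜ, B * (1 + t ^ 2)⁻¹ :=
      norm_integral_le_of_norm_le (integrable_inv_one_add_sq.const_mul B).integrableOn
        (Eventually.of_forall hB)
    _ ≤ B * (2 / T) := by
      rw [integral_const_mul]
      exact mul_le_mul_of_nonneg_left (setIntegral_compl_Ioc_inv_one_add_sq_le hT) hB₀
    _ = 2 * B / T := by ring
  exact (norm_add_le _ _).trans (by gcongr)

lemma norm_intervalIntegral_le_mul_pi {f : ℝ → E} (hT : 0 ≤ T)
    (hB : ∀ t, |t| ≤ T → ‖f t‖ ≤ B * (1 + t ^ 2)⁻¹) : ‖∫ t in (-T)..T, f t‖ ≤ B * Real.pi := by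
  have hB₀ : 0 ≤ B := by simpa using (norm_nonneg _).trans (hB 0 (by simpa using hT))
  refine (intervalIntegral.norm_integral_le_of_norm_le (by linarith)
    (Eventually.of_forall fun t ht => hB t (abs_le.mpr ⟨ht.1.le, ht.2⟩))
    (integrable_inv_one_add_sq.const_mul B).intervalIntegrable).trans ?_
  rw [intervalIntegral.integral_const_mul, integral_inv_one_add_sq, Real.arctan_neg]
  gcongr
  linarith [Real.arctan_lt_pi_div_two T]

lemma norm_intervalIntegral_vertical_le {Φ : ℂ → ℂ} (hab : a ≤ b) (hT : 0 ≤ T)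
    (hΦ : ∀ s : ℂ, s.re ∈ Set.Icc a b → |s.im| ≤ T → DifferentiableAt ℂ Φ s)
    (hA : ∀ s : ℂ, s.re ∈ Set.Icc a b → |s.im| = T → ‖Φ s‖ ≤ A) :
    ‖∫ t : ℝ in (-T)..T, Φ (b + t * Complex.I)‖ ≤
      ‖∫ t : ℝ in (-T)..T, Φ (a + t * Complex.I)‖ + 2 * A * (b - a) := by
  have hrect := Complex.integral_boundary_rect_eq_zero_of_differentiableOn Φ
    (⟨a, -T⟩ : ℂ) (⟨b, T⟩ : ℂ) fun s hs => by
      rw [Complex.mem_reProdIm, Set.uIcc_of_le hab, Set.uIcc_of_le (by linarith)] at hs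
      exact (hΦ s hs.1 (abs_le.mpr hs.2)).differentiableWithinAt
  have hhorizontal (τ : ℝ) (hτ : |τ| = T) :
      ‖∫ x : ℝ in a..b, Φ (x + τ * Complex.I)‖ ≤ A * (b - a) := by
    rw [← abs_of_nonneg (sub_nonneg.mpr hab)]
    refine intervalIntegral.norm_integral_le_of_norm_le_const fun x hx => ?_
    rw [Set.uIoc_of_le hab] at hx
    exact hA _ (by simpa using ⟨hx.1.le, hx.2⟩) (by simpa using hτ)
  have hbot := hhorizontal (-T) (by rw [abs_neg, abs_of_nonneg hT])
  have htop := hhorizontal T (abs_of_nonneg hT)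
  simp only [smul_eq_mul] at hrect
  set bot := ∫ x : ℝ in a..b, Φ (x + (-T : ℝ) * Complex.I)
  set top := ∫ x : ℝ in a..b, Φ (x + T * Complex.I)
  set right := ∫ t : ℝ in (-T)..T, Φ (b + t * Complex.I)
  set left := ∫ t : ℝ in (-T)..T, Φ (a + t * Complex.I)
  have heq : right = left + Complex.I * (bot - top) := by
    linear_combination (-Complex.I) * hrect + (right - left) * Complex.I_sq
  calc ‖right‖ ≤ ‖left‖ + ‖bot - top‖ := by
        rw [heq]
        simpa using norm_add_le left (Complex.I * (bot - top))
    _ ≤ ‖left‖ + (‖bot‖ + ‖top‖) := by gcongr; exact norm_sub_le _ _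
    _ ≤ _ := by linarith

lemma norm_le_of_hasMellin {f : ℝ → ℂ} {F : ℂ → ℂ} (hy : 0 < y) (hT : 0 < T)
    (hf : ContinuousAt f y) (hmellin : ∀ s : ℂ, s.re = b → HasMellin f s (F s))
    (hF : ∀ s : ℂ, s.re = b → ContinuousAt F s)
    (hB : ∀ s : ℂ, s.re = b → ‖F s‖ ≤ B * (1 + s.im ^ 2)⁻¹) :
    ‖f y‖ ≤ ‖∫ t : ℝ in (-T)..T, (y : ℂ) ^ (-(b + t * Complex.I)) * F (b + t * Complex.I)‖ +
      2 * (y ^ (-b) * B) / T := by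
  have hline : Continuous fun t : ℝ => F (b + t * Complex.I) := by
    refine continuous_iff_continuousAt.mpr fun t => ?_
    exact (hF _ (by simp)).comp (f := fun t : ℝ => (b + t * Complex.I : ℂ)) (by fun_prop)
  have hFint : Integrable fun t : ℝ => F (b + t * Complex.I) :=
    (integrable_inv_one_add_sq.const_mul B).mono' hline.aestronglyMeasurable
      (Eventually.of_forall fun t => by simpa using hB (b + t * Complex.I) (by simp))
  have hbound (t : ℝ) : ‖(y : ℂ) ^ (-(b + t * Complex.I)) * F (b + t * Complex.I)‖ ≤
      y ^ (-b) * B * (1 + t ^ 2)⁻¹ := by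
    rw [norm_mul, Complex.norm_cpow_eq_rpow_re_of_pos hy, mul_assoc]
    simpa using mul_le_mul_of_nonneg_left (hB (b + t * Complex.I) (by simp))
      (Real.rpow_nonneg hy.le (-b))
  have hint : Integrable fun t : ℝ =>
      (y : ℂ) ^ (-(b + t * Complex.I)) * F (b + t * Complex.I) := by
    have hpow : Continuous fun t : ℝ => (y : ℂ) ^ (-(b + t * Complex.I)) :=
      Continuous.const_cpow (by fun_prop) (Or.inl (by exact_mod_cast hy.ne'))
    exact (integrable_inv_one_add_sq.const_mul _).mono' (hpow.mul hline).aestronglyMeasurable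
      (Eventually.of_forall hbound)
  have heq (t : ℝ) : mellin f (b + t * Complex.I) = F (b + t * Complex.I) :=
    (hmellin _ (by simp)).2
  have hinv := mellinInv_mellin_eq b f hy (hmellin b (by simp)).1
    (by simpa only [Complex.VerticalIntegrable, heq] using hFint) hf
  rw [mellinInv] at hinv
  simp only [heq, smul_eq_mul] at hinv
  have hpi : 1 / (2 * Real.pi) ≤ 1 := by
    rw [div_le_one (by positivity)]
    linarith [Real.pi_gt_three]
  rw [← hinv, norm_smul, Real.norm_of_nonneg (by positivity)]
  exact (mul_le_of_le_one_left (norm_nonneg _) hpi).trans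
    (norm_integral_le_norm_intervalIntegral_add hT hint hbound)

lemma norm_le_of_hasMellin_of_differentiableAt {f : ℝ → ℂ} {F : ℂ → ℂ} (hy : 0 < y)
    (hy₁ : y ≤ 1) (hab : a ≤ b) (hT : 0 < T) (hf : ContinuousAt f y)
    (hmellin : ∀ s : ℂ, s.re = b → HasMellin f s (F s))
    (hF : ∀ s : ℂ, s.re = b → ContinuousAt F s)
    (hB : ∀ s : ℂ, s.re = b → ‖F s‖ ≤ B * (1 + s.im ^ 2)⁻¹)
    (hdiff : ∀ s : ℂ, s.re ∈ Set.Icc a b → |s.im| ≤ T → DifferentiableAt ℂ F s)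
    (hA : ∀ s : ℂ, s.re ∈ Set.Icc a b → |s.im| ≤ T → ‖F s‖ ≤ A * (1 + s.im ^ 2)⁻¹) :
    ‖f y‖ ≤ y ^ (-a) * A * Real.pi +
      y ^ (-b) * (2 * B / T + 2 * (A * (1 + T ^ 2)⁻¹) * (b - a)) := by
  have hnorm (s : ℂ) : ‖(y : ℂ) ^ (-s) * F s‖ = y ^ (-s.re) * ‖F s‖ := by
    rw [norm_mul, Complex.norm_cpow_eq_rpow_re_of_pos hy, Complex.neg_re]
  have hleft := norm_intervalIntegral_le_mul_pi (B := y ^ (-a) * A)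
    (f := fun t : ℝ => (y : ℂ) ^ (-(a + t * Complex.I)) * F (a + t * Complex.I)) hT.le
    fun t ht => by
      rw [hnorm, mul_assoc]
      simpa using mul_le_mul_of_nonneg_left (hA (a + t * Complex.I) (by simpa using hab)
        (by simpa using ht)) (Real.rpow_nonneg hy.le (-a))
  have hshift := norm_intervalIntegral_vertical_le
    (Φ := fun s => (y : ℂ) ^ (-s) * F s) (A := y ^ (-b) * (A * (1 + T ^ 2)⁻¹)) hab hT.le
    (fun s hre him => (DifferentiableAt.const_cpow (by fun_prop)
      (Or.inl (by exact_mod_cast hy.ne'))).mul (hdiff s hre him))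
    fun s hre him => by
      rw [hnorm]
      have hpow := Real.rpow_le_rpow_of_exponent_ge hy hy₁ (neg_le_neg hre.2)
      have hFs := hA s hre him.le
      rw [← sq_abs, him] at hFs
      gcongr
  have hinv := norm_le_of_hasMellin hy hT hf hmellin hF hB
  have heq : y ^ (-b) * (2 * B / T + 2 * (A * (1 + T ^ 2)⁻¹) * (b - a)) =
      2 * (y ^ (-b) * B) / T + 2 * (y ^ (-b) * (A * (1 + T ^ 2)⁻¹)) * (b - a) := by ring
  linarith

end ContourShift

/-! ### Riesz means of the von Mangoldt coefficients -/

section PrimeRieszMean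

variable {m : ℤ} {s : ℂ} {B : ℝ}

/-- The Riesz mean of `vonMangoldtCoeff m` minus its main term; the function `ψ` of the
explicit formula. -/
noncomputable def primeRieszRemainder (m : ℤ) (y : ℝ) : ℂ :=
  rieszMean (vonMangoldtCoeff m) y - (poleOrder m : ℝ) • (poleKernel y : ℂ)

/-- The Mellin transform of `primeRieszRemainder m`, continued to the left of `Re s = 1` through
the logarithmic derivative of `regularizedL m`. -/
noncomputable def primeMellin (m : ℤ) (s : ℂ) : ℂ := -logDeriv (regularizedL m) s / (s * (s + 1))

lemma continuousAt_primeRieszRemainder (m : ℤ) {y : ℝ} (hy : 0 < y) :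
    ContinuousAt (primeRieszRemainder m) y := by
  have hmean := continuousAt_rieszMean (vonMangoldtCoeff m) hy
  have hpole := continuousAt_poleKernel hy
  unfold primeRieszRemainder
  fun_prop

lemma hasMellin_primeRieszRemainder (hm : 4 ∣ m) (hs : 1 < s.re) :
    HasMellin (primeRieszRemainder m) s (primeMellin m s) := by
  have hmean := hasMellin_rieszMean (vonMangoldtCoeff_zero_right m) (by linarith)
    (lseriesSummable_vonMangoldtCoeff m hs)
  have hpole := hasMellin_poleKernel hs
  have hconst := hasMellin_const_smul hpole.1 (poleOrder m : ℝ)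
  have hsub := hasMellin_sub hmean.1 hconst.1
  obtain ⟨hs₀, hs_add, hs_sub⟩ := ne_zero_of_one_lt_re hs
  rw [hmean.2, hconst.2, hpole.2] at hsub
  refine ⟨hsub.1, hsub.2.trans ?_⟩
  rw [primeMellin, logDeriv_regularizedL hm hs, Complex.real_smul]
  push_cast
  field_simp
  ring

lemma one_add_sq_div_four_le_norm_mul_add_one (hs : 1 / 2 ≤ s.re) :
    (1 + s.im ^ 2) / 4 ≤ ‖s * (s + 1)‖ := by
  have hsq : ‖s‖ ^ 2 = s.re ^ 2 + s.im ^ 2 := by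
    rw [Complex.sq_norm, Complex.normSq_apply]
    ring
  have hsq_add : ‖s + 1‖ ^ 2 = (s.re + 1) ^ 2 + s.im ^ 2 := by
    rw [Complex.sq_norm, Complex.normSq_apply]
    simp only [Complex.add_re, Complex.add_im, Complex.one_re, Complex.one_im]
    ring
  have hle : ‖s‖ ≤ ‖s + 1‖ := (abs_le_of_sq_le_sq' (by nlinarith) (norm_nonneg _)).2
  rw [norm_mul]
  nlinarith [sq_nonneg s.im, mul_le_mul_of_nonneg_left hle (norm_nonneg s)]

lemma norm_primeMellin_le (hs : 1 / 2 ≤ s.re) (hB : ‖logDeriv (regularizedL m) s‖ ≤ B) :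
    ‖primeMellin m s‖ ≤ 4 * B * (1 + s.im ^ 2)⁻¹ := by
  have hden := one_add_sq_div_four_le_norm_mul_add_one hs
  have : 0 < 1 + s.im ^ 2 := by positivity
  rw [primeMellin, norm_div, norm_neg, div_le_iff₀ (by linarith)]
  have hB₀ := (norm_nonneg _).trans hB
  calc _ ≤ 4 * B * (1 + s.im ^ 2)⁻¹ * ((1 + s.im ^ 2) / 4) := by field_simp; exact hB
    _ ≤ _ := by gcongr

lemma norm_poleOrder_div_sub_one_le (hs : 1 < s.re) :
    ‖(poleOrder m / (s - 1) : ℂ)‖ ≤ 1 / (s.re - 1) := by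
  have hre : s.re - 1 ≤ ‖s - 1‖ := by
    simpa using (le_abs_self _).trans (Complex.abs_re_le_norm (s - 1))
  have : 0 < s.re - 1 := by linarith
  rw [norm_div, Complex.norm_natCast]
  gcongr
  exact_mod_cast poleOrder_le_one m

lemma exists_norm_primeMellin_le_div : ∃ C > 0, ∀ m : ℤ, 4 ∣ m → ∀ s : ℂ, 1 < s.re → s.re ≤ 2 →
    ‖primeMellin m s‖ ≤ C / (s.re - 1) * (1 + s.im ^ 2)⁻¹ := by
  obtain ⟨C, hC, hL⟩ := exists_re_LSeries_vonMangoldtCoeff_zero_le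
  refine ⟨4 * (2 + C), by positivity, fun m hm s hs hs₂ => ?_⟩
  have hpos : 0 < s.re - 1 := by linarith
  rw [mul_div_assoc]
  refine norm_primeMellin_le (by linarith) ?_
  have hC_le : C ≤ C / (s.re - 1) := le_div_self hC.le hpos (by linarith)
  calc ‖logDeriv (regularizedL m) s‖
      ≤ ‖(poleOrder m / (s - 1) : ℂ)‖ + ‖LSeries (vonMangoldtCoeff m) s‖ := by
        rw [logDeriv_regularizedL hm hs]
        exact norm_sub_le _ _
    _ ≤ 1 / (s.re - 1) + (1 / (s.re - 1) + C) :=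
        add_le_add (norm_poleOrder_div_sub_one_le hs)
          ((norm_LSeries_vonMangoldtCoeff_le m hs).trans (hL s.re hs hs₂))
    _ ≤ 1 / (s.re - 1) + (1 / (s.re - 1) + C / (s.re - 1)) := by gcongr
    _ = (2 + C) / (s.re - 1) := by ring

lemma differentiableAt_primeMellin (hs : 1 / 2 < s.re) (h : regularizedL m s ≠ 0) :
    DifferentiableAt ℂ (primeMellin m) s := by
  have hden : s * (s + 1) ≠ 0 := by
    refine mul_ne_zero ?_ ?_ <;>
      (intro h; have := congrArg Complex.re h; simp at this; linarith)
  exact (differentiableAt_logDeriv_regularizedL hs h).neg.div (by fun_prop) hden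

lemma exp_neg_sq_rpow_neg (Y t : ℝ) : Real.exp (-Y ^ 2) ^ (-t) = Real.exp (Y ^ 2 * t) := by
  rw [← Real.exp_mul, neg_mul_neg]

/-- Moving the line of integration from `1 + c / Y` to `1 - c / Y`, inside the zero-free region up
to height `exp Y`, saves the factor `exp (c * Y)`. -/
lemma contour_bound_le {A c Y : ℝ} (hc : 0 < c) (hc₁ : c ≤ 1 / 120) (hA : 0 ≤ A) (hB : 0 ≤ B)
    (hY : 2 ≤ Y) :
    Real.exp (Y ^ 2 - c * Y) * (4 * (A * Y ^ 2)) * Real.pi +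
        Real.exp (Y ^ 2 + c * Y) * (2 * (B / (c / Y)) / Real.exp Y +
          2 * (4 * (A * Y ^ 2) * (1 + Real.exp Y ^ 2)⁻¹) * (1 + c / Y - (1 - c / Y))) ≤
      (20 * A + 2 * B / c) * (Y ^ 2 * Real.exp (Y ^ 2 - c * Y)) := by
  have hη₀ : 0 < c / Y := by positivity
  have hη₁ : c / Y ≤ 1 / 240 := by rw [div_le_iff₀ (by linarith)]; linarith
  have hX : 3 ≤ Real.exp Y := by linarith [Real.add_one_le_exp Y]
  have hS : Real.exp (Y ^ 2 + c * Y) ≤ Real.exp (Y ^ 2 - c * Y) * Real.exp Y := by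
    rw [← Real.exp_add, Real.exp_le_exp]
    nlinarith
  set X := Real.exp Y
  set S := Real.exp (Y ^ 2 - c * Y)
  have hηX : X * (4 * (c / Y) * (1 + X ^ 2)⁻¹) ≤ 1 := by
    rw [← mul_assoc, ← div_eq_mul_inv, div_le_one (by positivity)]
    nlinarith
  calc _ ≤ S * (4 * (A * Y ^ 2)) * Real.pi + S * X * (2 * (B / (c / Y)) / X +
        2 * (4 * (A * Y ^ 2) * (1 + X ^ 2)⁻¹) * (1 + c / Y - (1 - c / Y))) := by
        have : 0 ≤ 1 + c / Y - (1 - c / Y) := by linarith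
        gcongr
    _ = S * (4 * (A * Y ^ 2)) * Real.pi + 2 * B / c * (Y * S) +
        4 * (A * Y ^ 2) * S * (X * (4 * (c / Y) * (1 + X ^ 2)⁻¹)) := by
        field_simp
        ring
    _ ≤ S * (4 * (A * Y ^ 2)) * 4 + 2 * B / c * (Y ^ 2 * S) + 4 * (A * Y ^ 2) * S * 1 := by
        gcongr
        · exact Real.pi_le_four
        · nlinarith
    _ = _ := by ring

theorem exists_norm_primeRieszRemainder_le : ∃ c > 0, c ≤ 1 ∧ ∃ C > 0, ∀ Y : ℝ, 2 ≤ Y →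
    ∀ m : ℤ, 4 ∣ m → |(m : ℝ)| ≤ Real.exp Y →
    ‖primeRieszRemainder m (Real.exp (-Y ^ 2))‖ ≤ C * (Y ^ 2 * Real.exp (Y ^ 2 - c * Y)) := by
  obtain ⟨c, hc, hc_le, C₁, hC₁, hregion⟩ := exists_norm_logDeriv_regularizedL_le
  obtain ⟨C₂, hC₂, hright⟩ := exists_norm_primeMellin_le_div
  refine ⟨c, hc, by linarith, 20 * C₁ + 2 * C₂ / c, by positivity, fun Y hY m hm hmY => ?_⟩
  have hX : 3 ≤ Real.exp Y := by linarith [Real.add_one_le_exp Y]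
  have hregion := hregion _ hX m hm hmY
  rw [Real.log_exp] at hregion
  set η := c / Y with hη
  have hη₀ : 0 < η := by positivity
  have hη₁ : η ≤ 1 / 240 := by rw [hη, div_le_iff₀ (by linarith)]; nlinarith
  have hηY : Y ^ 2 * η = c * Y := by rw [hη]; field_simp
  have hnear {s : ℂ} (hs : s.re ∈ Set.Icc (1 - η) (1 + η)) : |s.re - 1| ≤ η :=
    abs_le.mpr ⟨by linarith [hs.1], by linarith [hs.2]⟩
  have hinv := norm_le_of_hasMellin_of_differentiableAt (f := primeRieszRemainder m)
    (F := primeMellin m) (a := 1 - η) (b := 1 + η) (A := 4 * (C₁ * Y ^ 2)) (B := C₂ / η)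
    (Real.exp_pos (-Y ^ 2)) (Real.exp_le_one_iff.mpr (by nlinarith)) (by linarith)
    (Real.exp_pos Y) (continuousAt_primeRieszRemainder m (Real.exp_pos _))
    (fun s hs => hasMellin_primeRieszRemainder hm (by linarith))
    (fun s hs => (differentiableAt_primeMellin (by linarith)
      (regularizedL_ne_zero_of_one_lt_re hm (by linarith))).continuousAt)
    (fun s hs => by simpa [hs] using hright m hm s (by linarith) (by linarith))
    (fun s hre him => differentiableAt_primeMellin (by linarith [hre.1])
      (hregion s him (hnear hre)).1)
    (fun s hre him => norm_primeMellin_le (by linarith [hre.1]) (hregion s him (hnear hre)).2)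
  rw [exp_neg_sq_rpow_neg, exp_neg_sq_rpow_neg, mul_sub (Y ^ 2), mul_add (Y ^ 2), hηY,
    mul_one] at hinv
  exact hinv.trans (contour_bound_le hc (by linarith) hC₁.le hC₂.le hY)

end PrimeRieszMean

/-! ### An inequality of Erdős–Turán type -/

section Discrepancy

open Filter Topology

variable {ι : Type*} {S : Finset ι} {w θ : ι → ℝ} {a b h t x B ε : ℝ} {M : ℕ}

/-- The superposition of the second Bernoulli functions centred at the points `θ i`, with weights
`w i`. Its second derivative is `2 * (∑ i ∈ S, w i)` minus twice the point masses `w i` at `θ i`, so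
its differences measure how far the `θ i` are from being equidistributed. -/
noncomputable def bernoulliSum (S : Finset ι) (w θ : ι → ℝ) (t : ℝ) : ℝ :=
  ∑ i ∈ S, w i * bernoulliFun 2 |t - θ i|

/-- The antiderivative of the counting function `t ↦ ∑ i ∈ S with θ i ≤ t, w i`. -/
noncomputable def rampSum (S : Finset ι) (w θ : ι → ℝ) (t : ℝ) : ℝ :=
  ∑ i ∈ S, w i * max 0 (t - θ i)

lemma bernoulliSum_sub_bernoulliSum_add (S : Finset ι) (w θ : ι → ℝ) (t h : ℝ) :
    bernoulliSum S w θ t - bernoulliSum S w θ (t + h) =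
      2 * (rampSum S w θ (t + h) - rampSum S w θ t) -
        ((∑ i ∈ S, w i) * (2 * t * h + h ^ 2) + (∑ i ∈ S, w i * (1 - 2 * θ i)) * h) := by
  have habs (v : ℝ) : |v| = 2 * max 0 v - v := by
    rcases le_total 0 v with hv | hv
    · rw [abs_of_nonneg hv, max_eq_right hv]; ring
    · rw [abs_of_nonpos hv, max_eq_left hv]; ring
  simp only [bernoulliSum, rampSum, Finset.sum_mul, ← Finset.sum_sub_distrib,
    ← Finset.sum_add_distrib, Finset.mul_sum, bernoulliFun_two, sq_abs]
  refine Finset.sum_congr rfl fun i _ => ?_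
  rw [habs, habs]
  ring

lemma mul_sum_filter_le_le_rampSum_sub (hw : ∀ i ∈ S, 0 ≤ w i) (hh : 0 ≤ h) (t : ℝ) :
    h * ∑ i ∈ S with θ i ≤ t, w i ≤ rampSum S w θ (t + h) - rampSum S w θ t := by
  rw [rampSum, rampSum, Finset.sum_filter, Finset.mul_sum, ← Finset.sum_sub_distrib]
  refine Finset.sum_le_sum fun i hi => ?_
  rw [← mul_sub, mul_comm h, ite_zero_mul]
  split_ifs with hθ
  · rw [max_eq_right (by linarith), max_eq_right (by linarith)]
    exact mul_le_mul_of_nonneg_left (by linarith) (hw i hi)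
  · exact mul_nonneg (hw i hi) (sub_nonneg.mpr (max_le_max le_rfl (by linarith)))

lemma rampSum_sub_le_mul_sum_filter_lt (hw : ∀ i ∈ S, 0 ≤ w i) (hh : 0 ≤ h) (t : ℝ) :
    rampSum S w θ (t + h) - rampSum S w θ t ≤ h * ∑ i ∈ S with θ i < t + h, w i := by
  rw [rampSum, rampSum, Finset.sum_filter, Finset.mul_sum, ← Finset.sum_sub_distrib]
  refine Finset.sum_le_sum fun i hi => ?_
  rw [← mul_sub, mul_comm h, ite_zero_mul]
  split_ifs with hθ
  · rw [max_eq_right (by linarith)]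
    exact mul_le_mul_of_nonneg_left (by linarith [le_max_right 0 (t - θ i)]) (hw i hi)
  · rw [max_eq_left (by linarith), max_eq_left (by linarith), sub_self, mul_zero]

lemma abs_rampSum_sub_le (hQ : ∀ t ∈ Set.Icc (0 : ℝ) 1, |bernoulliSum S w θ t| ≤ ε) (hh : 0 ≤ h)
    (ht : 0 ≤ t) (hth : t + h ≤ 1) :
    |2 * (rampSum S w θ (t + h) - rampSum S w θ t) -
      ((∑ i ∈ S, w i) * (2 * t * h + h ^ 2) + (∑ i ∈ S, w i * (1 - 2 * θ i)) * h)| ≤ 2 * ε := by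
  rw [← bernoulliSum_sub_bernoulliSum_add, two_mul]
  exact (abs_sub _ _).trans
    (add_le_add (hQ t ⟨ht, by linarith⟩) (hQ (t + h) ⟨by linarith, hth⟩))

lemma abs_sum_mul_one_sub_two_mul_le (hw : ∀ i ∈ S, 0 ≤ w i)
    (hQ : ∀ t ∈ Set.Icc (0 : ℝ) 1, |bernoulliSum S w θ t| ≤ ε) (hh : 0 < h) (hh₁ : h ≤ 1) :
    |∑ i ∈ S, w i * (1 - 2 * θ i)| ≤ (∑ i ∈ S, w i) * h + 2 * (ε / h) := by
  have hε : ε / h * h = ε := div_mul_cancel₀ ε hh.ne'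
  rw [abs_le]
  constructor
  · have hramp := (abs_le.1 (abs_rampSum_sub_le hQ hh.le le_rfl (by linarith))).2
    have hcount := mul_sum_filter_le_le_rampSum_sub (θ := θ) hw hh.le 0
    have hnonneg : 0 ≤ ∑ i ∈ S with θ i ≤ 0, w i :=
      Finset.sum_nonneg fun i hi => hw i (Finset.mem_filter.mp hi).1
    refine le_of_mul_le_mul_right ?_ hh
    nlinarith
  · have hramp := (abs_le.1 (abs_rampSum_sub_le hQ hh.le (t := 1 - h) (by linarith)
      (by linarith))).1
    have hcount := rampSum_sub_le_mul_sum_filter_lt (θ := θ) hw hh.le (1 - h)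
    have hle : ∑ i ∈ S with θ i < 1 - h + h, w i ≤ ∑ i ∈ S, w i :=
      Finset.sum_le_sum_of_subset_of_nonneg (Finset.filter_subset _ _) fun i hi _ => hw i hi
    refine le_of_mul_le_mul_right ?_ hh
    nlinarith

lemma sum_filter_le_le (hw : ∀ i ∈ S, 0 ≤ w i)
    (hQ : ∀ t ∈ Set.Icc (0 : ℝ) 1, |bernoulliSum S w θ t| ≤ ε) (hh : 0 < h) (hh₁ : h ≤ 1)
    (ht : 0 ≤ t) :
    ∑ i ∈ S with θ i ≤ t, w i ≤ (∑ i ∈ S, w i) * t + ((∑ i ∈ S, w i) * h + 2 * (ε / h)) := by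
  have hε : ε / h * h = ε := div_mul_cancel₀ ε hh.ne'
  by_cases hth : t + h ≤ 1
  · have hramp := (abs_le.1 (abs_rampSum_sub_le hQ hh.le ht hth)).2
    have hcount := mul_sum_filter_le_le_rampSum_sub (θ := θ) hw hh.le t
    have hmean := (abs_le.1 (abs_sum_mul_one_sub_two_mul_le hw hQ hh hh₁)).2
    refine le_of_mul_le_mul_right ?_ hh
    nlinarith
  · have hW : 0 ≤ ∑ i ∈ S, w i := Finset.sum_nonneg hw
    have hε₀ : 0 ≤ ε / h := div_nonneg ((abs_nonneg _).trans (hQ 0 (by simp))) hh.le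
    have hle : ∑ i ∈ S with θ i ≤ t, w i ≤ ∑ i ∈ S, w i :=
      Finset.sum_le_sum_of_subset_of_nonneg (Finset.filter_subset _ _) fun i hi _ => hw i hi
    nlinarith

lemma le_sum_filter_lt (hw : ∀ i ∈ S, 0 ≤ w i)
    (hQ : ∀ t ∈ Set.Icc (0 : ℝ) 1, |bernoulliSum S w θ t| ≤ ε) (hh : 0 < h) (hh₁ : h ≤ 1)
    (ht : t ≤ 1) :
    (∑ i ∈ S, w i) * t - ((∑ i ∈ S, w i) * h + 2 * (ε / h)) ≤ ∑ i ∈ S with θ i < t, w i := by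
  have hε : ε / h * h = ε := div_mul_cancel₀ ε hh.ne'
  by_cases hth : h ≤ t
  · have hramp := (abs_le.1 (abs_rampSum_sub_le hQ hh.le (sub_nonneg.mpr hth) (by linarith))).1
    have hcount := rampSum_sub_le_mul_sum_filter_lt (θ := θ) hw hh.le (t - h)
    have hmean := (abs_le.1 (abs_sum_mul_one_sub_two_mul_le hw hQ hh hh₁)).1
    rw [sub_add_cancel] at hramp hcount
    refine le_of_mul_le_mul_right ?_ hh
    nlinarith
  · have hW : 0 ≤ ∑ i ∈ S, w i := Finset.sum_nonneg hw
    have hε₀ : 0 ≤ ε / h := div_nonneg ((abs_nonneg _).trans (hQ 0 (by simp))) hh.le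
    have hnonneg : 0 ≤ ∑ i ∈ S with θ i < t, w i :=
      Finset.sum_nonneg fun i hi => hw i (Finset.mem_filter.mp hi).1
    nlinarith

lemma abs_sum_filter_sub_le_of_abs_bernoulliSum_le (hw : ∀ i ∈ S, 0 ≤ w i)
    (hQ : ∀ t ∈ Set.Icc (0 : ℝ) 1, |bernoulliSum S w θ t| ≤ ε) (hh : 0 < h) (hh₁ : h ≤ 1)
    (ha : 0 ≤ a) (hab : a ≤ b) (hb : b ≤ 1) :
    |∑ i ∈ S with a ≤ θ i ∧ θ i ≤ b, w i - (∑ i ∈ S, w i) * (b - a)| ≤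
      2 * ((∑ i ∈ S, w i) * h + 2 * (ε / h)) := by
  have hsplit : ∑ i ∈ S with a ≤ θ i ∧ θ i ≤ b, w i =
      ∑ i ∈ S with θ i ≤ b, w i - ∑ i ∈ S with θ i < a, w i := by
    simp only [Finset.sum_filter, ← Finset.sum_sub_distrib]
    exact Finset.sum_congr rfl fun i _ => by split_ifs <;> grind
  have hmono (t : ℝ) : ∑ i ∈ S with θ i < t, w i ≤ ∑ i ∈ S with θ i ≤ t, w i :=
    Finset.sum_le_sum_of_subset_of_nonneg
      (Finset.monotone_filter_right _ fun _ _ => le_of_lt)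
      fun i hi _ => hw i (Finset.mem_filter.mp hi).1
  rw [hsplit, abs_le]
  constructor <;>
    linarith [hmono a, hmono b, sum_filter_le_le hw hQ hh hh₁ ha,
      sum_filter_le_le hw hQ hh hh₁ (ha.trans hab), le_sum_filter_lt hw hQ hh hh₁ hb,
      le_sum_filter_lt hw hQ hh hh₁ (hab.trans hb)]

lemma hasSum_cos_eq_bernoulliFun_abs (hx : |x| ≤ 1) :
    HasSum (fun n : ℕ => 1 / (n : ℝ) ^ 2 * Real.cos (2 * Real.pi * n * x))
      (Real.pi ^ 2 * bernoulliFun 2 |x|) := by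
  have h := hasSum_one_div_nat_pow_mul_cos one_ne_zero (x := |x|) ⟨abs_nonneg x, hx⟩
  have hcos (n : ℕ) :
      Real.cos (2 * Real.pi * n * |x|) = Real.cos (2 * Real.pi * n * x) := by
    rw [← Real.cos_abs (2 * Real.pi * n * x), abs_mul,
      abs_of_nonneg (by positivity : 0 ≤ 2 * Real.pi * n)]
  simp only [hcos] at h
  simp only [mul_one, Nat.factorial_two] at h
  convert h using 1
  push_cast [bernoulliFun]
  ring

lemma abs_sum_mul_cos_le_norm (S : Finset ι) (w θ : ι → ℝ) (t : ℝ) (n : ℕ) :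
    |∑ i ∈ S, w i * Real.cos (2 * Real.pi * n * (t - θ i))| ≤
      ‖∑ i ∈ S, w i * Complex.exp (2 * Real.pi * n * θ i * Complex.I)‖ := by
  have heq : ∑ i ∈ S, w i * Real.cos (2 * Real.pi * n * (t - θ i)) =
      (Complex.exp ((-(2 * Real.pi * n * t) : ℝ) * Complex.I) *
        ∑ i ∈ S, w i * Complex.exp (2 * Real.pi * n * θ i * Complex.I)).re := by
    rw [Finset.mul_sum, Complex.re_sum]
    refine Finset.sum_congr rfl fun i _ => ?_
    rw [mul_left_comm, ← Complex.exp_add, Complex.re_ofReal_mul, ← Real.cos_neg,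
      ← Complex.exp_ofReal_mul_I_re]
    push_cast
    ring_nf
  rw [heq]
  refine (Complex.abs_re_le_norm _).trans_eq ?_
  rw [norm_mul, Complex.norm_exp_ofReal_mul_I, one_mul]

lemma norm_sum_mul_exp_le (hw : ∀ i ∈ S, 0 ≤ w i) (n : ℕ) :
    ‖∑ i ∈ S, w i * Complex.exp (2 * Real.pi * n * θ i * Complex.I)‖ ≤ ∑ i ∈ S, w i := by
  refine norm_sum_le_of_le _ fun i hi => ?_
  have hexp : ‖Complex.exp (2 * Real.pi * n * θ i * Complex.I)‖ = 1 := by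
    exact_mod_cast Complex.norm_exp_ofReal_mul_I (2 * Real.pi * n * θ i)
  rw [norm_mul, hexp, mul_one, Complex.norm_real, Real.norm_of_nonneg (hw i hi)]

lemma sum_range_ite_lt_one_div_sq_le (hM : 0 < M) (N : ℕ) :
    ∑ n ∈ Finset.range N, (if M < n then 1 / (n : ℝ) ^ 2 else 0) ≤ 1 / (M : ℝ) := by
  have hsub : {n ∈ Finset.range N | M < n} ⊆ Finset.Ioc M (max M N) := fun n hn => by
    simp only [Finset.mem_filter, Finset.mem_range, Finset.mem_Ioc] at hn ⊢
    omega
  rw [← Finset.sum_filter]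
  simp only [one_div]
  refine (Finset.sum_le_sum_of_subset_of_nonneg hsub fun _ _ _ => by positivity).trans
    ((sum_Ioc_inv_sq_le_sub hM.ne' (le_max_left M N)).trans (sub_le_self _ (by positivity)))

lemma abs_bernoulliSum_le (hw : ∀ i ∈ S, 0 ≤ w i) (hθ : ∀ i ∈ S, θ i ∈ Set.Icc (0 : ℝ) 1)
    (hM : 0 < M) (hB : ∀ n : ℕ, 0 < n → n ≤ M →
      ‖∑ i ∈ S, w i * Complex.exp (2 * Real.pi * n * θ i * Complex.I)‖ ≤ B)
    (ht : t ∈ Set.Icc (0 : ℝ) 1) :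
    |bernoulliSum S w θ t| ≤ B + (∑ i ∈ S, w i) / M := by
  set W := ∑ i ∈ S, w i
  have hW : 0 ≤ W := Finset.sum_nonneg hw
  have hB₀ : 0 ≤ B := (norm_nonneg _).trans (hB M hM le_rfl)
  have hcoeff (n : ℕ) : |1 / (n : ℝ) ^ 2 * ∑ i ∈ S, w i * Real.cos (2 * Real.pi * n * (t - θ i))|
      ≤ B * (1 / (n : ℝ) ^ 2) + W * (if M < n then 1 / (n : ℝ) ^ 2 else 0) := by
    rcases n.eq_zero_or_pos with rfl | hn
    · simp
    have hcos := abs_sum_mul_cos_le_norm S w θ t n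
    rw [abs_mul, abs_of_nonneg (by positivity)]
    split_ifs with hnM
    · have : 0 ≤ B * (1 / (n : ℝ) ^ 2) := by positivity
      rw [mul_comm W]
      linarith [mul_le_mul_of_nonneg_left (hcos.trans (norm_sum_mul_exp_le hw n))
        (by positivity : 0 ≤ 1 / (n : ℝ) ^ 2)]
    · rw [mul_zero, add_zero, mul_comm B]
      gcongr
      exact hcos.trans (hB n hn (not_lt.mp hnM))
  have hsum : HasSum
      (fun n : ℕ => 1 / (n : ℝ) ^ 2 * ∑ i ∈ S, w i * Real.cos (2 * Real.pi * n * (t - θ i)))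
      (Real.pi ^ 2 * bernoulliSum S w θ t) := by
    simp only [bernoulliSum, Finset.mul_sum, mul_left_comm _ (w _)]
    refine hasSum_sum fun i hi => (hasSum_cos_eq_bernoulliFun_abs ?_).mul_left (w i)
    exact abs_le.mpr ⟨by linarith [ht.1, (hθ i hi).2], by linarith [ht.2, (hθ i hi).1]⟩
  have hlimit : |Real.pi ^ 2 * bernoulliSum S w θ t| ≤ B * (Real.pi ^ 2 / 6) + W * (1 / M) := by
    refine le_of_tendsto hsum.tendsto_sum_nat.abs (Eventually.of_forall fun N => ?_)
    refine (Finset.abs_sum_le_sum_abs _ _).trans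
      ((Finset.sum_le_sum fun n _ => hcoeff n).trans ?_)
    rw [Finset.sum_add_distrib, ← Finset.mul_sum, ← Finset.mul_sum]
    gcongr
    · exact sum_le_hasSum _ (fun _ _ => by positivity) hasSum_zeta_two
    · exact sum_range_ite_lt_one_div_sq_le hM N
  have hpi : 1 ≤ Real.pi ^ 2 := by nlinarith [Real.pi_gt_three]
  rw [abs_mul, abs_of_nonneg (by positivity)] at hlimit
  refine le_of_mul_le_mul_left (hlimit.trans ?_) (by positivity : 0 < Real.pi ^ 2)
  have : 0 ≤ W / M := by positivity
  rw [mul_one_div]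
  nlinarith [mul_nonneg hB₀ (sq_nonneg Real.pi)]

theorem abs_sum_filter_sub_mul_le (hw : ∀ i ∈ S, 0 ≤ w i) (hθ : ∀ i ∈ S, θ i ∈ Set.Icc (0 : ℝ) 1)
    (hM : 0 < M) (hB : ∀ n : ℕ, 0 < n → n ≤ M →
      ‖∑ i ∈ S, w i * Complex.exp (2 * Real.pi * n * θ i * Complex.I)‖ ≤ B)
    (hh : 0 < h) (hh₁ : h ≤ 1) (ha : 0 ≤ a) (hab : a ≤ b) (hb : b ≤ 1) :
    |∑ i ∈ S with a ≤ θ i ∧ θ i ≤ b, w i - (∑ i ∈ S, w i) * (b - a)| ≤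
      2 * ((∑ i ∈ S, w i) * h + 2 * ((B + (∑ i ∈ S, w i) / M) / h)) :=
  abs_sum_filter_sub_le_of_abs_bernoulliSum_le hw
    (fun _ ht => abs_bernoulliSum_le hw hθ hM hB ht) hh hh₁ ha hab hb

end Discrepancy

/-! ### Smoothed von Mangoldt sums over sectors -/

section SmoothedSector

variable {m : ℤ} {w : ℂ} {y c Y : ℝ} {N n : ℕ} {α β : ℝ} {z : GaussianInt}

lemma arg2pi_mem_Icc (w : ℂ) : arg2pi w ∈ Set.Icc 0 (2 * Real.pi) := by
  have := Complex.neg_pi_lt_arg w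
  have := Complex.arg_le_pi w
  rw [arg2pi]
  split_ifs <;> constructor <;> linarith

lemma exp_arg2pi_mul_I (w : ℂ) :
    Complex.exp (arg2pi w * Complex.I) = Complex.exp (w.arg * Complex.I) := by
  rw [arg2pi]
  split_ifs
  · rfl
  · push_cast
    rw [add_mul, Complex.exp_periodic]

lemma angularChar_eq_exp (m : ℤ) (hw : w ≠ 0) :
    angularChar m w = Complex.exp (m * (arg2pi w * Complex.I)) := by
  rw [angularChar, Complex.exp_int_mul, exp_arg2pi_mul_I]
  congr 1
  rw [div_eq_iff (by simpa using hw), mul_comm, Complex.norm_mul_exp_arg_mul_I]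

lemma angularChar_I (m : ℤ) : angularChar m Complex.I = Complex.I ^ m := by
  simp [angularChar]

-- Multiplication by `i` permutes the ball and multiplies the character by `i ^ m ≠ 1`.
lemma sum_normBall_mul_angularChar_eq_zero (hm : ¬ 4 ∣ m) {f : GaussianInt → ℂ}
    (hf : ∀ z, f (Zsqrtd.sqrtd * z) = f z) (N : ℕ) :
    ∑ z ∈ normBall N, f z * angularChar m z = 0 := by
  have hmem (z : GaussianInt) : z ∈ normBall N ↔ Zsqrtd.sqrtd * z ∈ normBall N := by
    rw [mem_normBall, mem_normBall, map_mul, absNorm_eq_one_iff.mpr isUnit_sqrtd, one_mul, ne_eq,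
      ne_eq, isUnit_sqrtd.mul_right_eq_zero]
  have hI : ((Zsqrtd.sqrtd : GaussianInt) : ℂ) = Complex.I := by simp [GaussianInt.toComplex_def]
  have hinvariant : ∑ z ∈ normBall N, f z * angularChar m z =
      Complex.I ^ m * ∑ z ∈ normBall N, f z * angularChar m z := by
    rw [Finset.mul_sum]
    refine (Finset.sum_equiv isUnit_sqrtd.unit.mulLeft hmem fun z _ => ?_).symm
    rw [Units.mulLeft_apply, IsUnit.unit_spec, hf, GaussianInt.toComplex_mul, angularChar_mul, hI,
      angularChar_I, mul_left_comm]
  have hne : Complex.I ^ m ≠ 1 := mt (Complex.isPrimitiveRoot_I.zpow_eq_one_iff_dvd m).mp hm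
  exact (mul_eq_zero.mp ((one_sub_mul _ _).trans (sub_eq_zero.mpr hinvariant))).resolve_left
    (sub_ne_zero.mpr hne.symm)

/-- The von Mangoldt function with the weight `max 0 (1 - |z|² y)` of the Riesz means. -/
noncomputable def rieszVonMangoldt (y : ℝ) (z : GaussianInt) : ℝ :=
  vonMangoldt z * max 0 (1 - absNorm z * y)

lemma rieszVonMangoldt_nonneg (y : ℝ) (z : GaussianInt) : 0 ≤ rieszVonMangoldt y z :=
  mul_nonneg (vonMangoldt_nonneg z) (le_max_left _ _)

lemma rieszVonMangoldt_sqrtd_mul (y : ℝ) (z : GaussianInt) :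
    rieszVonMangoldt y (Zsqrtd.sqrtd * z) = rieszVonMangoldt y z := by
  have h : Associated (Zsqrtd.sqrtd * z) z := (associated_isUnit_mul_left_iff isUnit_sqrtd).mpr .rfl
  rw [rieszVonMangoldt, rieszVonMangoldt, vonMangoldt_eq_of_associated h,
    absNorm_eq_of_associated h]

lemma sum_normBall_rieszVonMangoldt_mul_angularChar (m : ℤ) (hy : 0 < y) (hN : 1 ≤ N * y) :
    ∑ z ∈ normBall N, rieszVonMangoldt y z * angularChar m z =
      4 * rieszMean (vonMangoldtCoeff m) y := by
  rw [rieszMean_eq_sum _ hy hN, vonMangoldtCoeff,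
    sum_idealCoeff_mul _ (fun n : ℕ => ((max 0 (1 - n * y) : ℝ) : ℂ)), ← mul_assoc,
    mul_one_div_cancel (by norm_num), one_mul]
  refine Finset.sum_congr rfl fun z _ => ?_
  rw [rieszVonMangoldt]
  push_cast
  ring

lemma sq_mul_exp_le (hc : 0 < c) (hY : 0 ≤ Y) :
    Y ^ 2 * Real.exp (Y ^ 2 - c * Y) ≤ 8 / c ^ 2 * Real.exp (Y ^ 2 - c / 2 * Y) := by
  have hquad := Real.quadratic_le_exp_of_nonneg (by positivity : 0 ≤ c / 2 * Y)
  have hY_sq : Y ^ 2 ≤ 8 / c ^ 2 * Real.exp (c / 2 * Y) := calc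
    Y ^ 2 = 8 / c ^ 2 * ((c / 2 * Y) ^ 2 / 2) := by field_simp; norm_num
    _ ≤ _ := by
      gcongr
      linarith [(by positivity : 0 ≤ c / 2 * Y)]
  have hexp : Y ^ 2 - c / 2 * Y = c / 2 * Y + (Y ^ 2 - c * Y) := by ring
  rw [hexp, Real.exp_add, ← mul_assoc]
  gcongr

lemma four_mul_rieszMean_vonMangoldtCoeff_sub (m : ℤ) (y : ℝ) :
    4 * rieszMean (vonMangoldtCoeff m) y - (poleOrder m * (2 / y) : ℝ) =
      4 * primeRieszRemainder m y + (poleOrder m * (2 * (2 * poleKernel y - 1 / y)) : ℝ) := by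
  rw [primeRieszRemainder, Complex.real_smul]
  push_cast
  ring

theorem exists_norm_sum_rieszVonMangoldt_mul_angularChar_sub_le :
    ∃ c > 0, c ≤ 1 / 2 ∧ ∃ C > 0, ∀ Y : ℝ, 2 ≤ Y → ∀ N : ℕ, Real.exp (Y ^ 2) ≤ N →
      ∀ m : ℤ, |(m : ℝ)| ≤ Real.exp Y →
        ‖∑ z ∈ normBall N, rieszVonMangoldt (Real.exp (-Y ^ 2)) z * angularChar m z -
          (poleOrder m * (2 * Real.exp (Y ^ 2)) : ℝ)‖ ≤ C * Real.exp (Y ^ 2 - c * Y) := by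
  obtain ⟨c, hc, hc₁, C, hC, hbound⟩ := exists_norm_primeRieszRemainder_le
  refine ⟨c / 2, by positivity, by linarith, 4 * (C * (8 / c ^ 2)) + 4, by positivity,
    fun Y hY N hN m hm => ?_⟩
  set y := Real.exp (-Y ^ 2) with hy_def
  have hy : 0 < y := Real.exp_pos _
  have hy₁ : y ≤ 1 := Real.exp_le_one_iff.mpr (neg_nonpos.mpr (sq_nonneg Y))
  have hexp : Real.exp (Y ^ 2) = 1 / y := by rw [hy_def, Real.exp_neg, one_div, inv_inv]
  by_cases hdvd : 4 ∣ m
  · have hpole : ‖((poleOrder m * (2 * (2 * poleKernel y - 1 / y)) : ℝ) : ℂ)‖ ≤ 1 * (2 * 2) := by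
      rw [Complex.norm_real, norm_mul, norm_mul, Real.norm_natCast, Real.norm_two]
      gcongr
      · exact_mod_cast poleOrder_le_one m
      · exact abs_two_mul_poleKernel_sub_le hy hy₁
    have hone : 1 ≤ Real.exp (Y ^ 2 - c / 2 * Y) := Real.one_le_exp (by nlinarith)
    have hrem := (hbound Y hY m hdvd hm).trans
      (mul_le_mul_of_nonneg_left (sq_mul_exp_le hc (by linarith)) hC.le)
    rw [sum_normBall_rieszVonMangoldt_mul_angularChar m hy
      (by rwa [hexp, div_le_iff₀ hy] at hN), hexp, mul_one_div,
      four_mul_rieszMean_vonMangoldtCoeff_sub]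
    refine (norm_add_le _ _).trans ?_
    rw [norm_mul, Complex.norm_ofNat]
    linarith
  · have hm₀ : m ≠ 0 := fun h => hdvd (h ▸ dvd_zero 4)
    rw [sum_normBall_mul_angularChar_eq_zero hdvd
      fun z => congrArg Complex.ofReal (rieszVonMangoldt_sqrtd_mul y z), poleOrder_of_ne_zero hm₀]
    simp only [CharP.cast_eq_zero, zero_mul, Complex.ofReal_zero, sub_zero, norm_zero]
    positivity

open scoped Classical in
/-- The nonzero Gaussian integers of norm at most `n` whose argument lies in `[α, β]`. -/
noncomputable def sectorBall (α β : ℝ) (n : ℕ) : Finset GaussianInt :=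
  {z ∈ normBall n | α ≤ arg2pi z ∧ arg2pi z ≤ β}

lemma mem_sectorBall :
    z ∈ sectorBall α β n ↔ z ∈ normBall n ∧ α ≤ arg2pi z ∧ arg2pi z ≤ β := by
  simp [sectorBall]

lemma abs_sum_sectorBall_sub_le {f : GaussianInt → ℝ} {M : ℕ} {B h : ℝ} (hf : ∀ z, 0 ≤ f z)
    (hM : 0 < M) (hB : ∀ n : ℕ, 0 < n → n ≤ M →
      ‖∑ z ∈ normBall N, f z * angularChar n z‖ ≤ B)
    (hh : 0 < h) (hh₁ : h ≤ 1) (hα : 0 ≤ α) (hαβ : α ≤ β) (hβ : β ≤ 2 * Real.pi) :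
    |∑ z ∈ sectorBall α β N, f z - (∑ z ∈ normBall N, f z) * ((β - α) / (2 * Real.pi))| ≤
      2 * ((∑ z ∈ normBall N, f z) * h + 2 * ((B + (∑ z ∈ normBall N, f z) / M) / h)) := by
  have hpi := Real.two_pi_pos
  have hexp (n : ℕ) : ∑ z ∈ normBall N,
      f z * Complex.exp (2 * Real.pi * n * (arg2pi z / (2 * Real.pi) : ℝ) * Complex.I) =
      ∑ z ∈ normBall N, f z * angularChar n z := by
    refine Finset.sum_congr rfl fun z hz => ?_
    rw [angularChar_eq_exp n (toComplex_ne_zero (mem_normBall.mp hz).1)]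
    congr 2
    push_cast
    field_simp
  have hET := abs_sum_filter_sub_mul_le (S := normBall N) (θ := fun z => arg2pi z / (2 * Real.pi))
    (a := α / (2 * Real.pi)) (b := β / (2 * Real.pi)) (fun z _ => hf z)
    (fun z _ => ⟨div_nonneg (arg2pi_mem_Icc z).1 hpi.le,
      (div_le_one hpi).mpr (arg2pi_mem_Icc z).2⟩)
    hM (fun n hn hnM => (congrArg norm (hexp n)).trans_le (hB n hn hnM)) hh hh₁
    (div_nonneg hα hpi.le) (by gcongr) ((div_le_one hpi).mpr hβ)
  simp only [div_le_div_iff_of_pos_right hpi, ← sub_div] at hET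
  rwa [sectorBall]

lemma abs_sum_sectorBall_sub_div_pi_mul_le {f : GaussianInt → ℝ} {M : ℕ} {C E q : ℝ}
    (hf : ∀ z, 0 ≤ f z) (hM : 0 < M) (hC : 0 ≤ C) (hE : 0 ≤ E) (hq : 0 < q) (hq₁ : q ≤ 1)
    (hqM : 1 ≤ 2 * (q ^ 2 * M)) (hmass : |∑ z ∈ normBall N, f z - 2 * E| ≤ C * (E * q ^ 2))
    (hB : ∀ n : ℕ, 0 < n → n ≤ M → ‖∑ z ∈ normBall N, f z * angularChar n z‖ ≤ C * (E * q ^ 2))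
    (hα : 0 ≤ α) (hαβ : α ≤ β) (hβ : β ≤ 2 * Real.pi) :
    |∑ z ∈ sectorBall α β N, f z - (β - α) / Real.pi * E| ≤ (20 + 15 * C) * (E * q) := by
  have hET := abs_sum_sectorBall_sub_le hf hM hB hq hq₁ hα hαβ hβ
  set W := ∑ z ∈ normBall N, f z
  have hq_sq : q ^ 2 ≤ q := pow_le_of_le_one hq.le hq₁ two_ne_zero
  have hW : W ≤ (2 + C) * E := by
    have : C * (E * q ^ 2) ≤ C * (E * 1) := by gcongr; exact hq_sq.trans hq₁
    linarith [(abs_le.mp hmass).2]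
  have hWM : W / M ≤ 2 * (2 + C) * (E * q ^ 2) := by
    rw [div_le_iff₀ (Nat.cast_pos.mpr hM)]
    calc W ≤ (2 + C) * E * 1 := by linarith
      _ ≤ (2 + C) * E * (2 * (q ^ 2 * M)) := by gcongr
      _ = 2 * (2 + C) * (E * q ^ 2) * M := by ring
  have hτ : (β - α) / (2 * Real.pi) ≤ 1 := (div_le_one Real.two_pi_pos).mpr (by linarith)
  have hτ₀ : 0 ≤ (β - α) / (2 * Real.pi) := div_nonneg (by linarith) Real.two_pi_pos.le
  have hsplit (s : ℝ) : s - (β - α) / Real.pi * E =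
      (s - W * ((β - α) / (2 * Real.pi))) + (W - 2 * E) * ((β - α) / (2 * Real.pi)) := by
    field_simp
    ring
  rw [hsplit]
  calc _ ≤ 2 * (W * q + 2 * ((C * (E * q ^ 2) + W / M) / q)) + C * (E * q ^ 2) * 1 := by
        refine (abs_add_le _ _).trans (add_le_add hET ?_)
        rw [abs_mul, abs_of_nonneg hτ₀]
        gcongr
    _ ≤ 2 * ((2 + C) * E * q + 2 * ((C * (E * q ^ 2) + 2 * (2 + C) * (E * q ^ 2)) / q)) +
        C * (E * q) * 1 := by gcongr
    _ = (20 + 15 * C) * (E * q) := by field_simp; ring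

theorem exists_abs_sum_sectorBall_rieszVonMangoldt_sub_le :
    ∃ c > 0, c ≤ 1 ∧ ∃ C > 0, ∀ Y : ℝ, 2 ≤ Y → ∀ N : ℕ, Real.exp (Y ^ 2) ≤ N → ∀ α β : ℝ,
      0 ≤ α → α ≤ β → β ≤ 2 * Real.pi →
        |∑ z ∈ sectorBall α β N, rieszVonMangoldt (Real.exp (-Y ^ 2)) z -
          (β - α) / Real.pi * Real.exp (Y ^ 2)| ≤ C * Real.exp (Y ^ 2 - c * Y) := by
  obtain ⟨c, hc, hc₁, C, hC, hbound⟩ := exists_norm_sum_rieszVonMangoldt_mul_angularChar_sub_le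
  refine ⟨c / 2, by positivity, by linarith, 20 + 15 * C, by positivity,
    fun Y hY N hN α β hα hαβ hβ => ?_⟩
  have hbound := hbound Y hY N hN
  set f := rieszVonMangoldt (Real.exp (-Y ^ 2))
  set q := Real.exp (-(c / 2 * Y)) with hq_def
  have hq_sq : Real.exp (Y ^ 2 - c * Y) = Real.exp (Y ^ 2) * q ^ 2 := by
    rw [← Real.exp_nat_mul, ← Real.exp_add]
    ring_nf
  have hqM : 1 ≤ 2 * (q ^ 2 * ⌊Real.exp Y⌋₊) := by
    have hM : Real.exp Y / 2 ≤ ⌊Real.exp Y⌋₊ := by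
      linarith [Nat.sub_one_lt_floor (Real.exp Y), Real.add_one_le_exp Y]
    calc 1 ≤ q ^ 2 * Real.exp Y := by
          rw [← Real.exp_nat_mul, ← Real.exp_add]
          refine Real.one_le_exp ?_
          push_cast
          nlinarith
      _ = 2 * (q ^ 2 * (Real.exp Y / 2)) := by ring
      _ ≤ _ := by gcongr
  rw [sub_eq_add_neg (Y ^ 2), Real.exp_add, ← hq_def]
  refine abs_sum_sectorBall_sub_div_pi_mul_le (rieszVonMangoldt_nonneg _)
    (Nat.floor_pos.mpr (Real.one_le_exp (by linarith))) hC.le (Real.exp_nonneg _)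
    (Real.exp_pos _) (Real.exp_le_one_iff.mpr (by nlinarith)) hqM ?_ (fun n hn hnM => ?_) hα hαβ hβ
  · simpa [← hq_sq, angularChar_zero, poleOrder_zero, ← Complex.ofReal_sum,
      ← Complex.ofReal_ofNat, ← Complex.ofReal_mul, ← Complex.ofReal_sub] using
      hbound 0 (by simp [Real.exp_nonneg])
  · have h := hbound n ((abs_of_nonneg (Nat.cast_nonneg n)).trans_le
      ((Nat.cast_le.mpr hnM).trans (Nat.floor_le (Real.exp_nonneg Y))))
    rwa [poleOrder_of_ne_zero (by exact_mod_cast hn.ne'), Nat.cast_zero, zero_mul,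
      Complex.ofReal_zero, sub_zero, hq_sq] at h

end SmoothedSector

/-! ### The Chebyshev function `ψ` of a sector -/

section SectorPsi

variable {ι : Type*} {S : Finset ι} {w θ : ι → ℝ} {α β c k l x y ε : ℝ} {N : ℕ} {z : GaussianInt}

lemma abs_sum_filter_le_sub_le (hw : ∀ i ∈ S, 0 ≤ w i) (hk : 0 < k)
    (hx : |rampSum S w θ x - l * x ^ 2| ≤ ε) (hadd : |rampSum S w θ (x + k) - l * (x + k) ^ 2| ≤ ε)
    (hsub : |rampSum S w θ (x - k) - l * (x - k) ^ 2| ≤ ε) :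
    |∑ i ∈ S with θ i ≤ x, w i - 2 * l * x| ≤ l * k + 2 * (ε / k) := by
  have hε : ε / k * k = ε := div_mul_cancel₀ ε hk.ne'
  have hupper := mul_sum_filter_le_le_rampSum_sub (θ := θ) hw hk.le x
  have hlower := rampSum_sub_le_mul_sum_filter_lt (θ := θ) hw hk.le (x - k)
  have hlt : ∑ i ∈ S with θ i < x, w i ≤ ∑ i ∈ S with θ i ≤ x, w i :=
    Finset.sum_le_sum_of_subset_of_nonneg (Finset.monotone_filter_right _ fun _ _ => le_of_lt)
      fun i hi _ => hw i (Finset.mem_filter.mp hi).1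
  rw [sub_add_cancel] at hlower
  rw [abs_le] at hx hadd hsub ⊢
  constructor <;> refine le_of_mul_le_mul_right ?_ hk <;> nlinarith

/-- The error term `x exp (-c √(log x))` of de la Vallée Poussin. -/
noncomputable def errorTerm (c x : ℝ) : ℝ := x * Real.exp (-c * √(Real.log x))

/-- The Chebyshev function `ψ` of the sector `α ≤ arg z ≤ β`. -/
noncomputable def sectorPsi (α β x : ℝ) : ℝ := ∑ z ∈ sectorBall α β ⌊x⌋₊, vonMangoldt z

lemma mem_sectorBall_floor (hx : 0 ≤ x) :
    z ∈ sectorBall α β ⌊x⌋₊ ↔ z ≠ 0 ∧ (absNorm z : ℝ) ≤ x ∧ α ≤ arg2pi z ∧ arg2pi z ≤ β := by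
  rw [mem_sectorBall, mem_normBall, Nat.le_floor_iff hx, and_assoc]

lemma sectorPsi_eq_sum_filter (hx : 0 ≤ x) (hN : x ≤ N) :
    sectorPsi α β x = ∑ z ∈ sectorBall α β N with (absNorm z : ℝ) ≤ x, vonMangoldt z := by
  refine Finset.sum_congr ?_ fun _ _ => rfl
  ext z
  rw [mem_sectorBall_floor hx, Finset.mem_filter, ← Nat.floor_natCast (R := ℝ) N,
    mem_sectorBall_floor N.cast_nonneg]
  exact ⟨fun h => ⟨⟨h.1, h.2.1.trans hN, h.2.2⟩, h.2.1⟩, fun h => ⟨h.1.1, h.2, h.1.2.2⟩⟩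

lemma rampSum_vonMangoldt_absNorm (S : Finset GaussianInt) (hx : 0 < x) :
    rampSum S vonMangoldt (fun z => absNorm z) x = x * ∑ z ∈ S, rieszVonMangoldt x⁻¹ z := by
  rw [rampSum, Finset.mul_sum]
  refine Finset.sum_congr rfl fun z _ => ?_
  rw [rieszVonMangoldt, mul_left_comm, mul_max_of_nonneg _ _ hx.le, mul_zero, mul_one_sub,
    mul_left_comm, mul_inv_cancel₀ hx.ne', mul_one]

lemma exists_abs_rampSum_sectorBall_sub_le :
    ∃ c > 0, c ≤ 1 ∧ ∃ C > 0, ∀ x : ℝ, Real.exp 4 ≤ x → ∀ N : ℕ, x ≤ N → ∀ α β : ℝ,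
      0 ≤ α → α ≤ β → β ≤ 2 * Real.pi →
        |rampSum (sectorBall α β N) vonMangoldt (fun z => absNorm z) x -
          (β - α) / Real.pi * x ^ 2| ≤ C * (x * errorTerm c x) := by
  obtain ⟨c, hc, hc₁, C, hC, hbound⟩ := exists_abs_sum_sectorBall_rieszVonMangoldt_sub_le
  refine ⟨c, hc, hc₁, C, hC, fun x hx N hN α β hα hαβ hβ => ?_⟩
  have hx₀ : 0 < x := (Real.exp_pos _).trans_le hx
  have hlog : 4 ≤ Real.log x := (Real.le_log_iff_exp_le hx₀).mpr hx
  have hsqrt : √(Real.log x) ^ 2 = Real.log x := Real.sq_sqrt (by linarith)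
  have hbound := hbound √(Real.log x) (Real.le_sqrt_of_sq_le (by linarith)) N
    (by rwa [hsqrt, Real.exp_log hx₀]) α β hα hαβ hβ
  rw [hsqrt, sub_eq_add_neg (Real.log x), Real.exp_add, Real.exp_neg (Real.log x),
    Real.exp_log hx₀, ← neg_mul] at hbound
  rw [rampSum_vonMangoldt_absNorm _ hx₀, sq, mul_left_comm, ← mul_sub, abs_mul, abs_of_pos hx₀,
    mul_left_comm C]
  exact mul_le_mul_of_nonneg_left hbound hx₀.le

lemma sqrt_log_sub_one_le (hx : Real.exp 4 ≤ x) (hy : x / 2 ≤ y) :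
    √(Real.log x) - 1 ≤ √(Real.log y) := by
  have hx₀ : 0 < x := (Real.exp_pos _).trans_le hx
  have hlog : 4 ≤ Real.log x := (Real.le_log_iff_exp_le hx₀).mpr hx
  have hsqrt : 2 ≤ √(Real.log x) := Real.le_sqrt_of_sq_le (by linarith)
  have hlog_half := Real.log_le_log (half_pos hx₀) hy
  rw [Real.log_div hx₀.ne' two_ne_zero] at hlog_half
  apply Real.le_sqrt_of_sq_le
  nlinarith [Real.sq_sqrt (by linarith : 0 ≤ Real.log x), Real.log_two_lt_d9]

lemma mul_errorTerm_le (hc : 0 ≤ c) (hc₁ : c ≤ 1) (hx : Real.exp 4 ≤ x) (hy : x / 2 ≤ y)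
    (hy₂ : y ≤ 2 * x) : y * errorTerm c y ≤ 12 * (x * errorTerm c x) := by
  have hx₀ : 0 < x := (Real.exp_pos _).trans_le hx
  have hy₀ : 0 < y := (half_pos hx₀).trans_le hy
  have hexp : Real.exp (-c * √(Real.log y)) ≤ 3 * Real.exp (-c * √(Real.log x)) := calc
    _ ≤ Real.exp (1 + -c * √(Real.log x)) :=
      Real.exp_le_exp.mpr (by nlinarith [sqrt_log_sub_one_le hx hy])
    _ = Real.exp 1 * Real.exp (-c * √(Real.log x)) := Real.exp_add _ _
    _ ≤ _ := by
      gcongr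
      linarith [Real.exp_one_lt_d9]
  calc y * errorTerm c y ≤ 2 * x * (2 * x * (3 * Real.exp (-c * √(Real.log x)))) := by
        rw [errorTerm]
        gcongr
    _ = _ := by rw [errorTerm]; ring

theorem exists_abs_sectorPsi_sub_le :
    ∃ c > 0, c ≤ 1 / 2 ∧ ∃ C > 0, ∀ x : ℝ, 2 * Real.exp 4 ≤ x → ∀ α β : ℝ,
      0 ≤ α → α ≤ β → β ≤ 2 * Real.pi →
        |sectorPsi α β x - 2 * ((β - α) / Real.pi) * x| ≤ C * errorTerm c x := by
  obtain ⟨c, hc, hc₁, C, hC, hbound⟩ := exists_abs_rampSum_sectorBall_sub_le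
  refine ⟨c / 2, by positivity, by linarith, 1 + 48 * C, by positivity,
    fun x hx α β hα hαβ hβ => ?_⟩
  have hx₀ : 0 < x := by linarith [Real.exp_pos 4]
  set q := Real.exp (-(c / 2) * √(Real.log x)) with hq_def
  have hq : 0 < q := Real.exp_pos _
  have hq₁ : q ≤ 1 := Real.exp_le_one_iff.mpr (by nlinarith [Real.sqrt_nonneg (Real.log x)])
  have hq_sq : errorTerm c x = x * q ^ 2 := by
    rw [errorTerm, hq_def, ← Real.exp_nat_mul]
    ring_nf
  have hdensity : (β - α) / Real.pi ≤ 2 := (div_le_iff₀ Real.pi_pos).mpr (by linarith)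
  obtain ⟨N, hN⟩ := exists_nat_ge (2 * x)
  have hxq : x * q ≤ x := mul_le_of_le_one_right hx₀.le hq₁
  have hk : 0 < x * q / 2 := by positivity
  have hramp (y : ℝ) (hy : x / 2 ≤ y) (hy₂ : y ≤ 2 * x) :
      |rampSum (sectorBall α β N) vonMangoldt (fun z => absNorm z) y -
        (β - α) / Real.pi * y ^ 2| ≤ C * (12 * (x * errorTerm c x)) :=
    (hbound y (by linarith) N (hy₂.trans hN) α β hα hαβ hβ).trans
      (mul_le_mul_of_nonneg_left (mul_errorTerm_le hc.le hc₁ (by linarith) hy hy₂) hC.le)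
  rw [sectorPsi_eq_sum_filter hx₀.le (by linarith : x ≤ N)]
  calc _ ≤ (β - α) / Real.pi * (x * q / 2) +
        2 * (C * (12 * (x * errorTerm c x)) / (x * q / 2)) :=
        abs_sum_filter_le_sub_le (fun z _ => vonMangoldt_nonneg z) hk
          (hramp x (by linarith) (by linarith)) (hramp _ (by linarith) (by linarith))
          (hramp _ (by linarith) (by linarith))
    _ ≤ 2 * (x * q / 2) + 2 * (C * (12 * (x * (x * q ^ 2))) / (x * q / 2)) := by
        rw [hq_sq]
        gcongr
    _ = (1 + 48 * C) * errorTerm (c / 2) x := by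
        rw [errorTerm, ← hq_def]
        field_simp
        ring

end SectorPsi

/-! ### Prime powers and the sector theta function -/

section SectorTheta

variable {α β c c' x y : ℝ} {n : ℕ}

lemma vonMangoldt_of_prime {p : GaussianInt} (hp : Prime p) :
    vonMangoldt p = Real.log (absNorm p) :=
  vonMangoldt_eq_log hp one_pos (by rw [pow_one])

open scoped Classical in
lemma filter_not_prime_subset_biUnion (n : ℕ) :
    {z ∈ normBall n | vonMangoldt z ≠ 0 ∧ ¬Prime z} ⊆
      (normBall n.sqrt ×ˢ Finset.range (Nat.log 2 n + 1)).biUnion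
        fun a => associates (a.1 ^ a.2) := by
  intro z hz
  obtain ⟨⟨-, hzn⟩, hv, hz_prime⟩ := by simpa only [Finset.mem_filter, mem_normBall] using hz
  obtain ⟨p, j, hp, hj, h⟩ := (vonMangoldt_eq_zero_or_exists z).resolve_left hv
  have hj₂ : 2 ≤ j := by
    by_contra hj₁
    obtain rfl : j = 1 := by lia
    exact hz_prime (h.prime (by rwa [pow_one]))
  have hpn : absNorm p ^ j ≤ n := by rwa [← map_pow, absNorm_eq_of_associated h]
  have hp₂ := two_le_absNorm_of_prime hp
  simp only [Finset.mem_biUnion, Finset.mem_product, mem_normBall, Finset.mem_range, Prod.exists,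
    mem_associates]
  refine ⟨p, j, ⟨⟨hp.ne_zero, ?_⟩, ?_⟩, h⟩
  · exact Nat.le_sqrt'.mpr ((Nat.pow_le_pow_right (by lia) hj₂).trans hpn)
  · exact Nat.lt_succ_of_le
      (Nat.le_log_of_pow_le one_lt_two ((Nat.pow_le_pow_left hp₂ j).trans hpn))

open scoped Classical in
lemma card_filter_not_prime_le (n : ℕ) :
    ({z ∈ normBall n | vonMangoldt z ≠ 0 ∧ ¬Prime z}.card : ℝ) ≤
      32 * (n.sqrt * (Nat.log 2 n + 1)) := by
  have hcard := (Finset.card_le_card (filter_not_prime_subset_biUnion n)).trans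
    (Finset.card_biUnion_le_card_mul _ _ 4 fun a ha => (card_associates (pow_ne_zero _
      (mem_normBall.mp (Finset.mem_product.mp ha).1).1)).le)
  rw [Finset.card_product, Finset.card_range] at hcard
  calc _ ≤ ((normBall n.sqrt).card : ℝ) * (Nat.log 2 n + 1) * 4 := by exact_mod_cast hcard
    _ ≤ 8 * n.sqrt * (Nat.log 2 n + 1) * 4 := by
        gcongr
        exact card_normBall_le _
    _ = _ := by ring

lemma vonMangoldt_le_log_of_mem_normBall {z : GaussianInt} (hz : z ∈ normBall n) :
    vonMangoldt z ≤ Real.log n := by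
  obtain ⟨hz₀, hzn⟩ := mem_normBall.mp hz
  exact (vonMangoldt_le_log z).trans
    (Real.log_le_log (by exact_mod_cast absNorm_pos hz₀) (by exact_mod_cast hzn))

open scoped Classical in
lemma sum_vonMangoldt_filter_not_prime_le {s : Finset GaussianInt} (hs : s ⊆ normBall n) :
    ∑ z ∈ s with ¬Prime z, vonMangoldt z ≤
      32 * (n.sqrt * (Nat.log 2 n + 1)) * Real.log n := by
  calc ∑ z ∈ s with ¬Prime z, vonMangoldt z
      ≤ ∑ z ∈ normBall n with ¬Prime z, vonMangoldt z :=
        Finset.sum_le_sum_of_subset_of_nonneg (Finset.filter_subset_filter _ hs)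
          fun z _ _ => vonMangoldt_nonneg z
    _ = ∑ z ∈ normBall n with vonMangoldt z ≠ 0 ∧ ¬Prime z, vonMangoldt z := by
        simp only [and_comm, ← Finset.filter_filter, Finset.sum_filter_ne_zero]
    _ ≤ {z ∈ normBall n | vonMangoldt z ≠ 0 ∧ ¬Prime z}.card • Real.log n :=
        Finset.sum_le_card_nsmul _ _ _ fun z hz =>
          vonMangoldt_le_log_of_mem_normBall (Finset.mem_filter.mp hz).1
    _ ≤ _ := by
        rw [nsmul_eq_mul]
        exact mul_le_mul_of_nonneg_right (card_filter_not_prime_le n) (Real.log_natCast_nonneg n)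

lemma natLog_two_le_two_mul_log (hn : n ≠ 0) : (Nat.log 2 n : ℝ) ≤ 2 * Real.log n := by
  have hpow : ((2 ^ Nat.log 2 n : ℕ) : ℝ) ≤ n := by exact_mod_cast Nat.pow_log_le_self 2 hn
  have hlog := Real.log_le_log (by positivity) hpow
  rw [Nat.cast_pow, Real.log_pow, Nat.cast_ofNat] at hlog
  nlinarith [Real.log_two_gt_d9, Nat.cast_nonneg (α := ℝ) (Nat.log 2 n)]

lemma errorTerm_anti (hc : c' ≤ c) (hx : 0 ≤ x) : errorTerm c x ≤ errorTerm c' x := by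
  unfold errorTerm
  gcongr

lemma errorTerm_nonneg (hx : 0 ≤ x) : 0 ≤ errorTerm c x :=
  mul_nonneg hx (Real.exp_nonneg _)

lemma le_exp_mul_errorTerm (hc : 0 ≤ c) (hx : 0 < x) (hxy : x ≤ y) :
    x ≤ Real.exp (c * √(Real.log y)) * errorTerm c x := by
  have hexp : 1 ≤ Real.exp (c * √(Real.log y)) * Real.exp (-c * √(Real.log x)) := by
    rw [← Real.exp_add, Real.one_le_exp_iff]
    have : c * √(Real.log x) ≤ c * √(Real.log y) := by gcongr
    linarith
  rw [errorTerm, mul_left_comm]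
  exact le_mul_of_one_le_right hx.le hexp

lemma sqrt_mul_log_floor_le_errorTerm (hx : 1 ≤ x) :
    ((⌊x⌋₊.sqrt : ℝ) * (Nat.log 2 ⌊x⌋₊ + 1)) * Real.log ⌊x⌋₊ ≤ 210 * errorTerm 1 x := by
  have hx₀ : 0 < x := by linarith
  have hfloor : (⌊x⌋₊ : ℝ) ≤ x := Nat.floor_le hx₀.le
  have hfloor_pos : 0 < ⌊x⌋₊ := Nat.floor_pos.mpr hx
  set L := Real.log x
  have hL₀ : 0 ≤ L := Real.log_nonneg hx
  have hlog : Real.log ⌊x⌋₊ ≤ L := Real.log_le_log (by exact_mod_cast hfloor_pos) hfloor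
  have hlog_two := natLog_two_le_two_mul_log hfloor_pos.ne'
  have hsqrt : (⌊x⌋₊.sqrt : ℝ) ≤ Real.exp (L / 2) := by
    rw [Real.exp_half, Real.exp_log hx₀]
    exact Real.nat_sqrt_le_real_sqrt.trans (Real.sqrt_le_sqrt hfloor)
  have hquad := Real.quadratic_le_exp_of_nonneg (by positivity : 0 ≤ L / 4)
  have hsqrt_log : √L ≤ L / 4 + 1 := by nlinarith [Real.sq_sqrt hL₀, sq_nonneg (√L - 2)]
  calc ((⌊x⌋₊.sqrt : ℝ) * (Nat.log 2 ⌊x⌋₊ + 1)) * Real.log ⌊x⌋₊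
      ≤ Real.exp (L / 2) * (2 * L + 1) * L := by
        gcongr
        exact hlog_two.trans (by gcongr)
    _ = Real.exp (L / 2) * (2 * L ^ 2 + L) := by ring
    _ ≤ Real.exp (L / 2) * (70 * Real.exp (L / 4)) := by
        gcongr
        nlinarith
    _ = 70 * Real.exp (L / 2 + L / 4) := by rw [Real.exp_add]; ring
    _ ≤ 70 * Real.exp (1 + (L + -1 * √L)) := by
        have : Real.exp (L / 2 + L / 4) ≤ Real.exp (1 + (L + -1 * √L)) :=
          Real.exp_le_exp.mpr (by linarith)
        gcongr
    _ = 70 * Real.exp 1 * errorTerm 1 x := by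
        rw [Real.exp_add, Real.exp_add, Real.exp_log hx₀, errorTerm, mul_assoc]
    _ ≤ _ := by
        gcongr
        · exact errorTerm_nonneg hx₀.le
        · linarith [Real.exp_one_lt_d9]

open scoped Classical in
/-- The Chebyshev function `θ` of the sector `α ≤ arg z ≤ β`: the sum of `log |π|²` over the
Gaussian primes `π` of norm at most `x` in the sector, associates being counted separately. -/
noncomputable def sectorTheta (α β x : ℝ) : ℝ :=
  ∑ z ∈ sectorBall α β ⌊x⌋₊ with Prime z, Real.log (absNorm z)

lemma sectorTheta_nonneg (α β x : ℝ) : 0 ≤ sectorTheta α β x :=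
  Finset.sum_nonneg fun _ _ => Real.log_natCast_nonneg _

open scoped Classical in
lemma sectorPsi_eq_sectorTheta_add (α β x : ℝ) : sectorPsi α β x =
    sectorTheta α β x + ∑ z ∈ sectorBall α β ⌊x⌋₊ with ¬Prime z, vonMangoldt z := by
  rw [sectorPsi, sectorTheta, ← Finset.sum_filter_add_sum_filter_not _ fun z => Prime z]
  congr 1
  exact Finset.sum_congr rfl fun z hz => vonMangoldt_of_prime (Finset.mem_filter.mp hz).2

lemma sectorBall_subset_normBall : sectorBall α β n ⊆ normBall n :=
  fun _ hz => (mem_sectorBall.mp hz).1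

lemma sectorTheta_le_sectorPsi (α β x : ℝ) : sectorTheta α β x ≤ sectorPsi α β x := by
  rw [sectorPsi_eq_sectorTheta_add]
  exact le_add_of_nonneg_right (Finset.sum_nonneg fun z _ => vonMangoldt_nonneg z)

lemma sectorPsi_sub_sectorTheta_le (hx : 1 ≤ x) :
    sectorPsi α β x - sectorTheta α β x ≤ 6720 * errorTerm 1 x := by
  rw [sectorPsi_eq_sectorTheta_add, add_sub_cancel_left]
  have := sum_vonMangoldt_filter_not_prime_le (sectorBall_subset_normBall (α := α) (β := β)
    (n := ⌊x⌋₊))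
  linarith [sqrt_mul_log_floor_le_errorTerm hx]

lemma sectorPsi_le_mul_log (hx : 1 ≤ x) : sectorPsi α β x ≤ 8 * x * Real.log x := by
  have hfloor : (⌊x⌋₊ : ℝ) ≤ x := Nat.floor_le (by linarith)
  have hfloor_pos : 0 < ⌊x⌋₊ := Nat.floor_pos.mpr hx
  calc sectorPsi α β x ≤ (sectorBall α β ⌊x⌋₊).card • Real.log ⌊x⌋₊ :=
        Finset.sum_le_card_nsmul _ _ _ fun z hz =>
          vonMangoldt_le_log_of_mem_normBall (sectorBall_subset_normBall hz)
    _ ≤ 8 * ⌊x⌋₊ * Real.log ⌊x⌋₊ := by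
        rw [nsmul_eq_mul]
        gcongr
        exact (Nat.cast_le.mpr (Finset.card_le_card sectorBall_subset_normBall)).trans
          (card_normBall_le _)
    _ ≤ 8 * x * Real.log x := by gcongr

lemma exists_abs_sectorTheta_sub_le :
    ∃ c > 0, c ≤ 1 / 2 ∧ ∃ C > 0, ∀ x : ℝ, 2 ≤ x → ∀ α β : ℝ,
      0 ≤ α → α ≤ β → β ≤ 2 * Real.pi →
        |sectorTheta α β x - 2 * ((β - α) / Real.pi) * x| ≤ C * errorTerm c x := by
  obtain ⟨c, hc, hc₁, C, hC, hpsi⟩ := exists_abs_sectorPsi_sub_le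
  set X := 2 * Real.exp 4
  have hX : 1 ≤ X := by linarith [Real.add_one_le_exp 4]
  have hlogX : 0 ≤ Real.log X := Real.log_nonneg hX
  refine ⟨c, hc, hc₁, C + 6720 + (8 * Real.log X + 4) * Real.exp (c * √(Real.log X)),
    by positivity, fun x hx α β hα hαβ hβ => ?_⟩
  have hx₀ : 0 < x := by linarith
  have hE : 0 ≤ errorTerm c x := errorTerm_nonneg hx₀.le
  have hθ := sectorTheta_le_sectorPsi α β x
  rcases le_or_gt X x with hXx | hxX
  · have hpsi := hpsi x hXx α β hα hαβ hβ
    have hpow := sectorPsi_sub_sectorTheta_le (α := α) (β := β) (by linarith : 1 ≤ x)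
    have hanti := errorTerm_anti (by linarith : c ≤ 1) hx₀.le
    have : 0 ≤ (8 * Real.log X + 4) * Real.exp (c * √(Real.log X)) * errorTerm c x := by
      positivity
    rw [abs_le] at hpsi ⊢
    constructor <;> linarith
  · have : 0 ≤ (β - α) / Real.pi := div_nonneg (by linarith) Real.pi_pos.le
    have hdensity₂ : (β - α) / Real.pi ≤ 2 := (div_le_iff₀ Real.pi_pos).mpr (by linarith)
    have htrivial : |sectorTheta α β x - 2 * ((β - α) / Real.pi) * x| ≤
        (8 * Real.log X + 4) * x := by
      have hlog : 8 * x * Real.log x ≤ 8 * x * Real.log X := by gcongr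
      have hmain : (β - α) / Real.pi * x ≤ 2 * x := by gcongr
      have : 0 ≤ (β - α) / Real.pi * x := by positivity
      have : 0 ≤ x * Real.log X := by positivity
      rw [abs_le]
      constructor <;> linarith [sectorTheta_nonneg α β x,
        sectorPsi_le_mul_log (α := α) (β := β) (by linarith : 1 ≤ x)]
    have hsmall := mul_le_mul_of_nonneg_left (le_exp_mul_errorTerm hc.le hx₀ hxX.le)
      (by positivity : 0 ≤ 8 * Real.log X + 4)
    have : 0 ≤ (C + 6720) * errorTerm c x := by positivity
    linarith

end SectorTheta

/-! ### Partial summation -/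

section PartialSummation

variable {a : ℕ → ℝ} {c C l u v : ℝ}

lemma half_le_log (hv : 2 ≤ v) : 1 / 2 ≤ Real.log v := by
  linarith [Real.log_le_log two_pos hv, Real.log_two_gt_d9]

lemma half_le_sqrt_log (hv : 2 ≤ v) : 1 / 2 ≤ √(Real.log v) :=
  Real.le_sqrt_of_sq_le (by linarith [half_le_log hv])

lemma continuousOn_inv_div_log_sq :
    ContinuousOn (fun t => t⁻¹ / Real.log t ^ 2) (Set.Icc 2 u) := by
  intro t ht
  have : t ≠ 0 := by linarith [ht.1]
  have : Real.log t ^ 2 ≠ 0 := pow_ne_zero 2 (by linarith [half_le_log ht.1])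
  exact ContinuousAt.continuousWithinAt (by fun_prop)

lemma sum_inv_log_mul_eq (ha₀ : a 0 = 0) (ha₁ : a 1 = 0) (hu : 2 ≤ u) :
    ∑ n ∈ Finset.Icc 0 ⌊u⌋₊, (Real.log n)⁻¹ * a n =
      (∑ n ∈ Finset.Icc 0 ⌊u⌋₊, a n) / Real.log u +
        ∫ t in (2 : ℝ)..u, t⁻¹ / Real.log t ^ 2 * ∑ n ∈ Finset.Icc 0 ⌊t⌋₊, a n := by
  rw [sum_mul_eq_sub_integral_mul₁ a (f := fun n => (Real.log n)⁻¹) ha₀ ha₁,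
    ← intervalIntegral.integral_of_le hu]
  · simp only [Real.deriv_inv_log_apply, neg_div, neg_mul, intervalIntegral.integral_neg]
    ring
  · intro t ht
    have := half_le_log ht.1
    exact Real.differentiableAt_inv_log (by linarith [ht.1]) (by linarith [ht.1])
      (by linarith [ht.1])
  · rw [Real.deriv_inv_log]
    simp only [neg_div]
    exact continuousOn_inv_div_log_sq.neg.integrableOn_Icc

lemma intervalIntegrable_inv_div_log_sq_mul_sum (a : ℕ → ℝ) (hu : 2 ≤ u) :
    IntervalIntegrable (fun t => t⁻¹ / Real.log t ^ 2 * ∑ n ∈ Finset.Icc 0 ⌊t⌋₊, a n)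
      MeasureTheory.volume 2 u := by
  rw [intervalIntegrable_iff_integrableOn_Icc_of_le hu]
  exact integrableOn_mul_sum_Icc _ zero_le_two continuousOn_inv_div_log_sq.integrableOn_Icc

lemma integral_one_div_log_eq (hu : 2 ≤ u) :
    ∫ v in (2 : ℝ)..u, 1 / Real.log v =
      u / Real.log u - 2 / Real.log 2 + ∫ v in (2 : ℝ)..u, 1 / Real.log v ^ 2 := by
  have two_le {v : ℝ} (hv : v ∈ Set.uIcc 2 u) : 2 ≤ v := (Set.uIcc_of_le hu ▸ hv).1
  have log_ne {v : ℝ} (hv : v ∈ Set.uIcc 2 u) : Real.log v ≠ 0 := by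
    linarith [half_le_log (two_le hv)]
  have hint : IntervalIntegrable (fun v => 1 / Real.log v) MeasureTheory.volume 2 u :=
    ContinuousOn.intervalIntegrable fun v hv => by
      have := log_ne hv
      have : v ≠ 0 := by linarith [two_le hv]
      exact ContinuousAt.continuousWithinAt (by fun_prop)
  have hint_sq := Chebyshev.intervalIntegrable_one_div_log_sq one_lt_two (by linarith : 1 < u)
  have hderiv (v : ℝ) (hv : v ∈ Set.uIcc 2 u) : HasDerivAt (fun v => v / Real.log v)
      (1 / Real.log v - 1 / Real.log v ^ 2) v := by
    have := log_ne hv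
    have hv₀ : v ≠ 0 := by linarith [two_le hv]
    refine ((hasDerivAt_id' v).div (Real.hasDerivAt_log hv₀) this).congr_deriv ?_
    field_simp
  have hFTC := intervalIntegral.integral_eq_sub_of_hasDerivAt hderiv (hint.sub hint_sq)
  rw [intervalIntegral.integral_sub hint hint_sq] at hFTC
  linarith

lemma one_le_errorTerm (hu : 1 ≤ u) (hc : c ≤ √(Real.log u)) : 1 ≤ errorTerm c u := by
  have hlog : √(Real.log u) ^ 2 = Real.log u := Real.sq_sqrt (Real.log_nonneg hu)
  rw [errorTerm, ← Real.exp_log (by linarith : 0 < u), ← Real.exp_add, Real.one_le_exp_iff,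
    Real.exp_log (by linarith)]
  nlinarith [Real.sqrt_nonneg (Real.log u)]

lemma errorTerm_div_sqrt_mono (hv : 1 ≤ v) (hc : c ≤ √(Real.log v)) (hvu : v ≤ u) :
    errorTerm c v / √v ≤ errorTerm c u / √u := by
  have errorTerm_div_sqrt {w : ℝ} (hw : 1 ≤ w) :
      errorTerm c w / √w = Real.exp (√(Real.log w) ^ 2 / 2 - c * √(Real.log w)) := by
    rw [errorTerm, mul_div_right_comm, Real.div_sqrt, Real.sq_sqrt (Real.log_nonneg hw),
      sub_eq_add_neg, Real.exp_add, Real.exp_half, Real.exp_log (by linarith), neg_mul]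
  have hmono : √(Real.log v) ≤ √(Real.log u) :=
    Real.sqrt_le_sqrt (Real.log_le_log (by linarith) hvu)
  rw [errorTerm_div_sqrt hv, errorTerm_div_sqrt (hv.trans hvu), Real.exp_le_exp]
  nlinarith

lemma intervalIntegrable_one_div_sqrt (hv : 0 < v) (hu : 0 < u) :
    IntervalIntegrable (fun t => 1 / √t) MeasureTheory.volume v u :=
  ContinuousOn.intervalIntegrable fun t ht => by
    have : √t ≠ 0 := (Real.sqrt_pos.mpr ((lt_min hv hu).trans_le ht.1)).ne'
    exact ContinuousAt.continuousWithinAt (by fun_prop)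

lemma integral_one_div_sqrt (hv : 0 < v) (hu : 0 < u) :
    ∫ t in v..u, 1 / √t = 2 * √u - 2 * √v :=
  intervalIntegral.integral_eq_sub_of_hasDerivAt (fun t ht => by
    have ht₀ : 0 < t := (lt_min hv hu).trans_le ht.1
    refine ((Real.hasDerivAt_sqrt ht₀.ne').const_mul 2).congr_deriv ?_
    field_simp) (intervalIntegrable_one_div_sqrt hv hu)

lemma norm_inv_div_log_sq_mul_sub_le {S : ℝ → ℝ} {t : ℝ} (hc : c ≤ 1 / 2) (hC : 0 ≤ C)
    (ht : 2 ≤ t) (htu : t ≤ u) (hS : |S t - l * t| ≤ C * errorTerm c t) :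
    ‖t⁻¹ / Real.log t ^ 2 * S t - l * (1 / Real.log t ^ 2)‖ ≤
      4 * C * (errorTerm c u / √u) * (1 / √t) := by
  have ht₀ : 0 < t := by linarith
  have hlog := half_le_log ht
  have hinv : 1 / Real.log t ^ 2 ≤ 4 := by
    rw [div_le_iff₀ (by positivity)]
    nlinarith
  have hfactor : t⁻¹ / Real.log t ^ 2 * S t - l * (1 / Real.log t ^ 2) =
      1 / Real.log t ^ 2 * (t⁻¹ * (S t - l * t)) := by
    field_simp
  have hmono := errorTerm_div_sqrt_mono (by linarith) (hc.trans (half_le_sqrt_log ht)) htu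
  calc _ = 1 / Real.log t ^ 2 * (t⁻¹ * |S t - l * t|) := by
        rw [hfactor, Real.norm_eq_abs, abs_mul, abs_mul, abs_of_nonneg (by positivity),
          abs_of_nonneg (by positivity : 0 ≤ t⁻¹)]
    _ ≤ 4 * (t⁻¹ * (C * errorTerm c t)) := by gcongr
    _ = 4 * C * (errorTerm c t / √t) * (1 / √t) := by
        rw [mul_assoc _ _ (1 / √t), div_mul_div_comm, Real.mul_self_sqrt ht₀.le]
        ring
    _ ≤ _ := by gcongr

lemma abs_integral_sub_mul_integral_le {S : ℝ → ℝ} (hc : c ≤ 1 / 2) (hC : 0 ≤ C) (hu : 2 ≤ u)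
    (hint : IntervalIntegrable (fun t => t⁻¹ / Real.log t ^ 2 * S t) MeasureTheory.volume 2 u)
    (hS : ∀ v, 2 ≤ v → |S v - l * v| ≤ C * errorTerm c v) :
    |(∫ t in (2 : ℝ)..u, t⁻¹ / Real.log t ^ 2 * S t) - l * ∫ v in (2 : ℝ)..u, 1 / Real.log v ^ 2| ≤
      8 * C * errorTerm c u := by
  have hint_sq := Chebyshev.intervalIntegrable_one_div_log_sq one_lt_two (by linarith : 1 < u)
  rw [← intervalIntegral.integral_const_mul,
    ← intervalIntegral.integral_sub hint (hint_sq.const_mul l), ← Real.norm_eq_abs]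
  calc _ ≤ ∫ t in (2 : ℝ)..u, 4 * C * (errorTerm c u / √u) * (1 / √t) :=
        intervalIntegral.norm_integral_le_of_norm_le hu (.of_forall fun t ht =>
          norm_inv_div_log_sq_mul_sub_le hc hC ht.1.le ht.2 (hS t ht.1.le))
          ((intervalIntegrable_one_div_sqrt two_pos (by linarith)).const_mul _)
    _ ≤ 4 * C * (errorTerm c u / √u) * (2 * √u) := by
        have := errorTerm_nonneg (c := c) (by linarith : 0 ≤ u)
        rw [intervalIntegral.integral_const_mul, integral_one_div_sqrt two_pos (by linarith)]
        gcongr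
        exact sub_le_self _ (by positivity)
    _ = _ := by
        have : √u ≠ 0 := (Real.sqrt_pos.mpr (by linarith)).ne'
        field_simp
        ring

lemma abs_sum_inv_log_mul_sub_le (ha₀ : a 0 = 0) (ha₁ : a 1 = 0) (hc : c ≤ 1 / 2) (hC : 0 ≤ C)
    (ha : ∀ v, 2 ≤ v → |∑ n ∈ Finset.Icc 0 ⌊v⌋₊, a n - l * v| ≤ C * errorTerm c v) (hu : 2 ≤ u) :
    |∑ n ∈ Finset.Icc 0 ⌊u⌋₊, (Real.log n)⁻¹ * a n - l * ∫ v in (2 : ℝ)..u, 1 / Real.log v| ≤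
      (10 * C + 4 * |l|) * errorTerm c u := by
  have hintegral := abs_integral_sub_mul_integral_le hc hC hu
    (intervalIntegrable_inv_div_log_sq_mul_sum a hu) ha
  rw [sum_inv_log_mul_eq ha₀ ha₁ hu, integral_one_div_log_eq hu]
  set A := ∑ n ∈ Finset.Icc 0 ⌊u⌋₊, a n
  set I₁ := ∫ t in (2 : ℝ)..u, t⁻¹ / Real.log t ^ 2 * ∑ n ∈ Finset.Icc 0 ⌊t⌋₊, a n
  set I₂ := ∫ v in (2 : ℝ)..u, 1 / Real.log v ^ 2
  have hlog := half_le_log hu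
  have hE := one_le_errorTerm (by linarith) (hc.trans (half_le_sqrt_log hu))
  have hboundary : |(A - l * u) / Real.log u| ≤ 2 * (C * errorTerm c u) := by
    rw [abs_div, abs_of_pos (by linarith : 0 < Real.log u), div_le_iff₀ (by linarith)]
    nlinarith [ha u hu, abs_nonneg (A - l * u)]
  have hconst : |l * (2 / Real.log 2)| ≤ 4 * |l| * errorTerm c u := by
    have hlog_two := half_le_log le_rfl
    have htwo : |2 / Real.log 2| ≤ 4 := by
      rw [abs_of_pos (by positivity), div_le_iff₀ (by linarith)]
      linarith
    rw [abs_mul]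
    nlinarith [mul_le_mul_of_nonneg_left htwo (abs_nonneg l), abs_nonneg l]
  calc _ = |(A - l * u) / Real.log u + (I₁ - l * I₂) + l * (2 / Real.log 2)| := by
        congr 1
        ring
    _ ≤ 2 * (C * errorTerm c u) + 8 * C * errorTerm c u + 4 * |l| * errorTerm c u := by
        refine (abs_add_le _ _).trans (add_le_add ((abs_add_le _ _).trans ?_) hconst)
        exact add_le_add hboundary hintegral
    _ = _ := by ring

end PartialSummation

/-! ### Counting primes in a sector -/

section SectorPrimeCount

variable {α β x : ℝ}

open scoped Classical in
/-- The number of Gaussian primes of norm at most `x` in the sector `α ≤ arg z ≤ β`, associates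
being counted separately. -/
noncomputable def sectorPrimeCount (α β x : ℝ) : ℕ :=
  {z ∈ sectorBall α β ⌊x⌋₊ | Prime z}.card

lemma sectorPrimeCount_eq_ncard (hx : 0 ≤ x) : sectorPrimeCount α β x =
    {z : GaussianInt | Prime z ∧ (z.norm : ℝ) ≤ x ∧ α ≤ arg2pi z ∧ arg2pi z ≤ β}.ncard := by
  classical
  rw [sectorPrimeCount, ← Set.ncard_coe_finset]
  congr 1
  ext z
  rw [Finset.mem_coe, Finset.mem_filter, mem_sectorBall_floor hx, Set.mem_ofPred_eq,
    ← intCast_absNorm, Int.cast_natCast]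
  exact ⟨fun h => ⟨h.2, h.1.2⟩, fun h => ⟨⟨h.1.ne_zero, h.2⟩, h.1⟩⟩

open scoped Classical in
/-- The contribution of the elements of norm `n` to `sectorTheta α β`. -/
noncomputable def sectorThetaCoeff (α β : ℝ) (n : ℕ) : ℝ :=
  ∑ z ∈ normSphere n with (α ≤ arg2pi z.toComplex ∧ arg2pi z.toComplex ≤ β) ∧ Prime z,
    Real.log (absNorm z)

lemma sectorThetaCoeff_zero : sectorThetaCoeff α β 0 = 0 := by
  simp [sectorThetaCoeff, normSphere_zero]

lemma sectorThetaCoeff_one : sectorThetaCoeff α β 1 = 0 := by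
  classical
  refine Finset.sum_eq_zero fun z hz => ?_
  rw [(mem_normSphere.mp (Finset.mem_filter.mp hz).1).2, Nat.cast_one, Real.log_one]

lemma sum_Icc_sectorThetaCoeff (α β x : ℝ) :
    ∑ n ∈ Finset.Icc 0 ⌊x⌋₊, sectorThetaCoeff α β n = sectorTheta α β x := by
  classical
  simp only [sectorThetaCoeff, Finset.sum_filter, sum_Icc_sum_normSphere]
  rw [sectorTheta, sectorBall, Finset.filter_filter, Finset.sum_filter]

lemma sum_Icc_inv_log_mul_sectorThetaCoeff (α β x : ℝ) :
    ∑ n ∈ Finset.Icc 0 ⌊x⌋₊, (Real.log n)⁻¹ * sectorThetaCoeff α β n =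
      sectorPrimeCount α β x := by
  classical
  have hterm (n : ℕ) : (Real.log n)⁻¹ * sectorThetaCoeff α β n =
      ∑ z ∈ normSphere n,
        if (α ≤ arg2pi z.toComplex ∧ arg2pi z.toComplex ≤ β) ∧ Prime z then 1 else 0 := by
    rw [sectorThetaCoeff, Finset.mul_sum, ← Finset.sum_filter]
    refine Finset.sum_congr rfl fun z hz => ?_
    obtain ⟨hzn, -, hz_prime⟩ := Finset.mem_filter.mp hz
    rw [← (mem_normSphere.mp hzn).2]
    exact inv_mul_cancel₀ (Real.log_pos (by exact_mod_cast two_le_absNorm_of_prime hz_prime)).ne'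
  simp only [hterm, sum_Icc_sum_normSphere]
  rw [sectorPrimeCount, sectorBall, Finset.filter_filter, Finset.card_filter, Nat.cast_sum]
  simp only [Nat.cast_ite, Nat.cast_one, Nat.cast_zero]

theorem exists_abs_sectorPrimeCount_sub_le :
    ∃ c > 0, ∃ C > 0, ∀ u : ℝ, 2 ≤ u → ∀ α β : ℝ, 0 ≤ α → α ≤ β → β ≤ 2 * Real.pi →
      |sectorPrimeCount α β u - 2 * ((β - α) / Real.pi) * ∫ v in (2 : ℝ)..u, 1 / Real.log v| ≤
        C * errorTerm c u := by
  obtain ⟨c, hc, hc₁, C, hC, htheta⟩ := exists_abs_sectorTheta_sub_le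
  refine ⟨c, hc, 10 * C + 16, by positivity, fun u hu α β hα hαβ hβ => ?_⟩
  have hdensity : |2 * ((β - α) / Real.pi)| ≤ 4 := by
    have : (β - α) / Real.pi ≤ 2 := (div_le_iff₀ Real.pi_pos).mpr (by linarith)
    rw [abs_of_nonneg (mul_nonneg zero_le_two (div_nonneg (by linarith) Real.pi_pos.le))]
    linarith
  have hsum := abs_sum_inv_log_mul_sub_le sectorThetaCoeff_zero sectorThetaCoeff_one hc₁ hC.le
    (fun v hv => by simpa only [sum_Icc_sectorThetaCoeff] using htheta v hv α β hα hαβ hβ) hu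
  rw [sum_Icc_inv_log_mul_sectorThetaCoeff] at hsum
  have hE := errorTerm_nonneg (c := c) (by linarith : 0 ≤ u)
  exact hsum.trans (mul_le_mul_of_nonneg_right (by linarith) hE)

end SectorPrimeCount

end Kubilyus

/-- Kubilyus' theorem: the number of Gaussian primes `ω` with `|ω|² ≤ u` and
`α ≤ arg ω ≤ β` equals `(2/π)(β - α) ∫₂ᵘ dv / log v` up to an error
`O(u exp(-b √(log u)))`. -/
theorem kubilyus_gaussian_primes_in_sectors :
    ∃ b > (0 : ℝ), ∃ C > (0 : ℝ), ∀ u : ℝ, 2 ≤ u → ∀ α β : ℝ,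
      0 ≤ α → α ≤ β → β ≤ 2 * Real.pi →
      |({ω : GaussianInt | Prime ω ∧ (Zsqrtd.norm ω : ℝ) ≤ u ∧
            α ≤ arg2pi (GaussianInt.toComplex ω) ∧
            arg2pi (GaussianInt.toComplex ω) ≤ β}.ncard : ℝ)
          - (2 / Real.pi) * (β - α) * ∫ v in (2 : ℝ)..u, 1 / Real.log v|
        ≤ C * u * Real.exp (-b * Real.sqrt (Real.log u)) := by
  obtain ⟨b, hb, C, hC, hcount⟩ := Kubilyus.exists_abs_sectorPrimeCount_sub_le
  refine ⟨b, hb, C, hC, fun u hu α β hα hαβ hβ => ?_⟩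
  rw [← Kubilyus.sectorPrimeCount_eq_ncard (by linarith), div_mul_eq_mul_div, ← mul_div_assoc',
    mul_assoc C]
  exact hcount u hu α β hα hαβ hβ
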